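/- arXiv:1207.0232 — 2 statements merged into one kernel-verified Lean document; each statement's English description precedes it below -/
import Mathlib

section
/- M(x) = e^{(γ-1)/√e} · x^{1/√e} · (1 + O(1/log x)) as x → ∞, where γ is the Euler–Mascheroni constant; that is, there exists C > 0 such that for all sufficiently large x, |M(x)/(e^{(γ-1)/√e} x^{1/√e}) - 1| ≤ C/log x. -/
open Filter Real MeasureTheory
open scoped Classical

/-- The largest prime factor of `n`, with the convention `P 1 = 1`. -/
noncomputable def largestPrimeFactor (n : ℕ) : ℕ :=
  if n ≤ 1 then 1 else n.primeFactors.sup id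

/-- `medianLPF x` is the median largest prime factor of the integers in `[1, x]`:
the `⌈N/2⌉`-th smallest element of the multiset `{P(n) : 1 ≤ n ≤ N}` where `N = ⌊x⌋`. -/
noncomputable def medianLPF (x : ℝ) : ℕ :=
  (((Finset.Icc 1 ⌊x⌋₊).val.map largestPrimeFactor).sort (· ≤ ·)).getD
    ((⌊x⌋₊ + 1) / 2 - 1) 0

/-- `lif x = ∫₂^x {x/t}/log t dt`. -/
noncomputable def lif (x : ℝ) : ℝ := ∫ t in (2:ℝ)..x, Int.fract (x / t) / Real.log t



theorem cpow_diff_bound (s : ℂ) (hσ : 0 < s.re) (x u : ℝ) (hx : 1 ≤ x) (hxu : x ≤ u) (hu : u ≤ x + 1) :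
    ‖(u:ℂ)^(-s) - (x:ℂ)^(-s)‖ ≤ ‖s‖ * x ^ (-s.re - 1) := by
  have hd : ∀ v ∈ Set.Icc x (x+1), HasDerivWithinAt (fun v : ℝ => (v:ℂ)^(-s))
      (-s * (v:ℂ)^(-s-1)) (Set.Icc x (x+1)) v := by
    intro v hv
    have hv0 : v ≠ 0 := by have := hv.1; intro h; linarith
    have := hasDerivAt_ofReal_cpow_const' (x := v) (r := -s - 1) hv0 (by
      intro h
      have := congrArg Complex.re h
      simp at this
      linarith)
    have h2 := (this.const_mul (-s)).hasDerivWithinAt (s := Set.Icc x (x+1))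
    have hs : -s ≠ 0 := by
      intro h
      have := congrArg Complex.re h
      simp at this
      linarith
    refine h2.congr_of_mem ?_ hv
    intro w hw
    have : -s - 1 + 1 = -s := by ring
    have hs' : s ≠ 0 := by simpa using hs
    rw [this]; field_simp
  have := norm_image_sub_le_of_norm_deriv_le_segment' (C := ‖s‖ * x ^ (-s.re - 1)) hd (by
    intro v hv
    rw [norm_mul, norm_neg, Complex.norm_cpow_eq_rpow_re_of_pos (by linarith [hv.1])]
    simp only [Complex.sub_re, Complex.neg_re, Complex.one_re]
    gcongr ?_ * ?_
    exact Real.rpow_le_rpow_of_nonpos (by linarith) hv.1 (by linarith)) u ⟨hxu, hu⟩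
  refine this.trans ?_
  have h1 : u - x ≤ 1 := by linarith
  have h2 : 0 ≤ ‖s‖ * x ^ (-s.re - 1) := by positivity
  nlinarith

theorem cpow_diff_bound2 (s : ℂ) (hσ : 0 < s.re) (x u δ : ℝ) (hx : 1 ≤ x) (hxu : x ≤ u) (hu : u ≤ x + 1)
    (h0 : 0 ≤ δ) (h1 : δ ≤ 1) :
    ‖(u:ℂ)^(-s) - (x:ℂ)^(-s)‖ ≤ 2 * ‖s‖ ^ δ * x ^ (-s.re - δ) := by
  have hA := cpow_diff_bound s hσ x u hx hxu hu
  have hx0 : 0 < x := by linarith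
  have hB : ‖(u:ℂ)^(-s) - (x:ℂ)^(-s)‖ ≤ 2 * x ^ (-s.re) := by
    refine (norm_sub_le _ _).trans ?_
    rw [Complex.norm_cpow_eq_rpow_re_of_pos (by linarith), Complex.norm_cpow_eq_rpow_re_of_pos (by linarith)]
    simp only [Complex.neg_re]
    have := Real.rpow_le_rpow_of_nonpos hx0 hxu (z := -s.re) (by linarith)
    linarith
  set D := ‖(u:ℂ)^(-s) - (x:ℂ)^(-s)‖ with hD
  have hD0 : 0 ≤ D := norm_nonneg _
  have : D = D ^ δ * D ^ (1 - δ) := by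
    rw [← Real.rpow_add_of_nonneg hD0 h0 (by linarith)]; simp
  rw [this]
  calc D ^ δ * D ^ (1 - δ) ≤ (‖s‖ * x ^ (-s.re - 1)) ^ δ * (2 * x ^ (-s.re)) ^ (1 - δ) := by
        have : 0 ≤ 1 - δ := by linarith
        gcongr
    _ = 2 ^ (1 - δ) * ‖s‖ ^ δ * x ^ (-s.re - δ) := by
        rw [Real.mul_rpow (by positivity) (by positivity), Real.mul_rpow (by positivity) (by positivity),
          ← Real.rpow_mul hx0.le, ← Real.rpow_mul hx0.le]
        have : x ^ (-s.re - δ) = x ^ ((-s.re - 1) * δ) * x ^ (-s.re * (1 - δ)) := by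
          rw [← Real.rpow_add hx0]; congr 1; ring
        rw [this]; ring
    _ ≤ _ := by
        gcongr
        calc (2:ℝ) ^ (1 - δ) ≤ 2 ^ (1:ℝ) := Real.rpow_le_rpow_of_exponent_le (by norm_num) (by linarith)
          _ = 2 := by simp

/-- the terms of the continued zeta series -/
noncomputable def zterm (n : ℕ) (s : ℂ) : ℂ :=
  (s - 1) * ((n:ℂ) + 1) ^ (-s) - ((n:ℂ) + 1) ^ (1 - s) + ((n:ℂ) + 2) ^ (1 - s)

theorem zterm_bound (n : ℕ) (s : ℂ) (hσ : 0 < s.re) (δ : ℝ) (h0 : 0 ≤ δ) (h1 : δ ≤ 1) :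
    ‖zterm n s‖ ≤ ‖s - 1‖ * (2 * ‖s‖ ^ δ * ((n:ℝ) + 1) ^ (-s.re - δ)) := by
  by_cases hs1 : s = 1
  · simp [zterm, hs1]
  set x : ℝ := (n:ℝ) + 1 with hx
  have hx1 : 1 ≤ x := by simp [hx]
  have hd : ∀ v ∈ Set.Icc x (x+1), HasDerivWithinAt
      (fun v : ℝ => (s - 1) * (x:ℂ)^(-s) * (v : ℂ) + (v:ℂ)^(1 - s))
      (- (s - 1) * ((v:ℂ)^(-s) - (x:ℂ)^(-s))) (Set.Icc x (x+1)) v := by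
    intro v hv
    have hv0 : v ≠ 0 := by have := hv.1; intro h; linarith
    have hs : 1 - s ≠ 0 := by
      intro h; apply hs1; linear_combination -h
    have h1 := (hasDerivAt_ofReal_cpow_const' (x := v) (r := -s) hv0 (by
      intro h; apply hs1; linear_combination -h)).const_mul (1 - s)
    have h2 := ((hasDerivAt_id v).ofReal_comp.const_mul ((s - 1) * (x:ℂ)^(-s)))
    have h3 := (h2.add h1).hasDerivWithinAt (s := Set.Icc x (x+1))
    have e : - (s - 1) * ((v:ℂ)^(-s) - (x:ℂ)^(-s)) =
      (s - 1) * (x:ℂ)^(-s) * ((1:ℝ):ℂ) + (1 - s) * (v:ℂ)^(-s) := by push_cast; ring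
    rw [e]
    refine h3.congr_of_mem ?_ hv
    intro w hw
    have : -s + 1 = 1 - s := by ring
    simp only [Pi.add_apply, id]
    rw [this]; field_simp
  have := norm_image_sub_le_of_norm_deriv_le_segment'
    (C := ‖s - 1‖ * (2 * ‖s‖ ^ δ * x ^ (-s.re - δ))) hd (by
    intro v hv
    rw [norm_mul, norm_neg]
    gcongr
    exact cpow_diff_bound2 s hσ x v δ hx1 hv.1 hv.2.le h0 h1) (x+1) ⟨by linarith, le_refl _⟩
  have e : zterm n s = ((s - 1) * (x:ℂ)^(-s) * ((x + 1 : ℝ) : ℂ) + ((x + 1 : ℝ):ℂ)^(1 - s)) -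
     ((s - 1) * (x:ℂ)^(-s) * (x : ℂ) + (x:ℂ)^(1 - s)) := by
    have e1 : ((x + 1 : ℝ) : ℂ) = (n:ℂ) + 2 := by rw [hx]; push_cast; ring
    have e2 : ((x : ℝ) : ℂ) = (n:ℂ) + 1 := by rw [hx]; push_cast; ring
    rw [zterm, e1, e2]; ring
  rw [e]
  refine this.trans (le_of_eq ?_)
  ring

open Filter

theorem summable_aux (a : ℝ) (ha : 1 < a) : Summable (fun n : ℕ => ((n:ℝ) + 1) ^ (-a)) := by
  have := (summable_nat_add_iff 1).2 (Real.summable_nat_rpow.2 (by linarith : -a < -1))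
  simpa using this

theorem zeta1_series_of_one_lt (s : ℂ) (hs : 1 < s.re) : riemannZeta₁ s = 1 + ∑' n, zterm n s := by
  have hsum : Summable (fun n => zterm n s) := by
    refine Summable.of_norm_bounded (g := fun n : ℕ => ‖s - 1‖ * (2 * ‖s‖ ^ (0:ℝ) * ((n:ℝ) + 1) ^ (-s.re - 0)))
      ?_ (fun n => zterm_bound n s (by linarith) 0 le_rfl zero_le_one)
    refine ((summable_aux s.re hs).mul_left (‖s - 1‖ * (2 * ‖s‖ ^ (0:ℝ)))).congr ?_
    intro n; simp only [sub_zero]; ring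
  have hs1 : s ≠ 1 := by rintro rfl; simp at hs
  have hpart : ∀ N : ℕ, ∑ n ∈ Finset.range N, zterm n s =
      (s - 1) * ∑ n ∈ Finset.range N, 1 / ((n:ℂ) + 1) ^ s - 1 + ((N:ℂ) + 1) ^ (1 - s) := by
    intro N
    induction N with
    | zero => simp
    | succ N ih =>
      rw [Finset.sum_range_succ, ih, Finset.sum_range_succ, zterm, Complex.cpow_neg]
      have : (((N+1 : ℕ):ℂ) + 1) = (N:ℂ) + 2 := by push_cast; ring
      rw [this]; ring
  have hz : Summable (fun n : ℕ => 1 / ((n:ℂ) + 1) ^ s) := by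
    have := (summable_nat_add_iff 1).2 (Complex.summable_one_div_nat_cpow.2 hs)
    simpa using this
  have hlim1 := hsum.hasSum.tendsto_sum_nat
  have hlim2 := hz.hasSum.tendsto_sum_nat
  have hlim3 : Tendsto (fun N : ℕ => ((N:ℂ) + 1) ^ (1 - s)) atTop (nhds 0) := by
    rw [tendsto_zero_iff_norm_tendsto_zero]
    have : (fun N : ℕ => ‖((N:ℂ) + 1) ^ (1 - s)‖) = fun N : ℕ => (((N+1:ℕ):ℝ)) ^ (-(s.re - 1)) := by
      ext N
      have h := Complex.norm_cpow_eq_rpow_re_of_pos (x := (N:ℝ) + 1) (by positivity) (1 - s)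
      push_cast at h ⊢
      rw [h]; simp
    rw [this]
    exact (tendsto_rpow_neg_atTop (by linarith)).comp
      (tendsto_natCast_atTop_atTop.comp (tendsto_add_atTop_nat 1))
  have hlim4 := ((hlim2.const_mul (s - 1)).sub_const 1).add hlim3
  have e := tendsto_nhds_unique hlim1 (hlim4.congr (fun N => (hpart N).symm))
  rw [e, ← zeta_eq_tsum_one_div_nat_add_one_cpow hs, riemannZeta_eq_inv_sub_mul hs1]
  have : s - 1 ≠ 0 := sub_ne_zero.2 hs1
  field_simp
  ring

theorem zeta1_series (s : ℂ) (hs : 0 < s.re) : riemannZeta₁ s = 1 + ∑' n, zterm n s := by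
  set ε := min (s.re / 2) 1 with hε
  set M := ‖s‖ + 3 with hM
  have hε0 : 0 < ε := by rw [hε]; positivity
  set U : Set ℂ := {z | ε < z.re} ∩ Metric.ball 0 M with hU
  have hUo : IsOpen U := (isOpen_lt continuous_const Complex.continuous_re).inter Metric.isOpen_ball
  have hUc : IsPreconnected U :=
    ((convex_halfSpace_re_gt ε).inter (convex_ball 0 M)).isPreconnected
  have hsU : s ∈ U := by
    refine ⟨?_, ?_⟩
    · have : ε ≤ s.re / 2 := min_le_left _ _
      simp only [Set.mem_ofPred_eq]; linarith
    · simp [hM]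
  have h2U : (2:ℂ) ∈ U := by
    refine ⟨?_, ?_⟩
    · have : ε ≤ 1 := min_le_right _ _
      simp only [Set.mem_ofPred_eq, Complex.re_ofNat]; linarith
    · simp [hM]; have := norm_nonneg s; linarith
  have hdiff : DifferentiableOn ℂ (fun z => ∑' n, zterm n z) U := by
    refine Complex.differentiableOn_tsum_of_summable_norm
      (u := fun n : ℕ => ((M + 1) * (2 * M)) * ((n:ℝ) + 1) ^ (-(ε + 1))) ?_ ?_ hUo ?_
    · exact (summable_aux (ε + 1) (by linarith)).mul_left _
    · intro n
      have h1 : ((n:ℂ) + 1) ≠ 0 := by exact_mod_cast Nat.succ_ne_zero n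
      have h2 : ((n:ℂ) + 2) ≠ 0 := by exact_mod_cast Nat.succ_ne_zero (n+1)
      unfold zterm
      refine Differentiable.differentiableOn ?_
      have d1 : Differentiable ℂ (fun s : ℂ => ((n:ℂ) + 1) ^ (-s)) :=
        fun z => (differentiableAt_id.neg).const_cpow (Or.inl h1)
      have d2 : Differentiable ℂ (fun s : ℂ => ((n:ℂ) + 1) ^ (1-s)) :=
        fun z => (differentiableAt_id.const_sub 1).const_cpow (Or.inl h1)
      have d3 : Differentiable ℂ (fun s : ℂ => ((n:ℂ) + 2) ^ (1-s)) :=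
        fun z => (differentiableAt_id.const_sub 1).const_cpow (Or.inl h2)
      fun_prop
    · intro n z hz
      have hzr : ε < z.re := hz.1
      have hzn : ‖z‖ < M := by simpa using hz.2
      refine (zterm_bound n z (by linarith) 1 zero_le_one le_rfl).trans ?_
      have h1 : ‖z - 1‖ ≤ M + 1 := by
        refine (norm_sub_le _ _).trans ?_
        simp; linarith
      have h2 : ((n:ℝ) + 1) ^ (-z.re - 1) ≤ ((n:ℝ) + 1) ^ (-(ε + 1)) :=
        Real.rpow_le_rpow_of_exponent_le (by simp) (by linarith)
      rw [Real.rpow_one, ← mul_assoc]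
      have := norm_nonneg s
      gcongr
  have hA : AnalyticOnNhd ℂ (fun z => 1 + ∑' n, zterm n z) U :=
    (hdiff.const_add 1).analyticOnNhd hUo
  have hB : AnalyticOnNhd ℂ riemannZeta₁ U := differentiable_riemannZeta₁.differentiableOn.analyticOnNhd hUo
  refine hB.eqOn_of_preconnected_of_eventuallyEq hA hUc h2U ?_ hsU
  filter_upwards [(isOpen_lt continuous_const Complex.continuous_re).mem_nhds
    (by simp : (2:ℂ) ∈ {z : ℂ | (1:ℝ) < z.re})] with z hz
  exact zeta1_series_of_one_lt z hz

theorem zeta0_bound (δ : ℝ) (h0 : 0 < δ) (h1 : δ ≤ 1) :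
    ∃ C > 0, ∀ s : ℂ, 1 - δ / 2 ≤ s.re → s ≠ 1 → ‖riemannZeta₀ s‖ ≤ C * ‖s‖ ^ δ := by
  set B := ∑' n : ℕ, ((n:ℝ) + 1) ^ (-(1 + δ / 2)) with hB
  have hsum := summable_aux (1 + δ / 2) (by linarith)
  have hB0 : 0 ≤ B := tsum_nonneg fun n => by positivity
  refine ⟨2 * B + 1, by positivity, fun s hs hs1 => ?_⟩
  have hne : s - 1 ≠ 0 := sub_ne_zero.2 hs1
  have h := zeta1_series s (by linarith)
  rw [riemannZeta₁] at h
  have h' : (s - 1) * riemannZeta₀ s = ∑' n, zterm n s := by linear_combination h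
  have hb : ‖∑' n, zterm n s‖ ≤ ‖s - 1‖ * (2 * ‖s‖ ^ δ) * B := by
    rw [hB, ← tsum_mul_left]
    refine tsum_of_norm_bounded (hsum.mul_left _).hasSum fun n => ?_
    refine (zterm_bound n s (by linarith) δ h0.le h1).trans ?_
    rw [← mul_assoc]
    gcongr
    · simp
    · linarith
  rw [← h', norm_mul, mul_assoc] at hb
  have := le_of_mul_le_mul_left hb (norm_pos_iff.2 hne)
  refine this.trans ?_
  have : 0 ≤ ‖s‖ ^ δ := by positivity
  nlinarith

open Filter

theorem two_mul_rpow_le (T δ : ℝ) (hT : 0 ≤ T) (h1 : δ ≤ 1) : (2 * T) ^ δ ≤ 2 * T ^ δ := by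
  rw [Real.mul_rpow (by norm_num) hT]
  have : (2:ℝ) ^ δ ≤ 2 ^ (1:ℝ) := Real.rpow_le_rpow_of_exponent_le (by norm_num) h1
  rw [Real.rpow_one] at this
  gcongr

theorem zeta_bound (δ : ℝ) (h0 : 0 < δ) (h1 : δ ≤ 1) :
    ∃ C > 0, ∀ s : ℂ, 1 - δ / 2 ≤ s.re → s.re ≤ 3 → 1 ≤ |s.im| →
      ‖riemannZeta s‖ ≤ C * (|s.im| + 4) ^ δ := by
  obtain ⟨C, hC, h⟩ := zeta0_bound δ h0 h1
  refine ⟨C + 1, by linarith, fun s hs hs3 ht => ?_⟩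
  have hs1 : s ≠ 1 := by rintro rfl; norm_num at ht
  rw [riemannZeta_eq_inv_sub_add hs1]
  refine (norm_add_le _ _).trans ?_
  have hT : (1:ℝ) ≤ (|s.im| + 4) ^ δ := Real.one_le_rpow (by linarith) h0.le
  have hn : ‖s‖ ≤ |s.im| + 4 := by
    have := Complex.norm_le_abs_re_add_abs_im s
    have : |s.re| ≤ 3 := abs_le.2 ⟨by linarith, hs3⟩
    linarith
  have ha : ‖(s - 1)⁻¹‖ ≤ 1 := by
    rw [norm_inv]
    apply inv_le_one_of_one_le₀
    have := Complex.abs_im_le_norm (s - 1)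
    simp at this; linarith
  have hb : ‖riemannZeta₀ s‖ ≤ C * (|s.im| + 4) ^ δ := (h s hs hs1).trans (by gcongr)
  linarith

theorem zeta_deriv_bound (δ : ℝ) (h0 : 0 < δ) (h1 : δ ≤ 1) :
    ∃ C > 0, ∀ s : ℂ, 1 - δ / 4 ≤ s.re → s.re ≤ 2 → 2 ≤ |s.im| →
      ‖deriv riemannZeta s‖ ≤ C * (|s.im| + 4) ^ δ := by
  obtain ⟨C, hC, h⟩ := zeta_bound δ h0 h1
  refine ⟨C * 2 / (δ / 4), by positivity, fun s hs hs3 ht => ?_⟩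
  have key : ∀ z ∈ Metric.closedBall s (δ/4), |z.re - s.re| ≤ δ / 4 ∧ |z.im - s.im| ≤ δ / 4 := by
    intro z hz
    rw [mem_closedBall_iff_norm] at hz
    have h1 := Complex.abs_re_le_norm (z - s)
    have h2 := Complex.abs_im_le_norm (z - s)
    simp only [Complex.sub_re, Complex.sub_im] at h1 h2
    constructor <;> linarith
  have keyim : ∀ z ∈ Metric.closedBall s (δ/4), 1 ≤ |z.im| ∧ |z.im| ≤ |s.im| + 1 := by
    intro z hz
    have h2 := (key z hz).2
    have h3 := abs_sub_abs_le_abs_sub z.im s.im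
    have h4 := abs_sub_abs_le_abs_sub s.im z.im
    rw [abs_sub_comm s.im] at h4
    constructor <;> linarith
  have := Complex.norm_deriv_le_of_forall_mem_sphere_norm_le (c := s) (R := δ / 4)
    (C := C * 2 * (|s.im| + 4) ^ δ) (f := riemannZeta) (by positivity) (by
      apply DifferentiableOn.diffContOnCl
      rw [closure_ball _ (by positivity)]
      intro z hz
      refine (differentiableAt_riemannZeta ?_).differentiableWithinAt
      rintro rfl
      have := (keyim _ hz).1
      norm_num at this) (by
      intro z hz
      have hz' := Metric.sphere_subset_closedBall hz
      have hre := abs_le.1 (key z hz').1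
      have him := keyim z hz'
      refine (h z (by linarith) (by linarith) him.1).trans ?_
      rw [mul_assoc]
      gcongr
      refine le_trans ?_ (two_mul_rpow_le (|s.im| + 4) δ (by positivity) h1)
      gcongr
      linarith)
  refine this.trans (le_of_eq ?_)
  ring

theorem zeta_real_bound : ∃ C > 0, ∀ x : ℝ, 0 < x → x ≤ 1 → ‖riemannZeta (1 + x)‖ ≤ C / x := by
  obtain ⟨C, hC, h⟩ := zeta0_bound 1 one_pos le_rfl
  refine ⟨1 + 2 * C, by linarith, fun x h0 h1 => ?_⟩
  have hs1 : (1:ℂ) + x ≠ 1 := by simpa using h0.ne'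
  rw [riemannZeta_eq_inv_sub_add hs1]
  refine (norm_add_le _ _).trans ?_
  have h2 := h (1 + x) (by simp; linarith) hs1
  have e : ‖(1:ℂ) + x‖ = 1 + x := by
    have : (1:ℂ) + x = ((1 + x : ℝ) : ℂ) := by push_cast; ring
    rw [this, Complex.norm_real, Real.norm_of_nonneg (by linarith)]
  rw [e, Real.rpow_one] at h2
  have e2 : ‖((1:ℂ) + x - 1)⁻¹‖ = 1 / x := by
    simp [abs_of_pos h0]
  rw [e2]
  have : C * (1 + x) ≤ 2 * C / x := by
    rw [le_div_iff₀ h0]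
    nlinarith [mul_nonneg hC.le h0.le]
  have e3 : (1 + 2 * C) / x = 1 / x + 2 * C / x := by ring
  rw [e3]; linarith

theorem zeta_341 (x y : ℝ) (hx : 0 < x) :
    1 ≤ ‖riemannZeta (1 + x)‖ ^ 3 * ‖riemannZeta (1 + x + Complex.I * y)‖ ^ 4 *
      ‖riemannZeta (1 + x + 2 * Complex.I * y)‖ := by
  have := DirichletCharacter.norm_LFunction_product_ge_one (N := 1) (1 : DirichletCharacter ℂ 1) hx y
  rw [DirichletCharacter.LFunctionTrivChar] at this
  simpa [DirichletCharacter.LFunction_modOne_eq] using this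

theorem zeta_lower (δ : ℝ) (h0 : 0 < δ) (h1 : δ ≤ 1) :
    ∃ c > 0, c ≤ δ / 4 ∧ ∃ b > 0, ∀ s : ℂ, 2 ≤ |s.im| → 1 - c * (|s.im| + 4) ^ (-(5 * δ)) ≤ s.re → s.re ≤ 2 →
      b * (|s.im| + 4) ^ (-(4 * δ)) ≤ ‖riemannZeta s‖ := by
  obtain ⟨C1, hC1, hb1⟩ := zeta_bound δ h0 h1
  obtain ⟨C2, hC2, hb2⟩ := zeta_deriv_bound δ h0 h1
  obtain ⟨C3, hC3, hb3⟩ := zeta_real_bound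
  set A := 1 + C1 + C2 + C3 with hA
  have hA1 : 1 ≤ A := by linarith
  set k := δ / (8 * A ^ 2) with hk
  have hk0 : 0 < k := by positivity
  have hkA : k * (8 * A ^ 2) = δ := by rw [hk]; field_simp
  have hk8 : k ≤ δ / 8 := by
    rw [hk]; gcongr; nlinarith
  have hc : k ^ 4 ≤ δ / 4 := by
    have : k ^ 4 ≤ k ^ 1 := pow_le_pow_of_le_one hk0.le (by linarith) (by norm_num)
    linarith
  have main : ∀ x y : ℝ, 0 < x → x ≤ 1 → 2 ≤ |y| → k ^ 4 * (|y| + 4) ^ (-(5 * δ)) ≤ x →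
      k ^ 3 / (2 * A) * (|y| + 4) ^ (-(4 * δ)) ≤ ‖riemannZeta (1 + x + Complex.I * y)‖ := by
    intro x y hx hx1 hy hxk
    set T := |y| + 4 with hT
    have hT0 : 0 < T := by positivity
    set P := T ^ δ with hP
    have hP0 : 0 < P := by positivity
    have e5 : T ^ (-(5 * δ)) = (P ^ 5)⁻¹ := by
      rw [Real.rpow_neg hT0.le, hP, ← Real.rpow_natCast, ← Real.rpow_mul hT0.le]; congr 2; push_cast; ring
    have e4 : T ^ (-(4 * δ)) = (P ^ 4)⁻¹ := by
      rw [Real.rpow_neg hT0.le, hP, ← Real.rpow_natCast, ← Real.rpow_mul hT0.le]; congr 2; push_cast; ring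
    rw [e5] at hxk
    rw [e4]
    have h341 := zeta_341 x y hx
    have q1 : ‖riemannZeta (1 + x)‖ ≤ A / x := (hb3 x hx hx1).trans (by gcongr; linarith)
    have q2 : ‖riemannZeta (1 + x + 2 * Complex.I * y)‖ ≤ A * (2 * P) := by
      have := hb1 (1 + x + 2 * Complex.I * y) (by simp; linarith) (by simp; linarith) (by
        simp [abs_mul]; linarith)
      refine this.trans ?_
      gcongr
      · linarith
      · refine le_trans ?_ (two_mul_rpow_le T δ hT0.le h1)
        gcongr
        simp [abs_mul]; linarith
    set Z := ‖riemannZeta (1 + x + Complex.I * y)‖ with hZ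
    have hZ0 : 0 ≤ Z := norm_nonneg _
    have r1 : 1 ≤ (A / x) ^ 3 * Z ^ 4 * (A * (2 * P)) := by
      refine h341.trans ?_
      gcongr
    have r2 : x ^ 3 ≤ 2 * A ^ 4 * P * Z ^ 4 := by
      have : (A / x) ^ 3 * Z ^ 4 * (A * (2 * P)) = 2 * A ^ 4 * P * Z ^ 4 / x ^ 3 := by
        field_simp
      rw [this, le_div_iff₀ (by positivity)] at r1
      linarith
    have r3 : (k ^ 4 * (P ^ 5)⁻¹) ^ 3 ≤ 2 * A ^ 4 * P * Z ^ 4 := le_trans (by gcongr) r2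
    have r4 : (k ^ 3 / (2 * A) * (P ^ 4)⁻¹) ^ 4 ≤ Z ^ 4 := by
      have e : (k ^ 3 / (2 * A) * (P ^ 4)⁻¹) ^ 4 = (k ^ 4 * (P ^ 5)⁻¹) ^ 3 / (16 * A ^ 4 * P) := by
        field_simp; norm_num
      rw [e, div_le_iff₀ (by positivity)]
      have : 0 ≤ A ^ 4 * P * Z ^ 4 := by positivity
      linarith
    exact le_of_pow_le_pow_left₀ (by norm_num) hZ0 r4
  refine ⟨k ^ 4, by positivity, hc, k ^ 3 / (4 * A), by positivity, fun s ht hs hs2 => ?_⟩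
  set T := |s.im| + 4 with hT
  have hT1 : 1 ≤ T := by rw [hT]; linarith
  have hT0 : 0 < T := by positivity
  set η := k ^ 4 * T ^ (-(5 * δ)) with hη
  have hη0 : 0 < η := by positivity
  have hη1 : η ≤ δ / 4 := by
    have : T ^ (-(5 * δ)) ≤ 1 := Real.rpow_le_one_of_one_le_of_nonpos hT1 (by linarith)
    have : k ^ 4 * T ^ (-(5 * δ)) ≤ k ^ 4 * 1 := by gcongr
    linarith
  have hcmp : k ^ 3 / (4 * A) * T ^ (-(4 * δ)) ≤ k ^ 3 / (2 * A) * T ^ (-(4 * δ)) := by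
    gcongr; linarith
  by_cases hc1 : 1 + η ≤ s.re
  · have := main (s.re - 1) s.im (by linarith) (by linarith) ht (by linarith)
    have e : (1:ℂ) + ((s.re - 1 : ℝ) : ℂ) + Complex.I * s.im = s := by
      apply Complex.ext <;> simp
    rw [e] at this
    linarith
  · push Not at hc1
    have m := main η s.im hη0 (by linarith) ht le_rfl
    set w : ℂ := 1 + (η : ℂ) + Complex.I * s.im with hw
    set S : Set ℂ := (({z | 1 - δ/4 ≤ z.re} ∩ {z | z.re ≤ 2}) ∩ ({z | s.im ≤ z.im} ∩ {z | z.im ≤ s.im})) with hS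
    have hconv : Convex ℝ S := ((convex_halfSpace_re_ge _).inter (convex_halfSpace_re_le _)).inter
      ((convex_halfSpace_im_ge _).inter (convex_halfSpace_im_le _))
    have him : ∀ z ∈ S, z.im = s.im := fun z hz => le_antisymm hz.2.2 hz.2.1
    have hmv := Convex.norm_image_sub_le_of_norm_deriv_le (𝕜 := ℂ) (f := riemannZeta) (C := A * T ^ δ) (s := S)
      (x := s) (y := w) (by
        intro z hz
        apply differentiableAt_riemannZeta
        rintro rfl
        have := him _ hz
        rw [← this] at ht
        norm_num at ht) (by
        intro z hz
        refine (hb2 z hz.1.1 hz.1.2 (by rw [him z hz]; exact ht)).trans ?_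
        rw [him z hz]
        gcongr
        linarith) hconv ⟨⟨by simp only [Set.mem_ofPred_eq]; linarith, hs2⟩, ⟨by simp, by simp⟩⟩
        ⟨⟨by simp [hw]; linarith, by simp [hw]; linarith⟩, ⟨by simp [hw], by simp [hw]⟩⟩
    have hd : ‖w - s‖ ≤ 2 * η := by
      have e : w - s = ((1 + η - s.re : ℝ) : ℂ) := by
        apply Complex.ext <;> simp [hw]
      rw [e, Complex.norm_real, Real.norm_eq_abs, abs_le]
      constructor <;> linarith
    have h3 : ‖riemannZeta w‖ ≤ ‖riemannZeta s‖ + A * T ^ δ * (2 * η) := by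
      have a1 : A * T ^ δ * ‖w - s‖ ≤ A * T ^ δ * (2 * η) := by gcongr
      have a2 := norm_le_norm_add_norm_sub' (riemannZeta w) (riemannZeta s)
      linarith
    have h4 : A * T ^ δ * (2 * η) = 2 * A * k ^ 4 * T ^ (-(4 * δ)) := by
      rw [hη]
      have : T ^ (-(4 * δ)) = T ^ δ * T ^ (-(5 * δ)) := by
        rw [← Real.rpow_add hT0]; congr 1; ring
      rw [this]; ring
    have h5 : 2 * A * k ^ 4 ≤ k ^ 3 / (4 * A) := by
      rw [le_div_iff₀ (by positivity)]
      have : 2 * A * k ^ 4 * (4 * A) = k ^ 3 * (k * (8 * A ^ 2)) := by ring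
      rw [this, hkA]
      have : 0 < k ^ 3 := by positivity
      nlinarith
    have h6 : 2 * A * k ^ 4 * T ^ (-(4 * δ)) ≤ k ^ 3 / (4 * A) * T ^ (-(4 * δ)) := by gcongr
    have h7 : k ^ 3 / (2 * A) * T ^ (-(4 * δ)) = 2 * (k ^ 3 / (4 * A) * T ^ (-(4 * δ))) := by
      field_simp; ring
    linarith

open Filter

noncomputable def Gfun (s : ℂ) : ℂ := -(deriv riemannZeta₁ s / riemannZeta₁ s) - riemannZeta₀ s
noncomputable def Kfun (s : ℂ) : ℂ := Gfun s / (s * (s + 1))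

theorem zeta1_eq (s : ℂ) (hs : s ≠ 1) : riemannZeta₁ s = (s - 1) * riemannZeta s := by
  rw [riemannZeta_eq_inv_sub_mul hs]
  have : s - 1 ≠ 0 := sub_ne_zero.2 hs
  field_simp

theorem Gfun_eq (s : ℂ) (hs : s ≠ 1) (hz : riemannZeta s ≠ 0) :
    Gfun s = -(deriv riemannZeta s) / riemannZeta s - riemannZeta s := by
  have h1 : s - 1 ≠ 0 := sub_ne_zero.2 hs
  have h2 : riemannZeta₁ s ≠ 0 := by rw [zeta1_eq s hs]; exact mul_ne_zero h1 hz
  have h3 := deriv_riemannZeta_eq_neg_inv_sub_sq_mul_add hs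
  have h4 : riemannZeta₀ s = riemannZeta s - (s - 1)⁻¹ := by
    rw [riemannZeta_eq_inv_sub_add hs]; ring
  rw [Gfun, h4, h3, riemannZeta_eq_inv_sub_mul hs]
  field_simp
  ring

theorem zeta1_ne (s : ℂ) (hs : 1 ≤ s.re) : riemannZeta₁ s ≠ 0 := by
  by_cases h : s = 1
  · simp [h]
  · rw [zeta1_eq s h]
    exact mul_ne_zero (sub_ne_zero.2 h) (riemannZeta_ne_zero_of_one_le_re hs)

def Kdom : Set ℂ := {s | 0 < s.re} ∩ {s | riemannZeta₁ s ≠ 0}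

theorem Kdom_open : IsOpen Kdom :=
  (isOpen_lt continuous_const Complex.continuous_re).inter
    (isOpen_ne_fun differentiable_riemannZeta₁.continuous continuous_const)

theorem K_diff : DifferentiableOn ℂ Kfun Kdom := by
  intro s hs
  have h1 : 0 < s.re := hs.1
  have h2 : riemannZeta₁ s ≠ 0 := hs.2
  have hs0 : s * (s + 1) ≠ 0 := by
    apply mul_ne_zero
    · rintro rfl; simp at h1
    · intro h
      have := congrArg Complex.re h
      simp at this; linarith
  have hd : DifferentiableAt ℂ (deriv riemannZeta₁) s :=
    (differentiable_riemannZeta₁.analyticAt s).deriv.differentiableAt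
  have e1 := differentiable_riemannZeta₁ s
  have e0 := differentiable_riemannZeta₀ s
  have : DifferentiableAt ℂ Kfun s := by
    unfold Kfun Gfun
    exact ((hd.fun_div e1 h2).fun_neg.fun_sub e0).fun_div (by fun_prop) hs0
  exact this.differentiableWithinAt

theorem K_analytic : AnalyticOnNhd ℂ Kfun Kdom := K_diff.analyticOnNhd Kdom_open

theorem K_bound0 (δ : ℝ) (h0 : 0 < δ) (h1 : δ ≤ 1) :
    ∃ c > 0, c ≤ δ / 4 ∧ ∃ B > 0, ∀ s : ℂ, 2 ≤ |s.im| → 1 - c * (|s.im| + 4) ^ (-(5 * δ)) ≤ s.re → s.re ≤ 2 →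
      s ∈ Kdom ∧ ‖Kfun s‖ ≤ B * (|s.im| + 4) ^ (5 * δ - 2) := by
  obtain ⟨C1, hC1, hb1⟩ := zeta_bound δ h0 h1
  obtain ⟨C2, hC2, hb2⟩ := zeta_deriv_bound δ h0 h1
  obtain ⟨c, hc, hcδ, b, hb, hl⟩ := zeta_lower δ h0 h1
  refine ⟨c, hc, hcδ, (C2 / b + C1) * 9, by positivity, fun s ht hs hs2 => ?_⟩
  have hl' := hl s ht hs hs2
  set T := |s.im| + 4 with hT
  have hT1 : 1 ≤ T := by rw [hT]; linarith
  have hT0 : 0 < T := by positivity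
  have hz : 0 < ‖riemannZeta s‖ := lt_of_lt_of_le (by positivity) hl'
  have hne : riemannZeta s ≠ 0 := norm_pos_iff.1 hz
  have hs1 : s ≠ 1 := by rintro rfl; norm_num at ht
  have hη : c * T ^ (-(5 * δ)) ≤ δ / 4 := by
    have : T ^ (-(5 * δ)) ≤ 1 := Real.rpow_le_one_of_one_le_of_nonpos hT1 (by linarith)
    have : c * T ^ (-(5 * δ)) ≤ c * 1 := by gcongr
    linarith
  have hre : 1 - δ / 4 ≤ s.re := by linarith
  refine ⟨⟨by simp only [Set.mem_ofPred_eq]; linarith, ?_⟩, ?_⟩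
  · simp only [Set.mem_ofPred_eq]
    rw [zeta1_eq s hs1]; exact mul_ne_zero (sub_ne_zero.2 hs1) hne
  · have g1 := hb2 s hre hs2 ht
    have g2 := hb1 s (by linarith) (by linarith) (by linarith)
    have hG : ‖Gfun s‖ ≤ (C2 / b + C1) * T ^ (5 * δ) := by
      rw [Gfun_eq s hs1 hne]
      refine (norm_sub_le _ _).trans ?_
      rw [norm_div, norm_neg]
      have q1 : ‖deriv riemannZeta s‖ / ‖riemannZeta s‖ ≤ C2 * T ^ δ / (b * T ^ (-(4 * δ))) := by gcongr
      have q2 : C2 * T ^ δ / (b * T ^ (-(4 * δ))) = C2 / b * T ^ (5 * δ) := by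
        rw [Real.rpow_neg hT0.le]
        have : T ^ (5 * δ) = T ^ δ * T ^ (4 * δ) := by
          rw [← Real.rpow_add hT0]; congr 1; ring
        rw [this]; field_simp
      have q3 : T ^ δ ≤ T ^ (5 * δ) := Real.rpow_le_rpow_of_exponent_le hT1 (by linarith)
      have q4 : C1 * T ^ δ ≤ C1 * T ^ (5 * δ) := by gcongr
      linarith
    rw [Kfun, norm_div, norm_mul]
    have n1 : T / 3 ≤ ‖s‖ := by
      have := Complex.abs_im_le_norm s
      linarith
    have n2 : T / 3 ≤ ‖s + 1‖ := by
      have := Complex.abs_im_le_norm (s + 1)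
      simp at this
      linarith
    calc ‖Gfun s‖ / (‖s‖ * ‖s + 1‖) ≤ (C2 / b + C1) * T ^ (5 * δ) / (T / 3 * (T / 3)) := by gcongr
      _ = _ := by
        rw [Real.rpow_sub hT0]
        norm_cast
        field_simp; ring

open Filter MeasureTheory

theorem K_bound (J : ℕ) : ∃ C > 0, ∀ j ≤ J, ∀ s : ℂ, 1 ≤ s.re → s.re ≤ 3/2 →
    ‖iteratedDeriv j Kfun s‖ ≤ C * (1 + |s.im|) ^ (-(3/2) : ℝ) := by
  -- it suffices to get a constant for each j
  suffices H : ∀ j ≤ J, ∃ C > 0, ∀ s : ℂ, 1 ≤ s.re → s.re ≤ 3/2 →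
      ‖iteratedDeriv j Kfun s‖ ≤ C * (1 + |s.im|) ^ (-(3/2) : ℝ) by
    choose! C hC hCb using H
    refine ⟨1 + ∑ j ∈ Finset.range (J + 1), C j, ?_, ?_⟩
    · have : 0 ≤ ∑ j ∈ Finset.range (J + 1), C j :=
        Finset.sum_nonneg fun j hj => (hC j (by simpa [Nat.lt_succ_iff] using hj)).le
      linarith
    · intro j hj s h1 h2
      refine (hCb j hj s h1 h2).trans ?_
      gcongr
      have := Finset.single_le_sum (f := C) (s := Finset.range (J + 1))
        (fun j hj => (hC j (by simpa [Nat.lt_succ_iff] using hj)).le) (a := j) (by simpa [Nat.lt_succ_iff] using hj)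
      linarith
  intro j hj
  set δ : ℝ := 1 / (10 * (j + 1)) with hδ
  have h0 : 0 < δ := by positivity
  have hδj : 5 * δ * (j + 1) = 1 / 2 := by rw [hδ]; field_simp; norm_num
  have h1 : δ ≤ 1 / 10 := by
    have : (0:ℝ) ≤ j := by positivity
    nlinarith
  obtain ⟨c, hc, hcδ, B, hB, hK⟩ := K_bound0 δ h0 (by linarith)
  -- compact part
  have hcomp : IsCompact (Set.Icc (1:ℝ) (3/2) ×ℂ Set.Icc (-4:ℝ) 4) := isCompact_Icc.reProdIm isCompact_Icc
  have hcont : ContinuousOn (iteratedDeriv j Kfun) (Set.Icc (1:ℝ) (3/2) ×ℂ Set.Icc (-4:ℝ) 4) := by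
    intro s hs
    rw [Complex.mem_reProdIm] at hs
    have hsd : s ∈ Kdom := ⟨by simp only [Set.mem_ofPred_eq]; linarith [hs.1.1], zeta1_ne s hs.1.1⟩
    have := (K_analytic s hsd).iterated_deriv j
    rw [← iteratedDeriv_eq_iterate] at this
    exact this.continuousAt.continuousWithinAt
  obtain ⟨C1, hC1⟩ := hcomp.exists_bound_of_continuousOn hcont
  set D := (j.factorial : ℝ) * B * (1/2 : ℝ) ^ (5 * δ - 2) / (c * 2 ^ (-(5 * δ))) ^ j with hD
  have hD0 : 0 < D := by positivity
  refine ⟨D + |C1| * 5 ^ (3/2 : ℝ), by positivity, fun s hs1 hs2 => ?_⟩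
  by_cases ht : |s.im| ≤ 4
  · have hm : s ∈ Set.Icc (1:ℝ) (3/2) ×ℂ Set.Icc (-4:ℝ) 4 := by
      rw [Complex.mem_reProdIm]
      exact ⟨⟨hs1, hs2⟩, abs_le.1 ht⟩
    refine (hC1 s hm).trans ?_
    have a1 : (5:ℝ) ^ (-(3/2) : ℝ) ≤ (1 + |s.im|) ^ (-(3/2) : ℝ) :=
      Real.rpow_le_rpow_of_nonpos (by positivity) (by linarith) (by norm_num)
    have a2 : (5:ℝ) ^ (3/2 : ℝ) * (5:ℝ) ^ (-(3/2) : ℝ) = 1 := by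
      rw [← Real.rpow_add (by norm_num)]; norm_num
    calc C1 ≤ |C1| := le_abs_self _
      _ = |C1| * 5 ^ (3/2 : ℝ) * (5:ℝ) ^ (-(3/2) : ℝ) := by rw [mul_assoc, a2, mul_one]
      _ ≤ (D + |C1| * 5 ^ (3/2 : ℝ)) * (1 + |s.im|) ^ (-(3/2) : ℝ) := by
        gcongr
        linarith
  · push Not at ht
    set T := |s.im| + 4 with hT
    have hT1 : 1 ≤ T := by rw [hT]; linarith
    have hT0 : 0 < T := by positivity
    set r := c * (2 * T) ^ (-(5 * δ)) with hr
    have hr0 : 0 < r := by positivity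
    have hr1 : r ≤ 1 / 4 := by
      have : (2 * T) ^ (-(5 * δ)) ≤ 1 := Real.rpow_le_one_of_one_le_of_nonpos (by linarith) (by linarith)
      have : c * (2 * T) ^ (-(5 * δ)) ≤ c * 1 := by gcongr
      linarith
    have key : ∀ z ∈ Metric.closedBall s r, z ∈ Kdom ∧ ‖Kfun z‖ ≤ B * (1/2 * T) ^ (5 * δ - 2) := by
      intro z hz
      rw [mem_closedBall_iff_norm] at hz
      have i1 := Complex.abs_re_le_norm (z - s)
      have i2 := Complex.abs_im_le_norm (z - s)
      simp only [Complex.sub_re, Complex.sub_im] at i1 i2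
      have h3 := abs_sub_abs_le_abs_sub z.im s.im
      have h4 := abs_sub_abs_le_abs_sub s.im z.im
      rw [abs_sub_comm s.im] at h4
      have i3 := abs_le.1 (i1.trans hz)
      have i4 : (2 * T) ^ (-(5 * δ)) ≤ (|z.im| + 4) ^ (-(5 * δ)) :=
        Real.rpow_le_rpow_of_nonpos (by positivity) (by linarith) (by linarith)
      have i5 : c * (2 * T) ^ (-(5 * δ)) ≤ c * (|z.im| + 4) ^ (-(5 * δ)) := by gcongr
      obtain ⟨k1, k2⟩ := hK z (by linarith) (by linarith) (by linarith)
      refine ⟨k1, k2.trans ?_⟩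
      have : (|z.im| + 4) ^ (5 * δ - 2) ≤ (1/2 * T) ^ (5 * δ - 2) :=
        Real.rpow_le_rpow_of_nonpos (by positivity) (by linarith) (by linarith)
      gcongr
    have hmain := Complex.norm_iteratedDeriv_le_of_forall_mem_sphere_norm_le (c := s) (R := r)
      (C := B * (1/2 * T) ^ (5 * δ - 2)) (f := Kfun) j hr0 (by
        apply DifferentiableOn.diffContOnCl
        rw [closure_ball _ hr0.ne']
        exact K_diff.mono fun z hz => (key z hz).1) (fun z hz => (key z (Metric.sphere_subset_closedBall hz)).2)
    refine hmain.trans ?_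
    have e : (j.factorial : ℝ) * (B * (1/2 * T) ^ (5 * δ - 2)) / r ^ j = D * T ^ (-(3/2) : ℝ) := by
      have e1 : T ^ (-(3/2) : ℝ) = T ^ (5 * δ - 2) / (T ^ (-(5 * δ))) ^ j := by
        rw [← Real.rpow_natCast, ← Real.rpow_mul hT0.le, ← Real.rpow_sub hT0]
        congr 1
        linarith
      rw [e1, hD, hr, Real.mul_rpow (by norm_num) hT0.le, Real.mul_rpow (by norm_num) hT0.le]
      rw [← mul_assoc c, mul_pow (c * _)]
      field_simp
    rw [e]
    have a1 : T ^ (-(3/2) : ℝ) ≤ (1 + |s.im|) ^ (-(3/2) : ℝ) :=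
      Real.rpow_le_rpow_of_nonpos (by positivity) (by linarith) (by norm_num)
    have : 0 ≤ |C1| * (5:ℝ) ^ (3/2 : ℝ) := by positivity
    gcongr
    linarith

theorem mem_Kdom_line (σ t : ℝ) (h1 : 1 ≤ σ) : ((σ:ℂ) + t * Complex.I) ∈ Kdom :=
  ⟨by simp; linarith, zeta1_ne _ (by simpa using h1)⟩

theorem hasDeriv_line (σ : ℝ) (h1 : 1 ≤ σ) (n : ℕ) (t : ℝ) :
    HasDerivAt (fun t : ℝ => Complex.I ^ n * iteratedDeriv n Kfun ((σ:ℂ) + t * Complex.I))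
      (Complex.I ^ (n+1) * iteratedDeriv (n+1) Kfun ((σ:ℂ) + t * Complex.I)) t := by
  have ha := (K_analytic _ (mem_Kdom_line σ t h1)).iterated_deriv n
  rw [← iteratedDeriv_eq_iterate] at ha
  have hd := ha.differentiableAt.hasDerivAt
  rw [← iteratedDeriv_succ] at hd
  have hl : HasDerivAt (fun t : ℝ => (σ:ℂ) + t * Complex.I) Complex.I t := by
    have := ((hasDerivAt_id t).ofReal_comp.mul_const Complex.I).const_add (σ:ℂ)
    simpa using this
  have := (hd.comp t hl).const_mul (Complex.I ^ n)
  convert! this using 1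
  ring

theorem iter_line (σ : ℝ) (h1 : 1 ≤ σ) (n : ℕ) :
    iteratedDeriv n (fun t : ℝ => Kfun ((σ:ℂ) + t * Complex.I)) =
      fun t : ℝ => Complex.I ^ n * iteratedDeriv n Kfun ((σ:ℂ) + t * Complex.I) := by
  induction n with
  | zero => simp
  | succ n ih =>
    rw [iteratedDeriv_succ, ih]
    ext t
    exact (hasDeriv_line σ h1 n t).deriv

theorem K_fourier_decay (J : ℕ) : ∃ C > 0, ∀ σ : ℝ, 1 ≤ σ → σ ≤ 3/2 → ∀ w : ℝ,
    |w| ^ J * ‖∫ t : ℝ, Complex.exp (((w * t : ℝ):ℂ) * Complex.I) * Kfun ((σ:ℂ) + t * Complex.I)‖ ≤ C := by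
  obtain ⟨C, hC, hb⟩ := K_bound J
  have hint : Integrable (fun t : ℝ => (1 + ‖t‖) ^ (-(3/2) : ℝ)) := integrable_one_add_norm (by simp; norm_num)
  set M := ∫ t : ℝ, C * (1 + ‖t‖) ^ (-(3/2) : ℝ) with hM
  have hM0 : 0 ≤ M := integral_nonneg fun t => by positivity
  refine ⟨M + 1, by linarith, fun σ h1 h2 w => ?_⟩
  set f : ℝ → ℂ := fun t : ℝ => Kfun ((σ:ℂ) + t * Complex.I) with hf
  have hbd : ∀ n ≤ J, ∀ t, ‖iteratedDeriv n f t‖ ≤ C * (1 + ‖t‖) ^ (-(3/2) : ℝ) := by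
    intro n hn t
    rw [iter_line σ h1 n]
    simpa using hb n hn ((σ:ℂ) + t * Complex.I) (by simpa using h1) (by simpa using h2)
  have hdiff : ∀ n, Differentiable ℝ (iteratedDeriv n f) := by
    intro n
    rw [iter_line σ h1 n]
    exact fun t => (hasDeriv_line σ h1 n t).differentiableAt
  have hi : ∀ n ≤ J, Integrable (iteratedDeriv n f) := fun n hn =>
    (hint.const_mul C).mono' (hdiff n).continuous.aestronglyMeasurable (Eventually.of_forall (hbd n hn))
  have hcd : ContDiff ℝ ((J : ℕ∞) : WithTop ℕ∞) f := contDiff_of_differentiable_iteratedDeriv fun m _ => hdiff m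
  have hF := Real.fourier_iteratedDeriv (N := (J:ℕ∞)) (n := J) hcd (fun n hn => hi n (by exact_mod_cast hn)) le_rfl
  have hFw := congrFun hF (-(w / (2 * Real.pi)))
  have hn := congrArg norm hFw
  rw [norm_smul, norm_pow] at hn
  have e1 : ‖(2 * Real.pi * Complex.I * ((-(w / (2 * Real.pi)) : ℝ) : ℂ) : ℂ)‖ = |w| := by
    have : (2 * Real.pi * Complex.I * ((-(w / (2 * Real.pi)) : ℝ) : ℂ) : ℂ) = -(w : ℂ) * Complex.I := by
      have : (Real.pi : ℂ) ≠ 0 := by exact_mod_cast Real.pi_ne_zero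
      push_cast; field_simp
    rw [this]; simp
  rw [e1] at hn
  have e2 : FourierTransform.fourier f (-(w / (2 * Real.pi))) =
      ∫ t : ℝ, Complex.exp (((w * t : ℝ):ℂ) * Complex.I) * f t := by
    rw [Real.fourier_real_eq_integral_exp_smul]
    congr 1; ext t
    rw [smul_eq_mul]
    congr 3
    have := Real.pi_ne_zero
    field_simp
  rw [e2] at hn
  rw [← hn]
  have h3 : ‖FourierTransform.fourier (iteratedDeriv J f) (-(w / (2 * Real.pi)))‖ ≤ M := by
    rw [Real.fourier_real_eq_integral_exp_smul]
    refine (norm_integral_le_integral_norm _).trans ?_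
    refine integral_mono_of_nonneg (Eventually.of_forall fun t => norm_nonneg _) (hint.const_mul C) (Eventually.of_forall fun t => ?_)
    simp only
    rw [norm_smul, Complex.norm_exp_ofReal_mul_I, one_mul]
    exact hbd J le_rfl t
  linarith

open Filter MeasureTheory

theorem line_norm_bound (σ t : ℝ) (hσ : 1 ≤ σ) :
    ‖1 / (((σ:ℂ) + t * Complex.I) * ((σ:ℂ) + t * Complex.I + 1))‖ ≤ (1 + t ^ 2)⁻¹ := by
  set s : ℂ := (σ:ℂ) + t * Complex.I with hs
  have hre : s.re = σ := by simp [hs]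
  have him : s.im = t := by simp [hs]
  have h1 : Real.sqrt (1 + t ^ 2) ≤ ‖s‖ := by
    rw [Complex.norm_eq_sqrt_sq_add_sq, hre, him]
    gcongr; nlinarith
  have h2 : Real.sqrt (1 + t ^ 2) ≤ ‖s + 1‖ := by
    rw [Complex.norm_eq_sqrt_sq_add_sq]
    simp only [Complex.add_re, Complex.add_im, hre, him, Complex.one_re, Complex.one_im, add_zero]
    gcongr; nlinarith
  have h3 : Real.sqrt (1 + t ^ 2) * Real.sqrt (1 + t ^ 2) = 1 + t ^ 2 := Real.mul_self_sqrt (by positivity)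
  rw [norm_div, norm_mul, norm_one, one_div]
  rw [← h3]
  have : 0 < Real.sqrt (1 + t ^ 2) := Real.sqrt_pos.2 (by positivity)
  gcongr

theorem line_ne (σ t : ℝ) (hσ : 1 ≤ σ) :
    ((σ:ℂ) + t * Complex.I) * ((σ:ℂ) + t * Complex.I + 1) ≠ 0 := by
  apply mul_ne_zero
  · intro h
    have := congrArg Complex.re h
    simp at this; linarith
  · intro h
    have := congrArg Complex.re h
    simp at this; linarith

theorem line_cont (σ : ℝ) (hσ : 1 ≤ σ) :
    Continuous (fun t : ℝ => 1 / (((σ:ℂ) + t * Complex.I) * ((σ:ℂ) + t * Complex.I + 1))) := by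
  refine continuous_const.div (by fun_prop) (fun t => line_ne σ t hσ)

theorem line_integrable (σ : ℝ) (hσ : 1 ≤ σ) :
    Integrable (fun t : ℝ => 1 / (((σ:ℂ) + t * Complex.I) * ((σ:ℂ) + t * Complex.I + 1))) :=
  integrable_inv_one_add_sq.mono' (line_cont σ hσ).aestronglyMeasurable
    (Eventually.of_forall fun t => line_norm_bound σ t hσ)

noncomputable def tent (t : ℝ) : ℂ :=
  Set.indicator (Set.Ioc 0 1) (fun _ => 1 : ℝ → ℂ) t - Set.indicator (Set.Ioc 0 1) (fun t => (t:ℂ) ^ (1:ℂ) : ℝ → ℂ) t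

theorem tent_eq (y : ℝ) (hy : 0 < y) : tent y = ((max (1 - y) 0 : ℝ) : ℂ) := by
  unfold tent
  by_cases h : y ≤ 1
  · have hm : y ∈ Set.Ioc (0:ℝ) 1 := ⟨hy, h⟩
    rw [Set.indicator_of_mem hm, Set.indicator_of_mem hm, max_eq_left (by linarith)]
    simp
  · have hm : y ∉ Set.Ioc (0:ℝ) 1 := fun hh => h hh.2
    rw [Set.indicator_of_notMem hm, Set.indicator_of_notMem hm, max_eq_right (by linarith)]
    simp

theorem tent_mellin (s : ℂ) (hs : 0 < s.re) : HasMellin tent s (1 / (s * (s + 1))) := by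
  have h1 := hasMellin_one_Ioc hs
  have h2 := hasMellin_cpow_Ioc 1 (s := s) (by simp; linarith)
  have h3 := hasMellin_sub h1.1 h2.1
  rw [h1.2, h2.2] at h3
  have e : 1 / s - 1 / (s + 1) = 1 / (s * (s + 1)) := by
    have a1 : s ≠ 0 := by rintro rfl; simp at hs
    have a2 : s + 1 ≠ 0 := by
      intro h
      have := congrArg Complex.re h
      simp at this; linarith
    field_simp; ring
  rw [e] at h3
  exact h3

theorem tent_inv (σ y : ℝ) (hσ : 1 ≤ σ) (hy : 0 < y) :
    ∫ t : ℝ, (y:ℂ) ^ (-((σ:ℂ) + t * Complex.I)) * (1 / (((σ:ℂ) + t * Complex.I) * ((σ:ℂ) + t * Complex.I + 1)))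
      = 2 * Real.pi * ((max (1 - y) 0 : ℝ) : ℂ) := by
  have hm : ∀ t : ℝ, mellin tent ((σ:ℂ) + t * Complex.I) =
      1 / (((σ:ℂ) + t * Complex.I) * ((σ:ℂ) + t * Complex.I + 1)) := fun t =>
    (tent_mellin _ (by simp; linarith)).2
  have h := mellinInv_mellin_eq σ tent hy (tent_mellin σ (by simp; linarith)).1 (by
    unfold Complex.VerticalIntegrable
    simp_rw [hm]
    exact line_integrable σ hσ) (by
    have : ContinuousAt (fun y : ℝ => ((max (1 - y) 0 : ℝ) : ℂ)) y := by fun_prop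
    refine this.congr ?_
    filter_upwards [lt_mem_nhds hy] with z hz
    exact (tent_eq z hz).symm)
  rw [tent_eq y hy, mellinInv] at h
  simp_rw [hm, smul_eq_mul] at h
  rw [← h, Complex.real_smul]
  have : (Real.pi : ℂ) ≠ 0 := by exact_mod_cast Real.pi_ne_zero
  generalize (∫ t : ℝ, (y:ℂ) ^ (-((σ:ℂ) + t * Complex.I)) * (1 / (((σ:ℂ) + t * Complex.I) * ((σ:ℂ) + t * Complex.I + 1)))) = I
  push_cast
  field_simp

open ArithmeticFunction in
noncomputable def acoef (n : ℕ) : ℂ := if n = 0 then 0 else ((vonMangoldt n : ℝ) : ℂ) - 1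

open ArithmeticFunction in
theorem acoef_LSeries (s : ℂ) (hs : 1 < s.re) : LSeriesSummable acoef s ∧ LSeries acoef s = Gfun s := by
  have h1 := LSeriesSummable_vonMangoldt hs
  have h2 := LSeriesSummable_one_iff.2 hs
  have hcongr : ∀ {n : ℕ}, n ≠ 0 → ((fun n => ((vonMangoldt n : ℝ) : ℂ)) - 1) n = acoef n := by
    intro n hn
    simp [acoef, hn]
  have hs1 : s ≠ 1 := by rintro rfl; simp at hs
  refine ⟨(LSeriesSummable_congr s hcongr).1 (h1.sub h2), ?_⟩
  rw [← LSeries_congr hcongr s, LSeries_sub h1 h2, LSeries_vonMangoldt_eq_deriv_riemannZeta_div hs,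
    LSeries_one_eq_riemannZeta hs, Gfun_eq s hs1 (riemannZeta_ne_zero_of_one_le_re hs.le)]

theorem perron (σ x : ℝ) (hσ : 1 < σ) (hx : 1 ≤ x) :
    ∫ t : ℝ, (x:ℂ) ^ ((σ:ℂ) + t * Complex.I) * Kfun ((σ:ℂ) + t * Complex.I) =
      2 * Real.pi * ((∑ n ∈ Finset.Icc 1 ⌊x⌋₊, (ArithmeticFunction.vonMangoldt n - 1) * (1 - n / x) : ℝ) : ℂ) := by
  have hx0 : 0 < x := by linarith
  set F : ℕ → ℝ → ℂ := fun n t => LSeries.term acoef ((σ:ℂ) + t * Complex.I) n *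
    ((x:ℂ) ^ ((σ:ℂ) + t * Complex.I) * (1 / (((σ:ℂ) + t * Complex.I) * ((σ:ℂ) + t * Complex.I + 1)))) with hF
  have hFn : ∀ n : ℕ, n ≠ 0 → ∀ t, F n t = acoef n * ((((n:ℝ) / x : ℝ) : ℂ) ^ (-((σ:ℂ) + t * Complex.I)) *
      (1 / (((σ:ℂ) + t * Complex.I) * ((σ:ℂ) + t * Complex.I + 1)))) := by
    intro n hn t
    have e : (((n:ℝ) / x : ℝ) : ℂ) ^ (-((σ:ℂ) + t * Complex.I)) =
        (x:ℂ) ^ ((σ:ℂ) + t * Complex.I) / (n:ℂ) ^ ((σ:ℂ) + t * Complex.I) := by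
      have e0 : (((n:ℝ) / x : ℝ) : ℂ) = ((n : ℝ) : ℂ) * ((x⁻¹ : ℝ) : ℂ) := by push_cast; ring
      rw [e0, Complex.mul_cpow_ofReal_nonneg (by positivity) (by positivity), Complex.cpow_neg,
        Complex.ofReal_inv, Complex.inv_cpow _ _ (by
          rw [Complex.arg_ofReal_of_nonneg hx0.le]; exact Real.pi_ne_zero.symm), Complex.cpow_neg, inv_inv]
      push_cast; ring
    rw [e]
    simp only [hF]
    rw [LSeries.term_of_ne_zero hn]
    ring
  have hF0 : ∀ t, F 0 t = 0 := fun t => by simp [hF]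
  have hnorm : ∀ n t, ‖F n t‖ = ‖LSeries.term acoef (σ:ℂ) n‖ * (x ^ σ *
      ‖1 / (((σ:ℂ) + t * Complex.I) * ((σ:ℂ) + t * Complex.I + 1))‖) := by
    intro n t
    simp only [hF]
    rw [norm_mul, norm_mul, Complex.norm_cpow_eq_rpow_re_of_pos hx0, LSeries.norm_term_eq, LSeries.norm_term_eq]
    simp
  have hint : ∀ n, Integrable (F n) := by
    intro n
    by_cases hn : n = 0
    · subst hn
      have : F 0 = fun _ => 0 := funext hF0
      rw [this]; exact integrable_zero _ _ _
    · have hc : Continuous (F n) := by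
        have : F n = fun t => _ := funext (hFn n hn)
        rw [this]
        refine continuous_const.mul (Continuous.mul ?_ (line_cont σ hσ.le))
        have hne : (((n:ℝ) / x : ℝ) : ℂ) ≠ 0 := by
          have : (0:ℝ) < n := by positivity
          have : (n:ℝ) / x ≠ 0 := by positivity
          exact_mod_cast this
        exact Continuous.const_cpow (by fun_prop) (Or.inl hne)
      refine (((line_integrable σ hσ.le).norm.const_mul (x ^ σ)).const_mul ‖LSeries.term acoef (σ:ℂ) n‖).mono'
        hc.aestronglyMeasurable (Eventually.of_forall fun t => (hnorm n t).le)
  have hsum : Summable (fun n => ∫ t, ‖F n t‖) := by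
    simp_rw [hnorm, integral_const_mul]
    exact ((acoef_LSeries (σ:ℂ) (by simpa using hσ)).1.norm).mul_right _
  have hs := hasSum_integral_of_summable_integral_norm hint hsum
  have e1 : ∀ t : ℝ, ∑' n, F n t = (x:ℂ) ^ ((σ:ℂ) + t * Complex.I) * Kfun ((σ:ℂ) + t * Complex.I) := by
    intro t
    simp only [hF]
    rw [tsum_mul_right, Kfun, ← (acoef_LSeries ((σ:ℂ) + t * Complex.I) (by simpa using hσ)).2, LSeries]
    ring
  simp_rw [e1] at hs
  have e2 : ∀ n, ∫ t, F n t = acoef n * (2 * Real.pi * ((max (1 - (n:ℝ) / x) 0 : ℝ) : ℂ)) := by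
    intro n
    by_cases hn : n = 0
    · subst hn; simp [hF0, acoef]
    · simp_rw [hFn n hn]
      have : (0:ℝ) < n := by positivity
      rw [integral_const_mul, tent_inv σ _ hσ.le (by positivity)]
  simp_rw [e2] at hs
  have hs' : HasSum (fun n : ℕ => acoef n * (2 * Real.pi * ((max (1 - (n:ℝ) / x) 0 : ℝ) : ℂ)))
      (∑ n ∈ Finset.Icc 1 ⌊x⌋₊, acoef n * (2 * Real.pi * ((max (1 - (n:ℝ) / x) 0 : ℝ) : ℂ))) :=
    hasSum_sum_of_ne_finset_zero (by
      intro n hn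
      by_cases hn0 : n = 0
      · simp [hn0, acoef]
      · have : ⌊x⌋₊ < n := by
          by_contra h
          exact hn (Finset.mem_Icc.2 ⟨Nat.one_le_iff_ne_zero.2 hn0, not_lt.1 h⟩)
        have := (Nat.floor_lt hx0.le).1 this
        rw [max_eq_right]
        · simp
        · rw [sub_nonpos, one_le_div hx0]; exact this.le)
  rw [hs.unique hs']
  push_cast
  rw [Finset.mul_sum]
  refine Finset.sum_congr rfl fun n hn => ?_
  rw [Finset.mem_Icc] at hn
  have hnx : (n:ℝ) ≤ x := (Nat.le_floor_iff hx0.le).1 hn.2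
  have : max (1 - (n:ℝ) / x) 0 = 1 - n / x := max_eq_left (by rw [sub_nonneg, div_le_one hx0]; exact hnx)
  rw [acoef, if_neg (by omega)]
  rw [this]; push_cast; ring

theorem smooth_bound (J : ℕ) : ∃ C > 0, ∀ x : ℝ, 1 ≤ x →
    |∑ n ∈ Finset.Icc 1 ⌊x⌋₊, (ArithmeticFunction.vonMangoldt n - 1) * (1 - n / x)| * Real.log x ^ J ≤ C * x := by
  obtain ⟨C, hC, h⟩ := K_fourier_decay J
  refine ⟨C, hC, fun x hx => ?_⟩
  have hx0 : 0 < x := by linarith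
  set S := ∑ n ∈ Finset.Icc 1 ⌊x⌋₊, (ArithmeticFunction.vonMangoldt n - 1) * (1 - n / x) with hS
  have hlog : 0 ≤ Real.log x := Real.log_nonneg hx
  have key : ∀ σ : ℝ, σ ∈ Set.Ioc (1:ℝ) (3/2) → |S| * Real.log x ^ J ≤ C * x ^ σ := by
    intro σ hσ
    have hp := perron σ x hσ.1 hx
    have hf := h σ hσ.1.le hσ.2 (Real.log x)
    have e : ∀ t : ℝ, (x:ℂ) ^ ((σ:ℂ) + t * Complex.I) * Kfun ((σ:ℂ) + t * Complex.I) =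
        ((x ^ σ : ℝ) : ℂ) * (Complex.exp (((Real.log x * t : ℝ):ℂ) * Complex.I) * Kfun ((σ:ℂ) + t * Complex.I)) := by
      intro t
      rw [Complex.cpow_add _ _ (by exact_mod_cast hx0.ne'), ← Complex.ofReal_cpow hx0.le,
        Complex.cpow_def_of_ne_zero (by exact_mod_cast hx0.ne') (t * Complex.I), ← Complex.ofReal_log hx0.le,
        mul_assoc]
      congr 3
      push_cast; ring
    simp_rw [e] at hp
    rw [integral_const_mul] at hp
    have hn := congrArg norm hp
    rw [norm_mul, norm_mul, Complex.norm_real, Complex.norm_real, Real.norm_of_nonneg (by positivity : 0 ≤ x ^ σ), Real.norm_eq_abs] at hn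
    have h2pi : ‖(2 * Real.pi : ℂ)‖ = 2 * Real.pi := by
      simp [Real.pi_pos.le]
    rw [h2pi] at hn
    rw [abs_of_nonneg hlog] at hf
    set I := ‖∫ t : ℝ, Complex.exp (((Real.log x * t : ℝ):ℂ) * Complex.I) * Kfun ((σ:ℂ) + t * Complex.I)‖
    have hpi : 1 ≤ 2 * Real.pi := by linarith [Real.pi_gt_three]
    have h0 : 0 ≤ |S| * Real.log x ^ J := by positivity
    calc |S| * Real.log x ^ J ≤ 2 * Real.pi * (|S| * Real.log x ^ J) := by nlinarith
      _ = x ^ σ * (Real.log x ^ J * I) := by linear_combination (-Real.log x ^ J) * hn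
      _ ≤ x ^ σ * C := by gcongr
      _ = C * x ^ σ := by ring
  have ht : Tendsto (fun σ : ℝ => C * x ^ σ) (nhdsWithin 1 (Set.Ioi 1)) (nhds (C * x ^ (1:ℝ))) := by
    refine Tendsto.mono_left ?_ nhdsWithin_le_nhds
    exact ((Real.continuous_const_rpow hx0.ne').tendsto 1).const_mul C
  rw [Real.rpow_one] at ht
  refine ge_of_tendsto ht ?_
  filter_upwards [Ioc_mem_nhdsGT (by norm_num : (1:ℝ) < 3/2)] with σ hσ
  exact key σ hσ

open Filter MeasureTheory

noncomputable def Fs (x : ℝ) : ℝ := ∑ n ∈ Finset.Icc 1 ⌊x⌋₊, ArithmeticFunction.vonMangoldt n * (x - n)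

theorem Fs_max (y : ℝ) (hy : 0 ≤ y) (M : ℕ) (hM : ⌊y⌋₊ ≤ M) :
    Fs y = ∑ n ∈ Finset.Icc 1 M, ArithmeticFunction.vonMangoldt n * max (y - n) 0 := by
  unfold Fs
  rw [← Finset.sum_subset (Finset.Icc_subset_Icc_right hM)]
  · refine Finset.sum_congr rfl fun n hn => ?_
    rw [Finset.mem_Icc] at hn
    have := (Nat.le_floor_iff hy).1 hn.2
    rw [max_eq_left (by linarith)]
  · intro n hn hn'
    rw [Finset.mem_Icc] at hn hn'
    have : ⌊y⌋₊ < n := by omega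
    have := (Nat.floor_lt hy).1 this
    rw [max_eq_right (by linarith), mul_zero]

theorem psi_Icc (x : ℝ) : Chebyshev.psi x = ∑ n ∈ Finset.Icc 1 ⌊x⌋₊, ArithmeticFunction.vonMangoldt n := by
  rfl

theorem Fs_subgrad (x y : ℝ) (hy : 0 ≤ y) : Fs x + (y - x) * Chebyshev.psi x ≤ Fs y := by
  rw [Fs_max y hy (max ⌊x⌋₊ ⌊y⌋₊) (le_max_right _ _), psi_Icc, Fs, Finset.mul_sum, ← Finset.sum_add_distrib]
  calc _ ≤ ∑ n ∈ Finset.Icc 1 ⌊x⌋₊, ArithmeticFunction.vonMangoldt n * max (y - n) 0 := by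
        refine Finset.sum_le_sum fun n hn => ?_
        have h1 : (0:ℝ) ≤ ArithmeticFunction.vonMangoldt n := ArithmeticFunction.vonMangoldt_nonneg
        have h2 : y - n ≤ max (y - n) 0 := le_max_left _ _
        nlinarith
    _ ≤ _ := by
        refine Finset.sum_le_sum_of_subset_of_nonneg (Finset.Icc_subset_Icc_right (le_max_left _ _)) fun n _ _ => ?_
        exact mul_nonneg ArithmeticFunction.vonMangoldt_nonneg (le_max_right _ _)

theorem sum_lin (x : ℝ) (hx : 1 ≤ x) : |∑ n ∈ Finset.Icc 1 ⌊x⌋₊, (x - n) - x ^ 2 / 2| ≤ x := by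
  have h : ∀ N : ℕ, ∑ n ∈ Finset.Icc 1 N, (x - n) = N * x - N * (N + 1) / 2 := by
    intro N
    induction N with
    | zero => simp
    | succ k ih => rw [Finset.sum_Icc_succ_top (by omega), ih]; push_cast; ring
  rw [h]
  have h1 := Nat.floor_le (by linarith : 0 ≤ x)
  have h2 := Nat.lt_floor_add_one x
  set N : ℝ := (⌊x⌋₊ : ℝ)
  rw [abs_le]; constructor <;> nlinarith

theorem Fs_asymp : ∃ C > 0, ∀ x : ℝ, 1 ≤ x → |Fs x - x ^ 2 / 2| * Real.log x ^ 6 ≤ C * x ^ 2 := by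
  obtain ⟨C, hC, h⟩ := smooth_bound 6
  refine ⟨C + 6 ^ 6, by positivity, fun x hx => ?_⟩
  have hx0 : 0 < x := by linarith
  have hlog : 0 ≤ Real.log x := Real.log_nonneg hx
  have e : Fs x = x * ∑ n ∈ Finset.Icc 1 ⌊x⌋₊, (ArithmeticFunction.vonMangoldt n - 1) * (1 - n / x)
      + ∑ n ∈ Finset.Icc 1 ⌊x⌋₊, (x - n) := by
    rw [Fs, Finset.mul_sum, ← Finset.sum_add_distrib]
    refine Finset.sum_congr rfl fun n hn => ?_
    field_simp; ring
  have h1 := h x hx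
  have h2 := sum_lin x hx
  have h3 : Real.log x ^ 6 ≤ 6 ^ 6 * x := by
    have := Real.log_le_rpow_div hx0.le (by norm_num : (0:ℝ) < 1/6)
    have h4 : Real.log x ≤ 6 * x ^ (1/6:ℝ) := by linarith
    calc Real.log x ^ 6 ≤ (6 * x ^ (1/6:ℝ)) ^ 6 := by gcongr
      _ = 6 ^ 6 * x := by
        rw [mul_pow, ← Real.rpow_natCast (x ^ _), ← Real.rpow_mul hx0.le]; norm_num
  rw [e]
  set S := ∑ n ∈ Finset.Icc 1 ⌊x⌋₊, (ArithmeticFunction.vonMangoldt n - 1) * (1 - n / x)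
  set T := ∑ n ∈ Finset.Icc 1 ⌊x⌋₊, (x - (n:ℝ))
  have h5 : |x * S + T - x ^ 2 / 2| ≤ x * |S| + x := by
    calc |x * S + T - x ^ 2 / 2| = |x * S + (T - x ^ 2 / 2)| := by ring_nf
      _ ≤ |x * S| + |T - x ^ 2 / 2| := abs_add_le _ _
      _ ≤ _ := by rw [abs_mul, abs_of_pos hx0]; gcongr
  have : 0 ≤ Real.log x ^ 6 := by positivity
  calc _ ≤ (x * |S| + x) * Real.log x ^ 6 := by gcongr
    _ = x * (|S| * Real.log x ^ 6) + x * Real.log x ^ 6 := by ring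
    _ ≤ x * (C * x) + x * (6 ^ 6 * x) := by gcongr
    _ = _ := by ring

theorem psi_asymp : ∃ C > 0, ∀ x : ℝ, 8 ≤ x → |Chebyshev.psi x - x| ≤ C * (x / Real.log x ^ 3) := by
  obtain ⟨C, hC, h⟩ := Fs_asymp
  refine ⟨1 + 512 * C, by positivity, fun x hx => ?_⟩
  have hx0 : 0 < x := by linarith
  set L := Real.log x with hL
  have hL2 : 2 ≤ L := by
    rw [hL, Real.le_log_iff_exp_le hx0]
    have := Real.exp_one_lt_d9
    have e : Real.exp 2 = Real.exp 1 * Real.exp 1 := by rw [← Real.exp_add]; norm_num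
    rw [e]
    nlinarith [Real.exp_pos 1]
  have hz : ∀ z, x / 2 ≤ z → z ≤ 2 * x → |Fs z - z ^ 2 / 2| ≤ 256 * C * x ^ 2 / L ^ 6 := by
    intro z hz1 hz2
    have h1 := h z (by linarith)
    have hlz : L / 2 ≤ Real.log z := by
      have : Real.log (x / 2) ≤ Real.log z := Real.log_le_log (by positivity) hz1
      rw [Real.log_div hx0.ne' (by norm_num)] at this
      have := Real.log_two_lt_d9
      linarith
    rw [le_div_iff₀ (by positivity)]
    calc |Fs z - z ^ 2 / 2| * L ^ 6 = 64 * (|Fs z - z ^ 2 / 2| * (L / 2) ^ 6) := by ring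
      _ ≤ 64 * (|Fs z - z ^ 2 / 2| * Real.log z ^ 6) := by gcongr
      _ ≤ 64 * (C * z ^ 2) := by gcongr
      _ ≤ 64 * (C * (2 * x) ^ 2) := by
        have : 0 ≤ z := by linarith
        gcongr
      _ = _ := by ring
  set h' := x / L ^ 3 with hh
  have hL3 : 8 ≤ L ^ 3 := by
    calc (8:ℝ) = 2 ^ 3 := by norm_num
      _ ≤ L ^ 3 := by gcongr
  have hpos : 0 < h' := by positivity
  have hle : h' ≤ x / 8 := by rw [hh]; gcongr
  have eq : 256 * C * x ^ 2 / L ^ 6 = 256 * C * h' ^ 2 := by rw [hh]; field_simp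
  have a0 := hz x (by linarith) (by linarith)
  have a1 := hz (x + h') (by linarith) (by linarith)
  have a2 := hz (x - h') (by linarith) (by linarith)
  have s1 := Fs_subgrad x (x + h') (by linarith)
  have s2 := Fs_subgrad x (x - h') (by linarith)
  rw [eq, abs_le] at a0 a1 a2
  set P := Chebyshev.psi x
  rw [abs_le]
  constructor
  · have : h' * (-((1 + 512 * C) * h')) ≤ h' * (P - x) := by nlinarith [sq_nonneg h']
    exact le_of_mul_le_mul_left this hpos
  · have : h' * (P - x) ≤ h' * ((1 + 512 * C) * h') := by nlinarith [sq_nonneg h']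
    exact le_of_mul_le_mul_left this hpos

theorem theta_asymp : ∃ C > 0, ∀ x : ℝ, 8 ≤ x → |Chebyshev.theta x - x| ≤ C * (x / Real.log x ^ 3) := by
  obtain ⟨C, hC, h⟩ := psi_asymp
  refine ⟨C + 2 * 8 ^ 4, by positivity, fun x hx => ?_⟩
  have hx0 : 0 < x := by linarith
  have hlog : 0 < Real.log x := Real.log_pos (by linarith)
  have h1 := h x hx
  have h2 := Chebyshev.psi_sub_theta_le (by linarith : 1 ≤ x)
  have h3 := Chebyshev.theta_le_psi x
  have h4 : Real.sqrt x * Real.log x ≤ 8 ^ 4 * (x / Real.log x ^ 3) := by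
    rw [← mul_div_assoc, le_div_iff₀ (by positivity)]
    have := Real.log_le_rpow_div hx0.le (by norm_num : (0:ℝ) < 1/8)
    have h4 : Real.log x ≤ 8 * x ^ (1/8:ℝ) := by linarith
    calc Real.sqrt x * Real.log x * Real.log x ^ 3 = Real.sqrt x * Real.log x ^ 4 := by ring
      _ ≤ Real.sqrt x * (8 * x ^ (1/8:ℝ)) ^ 4 := by gcongr
      _ = 8 ^ 4 * (Real.sqrt x * Real.sqrt x) := by
        rw [mul_pow, ← Real.rpow_natCast (x ^ _), ← Real.rpow_mul hx0.le, Real.sqrt_eq_rpow]; norm_num; ring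
      _ = 8 ^ 4 * x := by rw [Real.mul_self_sqrt hx0.le]
  rw [abs_le] at h1 ⊢
  constructor <;> nlinarith

open Filter MeasureTheory

theorem inv_log_cont (k : ℕ) {a b : ℝ} (ha : 1 < a) (hb : 1 < b) :
    IntervalIntegrable (fun x ↦ 1 / Real.log x ^ k) volume a b := by
  refine ContinuousOn.intervalIntegrable fun x hx ↦ ContinuousAt.continuousWithinAt ?_
  rw [Set.mem_uIcc] at hx
  have : x ≠ 0 := by grind
  have : Real.log x ^ k ≠ 0 := pow_ne_zero _ (Real.log_ne_zero.mpr (by grind))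
  fun_prop

theorem li_parts {a b : ℝ} (ha : 1 < a) (hab : a ≤ b) :
    ∫ u in a..b, 1 / Real.log u = b / Real.log b - a / Real.log a + ∫ u in a..b, 1 / Real.log u ^ 2 := by
  have hb : 1 < b := by linarith
  have i1 := inv_log_cont 1 ha hb
  have i2 := inv_log_cont 2 ha hb
  simp only [pow_one] at i1
  have h := intervalIntegral.integral_eq_sub_of_hasDerivAt (a := a) (b := b)
    (f := fun u => u / Real.log u) (f' := fun u => 1 / Real.log u - 1 / Real.log u ^ 2) (by
      intro u hu
      rw [Set.uIcc_of_le hab] at hu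
      have hu1 : 1 < u := by linarith [hu.1]
      have hl : Real.log u ≠ 0 := (Real.log_pos hu1).ne'
      have := (hasDerivAt_id u).div (Real.hasDerivAt_log (by linarith : u ≠ 0)) hl
      refine HasDerivAt.congr_deriv this ?_
      have : u ≠ 0 := by linarith
      simp only [id]
      field_simp) (i1.sub i2)
  rw [intervalIntegral.integral_sub i1 i2] at h
  linarith

theorem pi_diff : ∃ C > 0, ∀ a b : ℝ, 8 ≤ a → a ≤ b →
    |(Nat.primeCounting ⌊b⌋₊ : ℝ) - Nat.primeCounting ⌊a⌋₊ - ∫ u in a..b, 1 / Real.log u| ≤ C * (b / Real.log a ^ 3) := by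
  obtain ⟨C, hC, h⟩ := theta_asymp
  refine ⟨3 * C, by positivity, fun a b ha hab => ?_⟩
  have hb : 8 ≤ b := by linarith
  have hl1 : 1 ≤ Real.log a := by
    rw [Real.le_log_iff_exp_le (by linarith)]
    linarith [Real.exp_one_lt_d9]
  have hlab : Real.log a ≤ Real.log b := Real.log_le_log (by linarith) hab
  rw [li_parts (by linarith) hab, Chebyshev.primeCounting_eq_theta_div_log_add_integral (by linarith : 2 ≤ b),
    Chebyshev.primeCounting_eq_theta_div_log_add_integral (by linarith : 2 ≤ a)]
  have it : ∀ c d : ℝ, 2 ≤ c → c ≤ d → IntervalIntegrable (fun t ↦ Chebyshev.theta t / (t * Real.log t ^ 2)) volume c d := by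
    intro c d hc hcd
    rw [intervalIntegrable_iff_integrableOn_Icc_of_le hcd]
    exact (Chebyshev.integrableOn_theta_div_id_mul_log_sq d).mono_set (Set.Icc_subset_Icc_left hc)
  have hadd := intervalIntegral.integral_add_adjacent_intervals (it 2 a le_rfl (by linarith)) (it a b (by linarith) hab)
  rw [← hadd]
  have hsub := intervalIntegral.integral_sub (it a b (by linarith) hab) (inv_log_cont 2 (by linarith : 1 < a) (by linarith : 1 < b))
  have e : Chebyshev.theta b / Real.log b + ((∫ t in 2..a, Chebyshev.theta t / (t * Real.log t ^ 2)) +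
      ∫ t in a..b, Chebyshev.theta t / (t * Real.log t ^ 2)) -
      (Chebyshev.theta a / Real.log a + ∫ t in 2..a, Chebyshev.theta t / (t * Real.log t ^ 2)) -
      (b / Real.log b - a / Real.log a + ∫ u in a..b, 1 / Real.log u ^ 2) =
      (Chebyshev.theta b - b) / Real.log b - (Chebyshev.theta a - a) / Real.log a +
      ∫ t in a..b, (Chebyshev.theta t / (t * Real.log t ^ 2) - 1 / Real.log t ^ 2) := by
    rw [hsub]; ring
  rw [e]
  have pt : ∀ t, a ≤ t → |Chebyshev.theta t - t| ≤ C * (t / Real.log a ^ 3) := by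
    intro t ht
    refine (h t (by linarith)).trans ?_
    have : Real.log a ≤ Real.log t := Real.log_le_log (by linarith) ht
    have : 0 < t := by linarith
    gcongr
  have b1 : ∀ t, a ≤ t → |(Chebyshev.theta t - t) / Real.log t| ≤ C * (t / Real.log a ^ 3) := by
    intro t ht
    have : Real.log a ≤ Real.log t := Real.log_le_log (by linarith) ht
    rw [abs_div, abs_of_pos (by linarith : 0 < Real.log t)]
    exact (div_le_self (abs_nonneg _) (by linarith)).trans (pt t ht)
  have b2 : ‖∫ t in a..b, (Chebyshev.theta t / (t * Real.log t ^ 2) - 1 / Real.log t ^ 2)‖ ≤ C / Real.log a ^ 3 * |b - a| := by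
    refine intervalIntegral.norm_integral_le_of_norm_le_const fun t ht => ?_
    rw [Set.uIoc_of_le hab] at ht
    have ht0 : 0 < t := by linarith [ht.1]
    have hlt : Real.log a ≤ Real.log t := Real.log_le_log (by linarith) ht.1.le
    have : 1 ≤ Real.log t := by linarith
    have e2 : Chebyshev.theta t / (t * Real.log t ^ 2) - 1 / Real.log t ^ 2 = (Chebyshev.theta t - t) / (t * Real.log t ^ 2) := by
      field_simp
    rw [e2, Real.norm_eq_abs, abs_div, abs_of_pos (by positivity : 0 < t * Real.log t ^ 2), div_le_iff₀ (by positivity)]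
    refine (pt t ht.1.le).trans ?_
    have h1 : 1 ≤ Real.log t ^ 2 := one_le_pow₀ this
    have h2 : 0 ≤ C / Real.log a ^ 3 * t := by positivity
    calc C * (t / Real.log a ^ 3) = C / Real.log a ^ 3 * t * 1 := by ring
      _ ≤ C / Real.log a ^ 3 * t * Real.log t ^ 2 := by gcongr
      _ = _ := by ring
  have b3 : C / Real.log a ^ 3 * |b - a| ≤ C * (b / Real.log a ^ 3) := by
    rw [abs_of_nonneg (by linarith)]
    calc C / Real.log a ^ 3 * (b - a) ≤ C / Real.log a ^ 3 * b := by
          have : b - a ≤ b := by linarith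
          gcongr
      _ = _ := by ring
  have b4 : C * (a / Real.log a ^ 3) ≤ C * (b / Real.log a ^ 3) := by gcongr
  have c1 := b1 b hab
  have c2 := b1 a le_rfl
  rw [Real.norm_eq_abs] at b2
  rw [abs_le] at *
  constructor <;> linarith

open Filter MeasureTheory

theorem euler_est (z : ℝ) (hz : 1 ≤ z) :
    |((harmonic ⌊z⌋₊ : ℚ) : ℝ) - Real.log z - ⌊z⌋₊ / z - (Real.eulerMascheroniConstant - 1)| ≤ 2 / z := by
  have hz0 : 0 < z := by linarith
  set M := ⌊z⌋₊ with hM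
  have hM1 : 1 ≤ M := Nat.le_floor (by simpa using hz)
  have h1 : (M:ℝ) ≤ z := Nat.floor_le hz0.le
  have h2 : z < M + 1 := Nat.lt_floor_add_one z
  have hM1' : (1:ℝ) ≤ M := by exact_mod_cast hM1
  have a1 := Real.eulerMascheroniSeq_lt_eulerMascheroniConstant M
  have a2 := Real.eulerMascheroniConstant_lt_eulerMascheroniSeq' M
  rw [Real.eulerMascheroniSeq] at a1
  rw [Real.eulerMascheroniSeq', if_neg (by omega)] at a2
  have l1 : Real.log (M + 1) - Real.log z ≤ 1 / z := by
    rw [← Real.log_div (by positivity) hz0.ne']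
    refine (Real.log_le_sub_one_of_pos (by positivity)).trans ?_
    rw [sub_le_iff_le_add, div_le_iff₀ hz0]
    field_simp; linarith
  have l2 : Real.log z - Real.log M ≤ 2 / z := by
    rw [← Real.log_div (by positivity) (by positivity)]
    refine (Real.log_le_sub_one_of_pos (by positivity)).trans ?_
    rw [sub_le_iff_le_add, div_le_iff₀ (by positivity), add_mul, div_mul_eq_mul_div]
    have : 1 ≤ 2 * (M:ℝ) / z := by rw [le_div_iff₀ hz0]; linarith
    linarith
  have l3 : (M:ℝ) / z ≤ 1 := by rw [div_le_one hz0]; exact h1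
  have l4 : 1 - 1 / z ≤ (M:ℝ) / z := by
    rw [le_div_iff₀ hz0, sub_mul]; field_simp; linarith
  have l5 : 2 / z = 1 / z + 1 / z := by ring
  rw [abs_le]
  constructor <;> linarith

theorem floor_swap (x y : ℝ) (hy : 0 < y) (hyx : y ≤ x) (w : ℝ → ℝ) (hw : ContinuousOn w (Set.Icc y x)) :
    ∑ m ∈ Finset.Icc 1 ⌊x / y⌋₊, ∫ u in y..(x / m), w u = ∫ u in y..x, (⌊x / u⌋₊ : ℝ) * w u ∧
    IntervalIntegrable (fun u => (⌊x / u⌋₊ : ℝ) * w u) volume y x := by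
  have hx0 : 0 < x := by linarith
  have hwi : IntegrableOn w (Set.Ioc y x) := (hw.integrableOn_Icc).mono_set Set.Ioc_subset_Icc_self
  have e : ∀ u ∈ Set.Ioc y x, (⌊x / u⌋₊ : ℝ) * w u =
      ∑ m ∈ Finset.Icc 1 ⌊x / y⌋₊, Set.indicator (Set.Iic (x / m)) w u := by
    intro u hu
    have hu0 : 0 < u := by linarith [hu.1]
    have hsub : Finset.Icc 1 ⌊x / u⌋₊ ⊆ Finset.Icc 1 ⌊x / y⌋₊ := by
      refine Finset.Icc_subset_Icc_right (Nat.floor_mono ?_)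
      have := hu.1.le
      gcongr
    rw [← Finset.sum_subset hsub]
    · rw [Finset.sum_congr rfl (g := fun _ => w u)]
      · simp
      · intro m hm
        rw [Finset.mem_Icc] at hm
        have hm0 : (0:ℝ) < m := by exact_mod_cast hm.1
        rw [Set.indicator_of_mem]
        have := (Nat.le_floor_iff (by positivity)).1 hm.2
        rw [le_div_iff₀ hu0] at this
        rw [Set.mem_Iic, le_div_iff₀ hm0]; linarith
    · intro m hm hm'
      rw [Finset.mem_Icc] at hm hm'
      have hm0 : (0:ℝ) < m := by exact_mod_cast hm.1
      rw [Set.indicator_of_notMem]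
      intro h
      rw [Set.mem_Iic, le_div_iff₀ hm0] at h
      exact hm' ⟨hm.1, Nat.le_floor (by rw [le_div_iff₀ hu0]; linarith)⟩
  have hi : ∀ m ∈ Finset.Icc 1 ⌊x / y⌋₊, Integrable (Set.indicator (Set.Iic (x / m)) w) (volume.restrict (Set.Ioc y x)) := by
    intro m hm
    exact Integrable.indicator hwi measurableSet_Iic
  constructor
  · rw [intervalIntegral.integral_of_le hyx, setIntegral_congr_fun measurableSet_Ioc e, integral_finsetSum _ hi]
    refine Finset.sum_congr rfl fun m hm => ?_
    rw [Finset.mem_Icc] at hm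
    have hm0 : (1:ℝ) ≤ m := by exact_mod_cast hm.1
    have hm2 := (Nat.le_floor_iff (by positivity)).1 hm.2
    have h1 : y ≤ x / m := by
      rw [le_div_iff₀ hy] at hm2
      rw [le_div_iff₀ (by linarith)]; linarith
    have h2 : x / m ≤ x := div_le_self hx0.le hm0
    rw [intervalIntegral.integral_of_le h1, setIntegral_indicator measurableSet_Iic]
    congr 2
    ext u
    simp only [Set.mem_Ioc, Set.mem_inter_iff, Set.mem_Iic]
    constructor
    · rintro ⟨a, b⟩; exact ⟨⟨a, b.trans h2⟩, b⟩
    · rintro ⟨⟨a, _⟩, b⟩; exact ⟨a, b⟩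
  · rw [intervalIntegrable_iff_integrableOn_Ioc_of_le hyx]
    exact Integrable.congr (integrable_finsetSum _ hi) (by
      refine (ae_restrict_iff' measurableSet_Ioc).2 (Eventually.of_forall fun u hu => ?_)
      exact (e u hu).symm)

theorem main_sum (x y : ℝ) (hy : 8 ≤ y) (hyx : y ≤ x) :
    |(∑ m ∈ Finset.Icc 1 ⌊x / y⌋₊, ∫ u in y..(x / m), 1 / Real.log u) -
      x * (Real.log (Real.log x / Real.log y) +
        (((harmonic ⌊x / y⌋₊ : ℚ) : ℝ) - Real.log (x / y) - ⌊x / y⌋₊ / (x / y)) / Real.log x)|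
      ≤ x / (Real.log x * Real.log y) := by
  have hx0 : 0 < x := by linarith
  have hy0 : 0 < y := by linarith
  have hly : 0 < Real.log y := Real.log_pos (by linarith)
  have hlx : 0 < Real.log x := Real.log_pos (by linarith)
  set w : ℝ → ℝ := fun u => 1 / Real.log u - 1 / Real.log x with hw
  have hlu : ∀ u ∈ Set.Icc y x, 0 < Real.log u := fun u hu => Real.log_pos (by linarith [hu.1])
  have hc1 : ContinuousOn (fun u => 1 / Real.log u) (Set.Icc y x) := by
    refine ContinuousOn.div continuousOn_const (Real.continuousOn_log.mono ?_) fun u hu => (hlu u hu).ne'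
    intro u hu
    simp only [Set.mem_compl_iff, Set.mem_singleton_iff]
    linarith [hu.1]
  have hcw : ContinuousOn w (Set.Icc y x) := hc1.sub continuousOn_const
  obtain ⟨hs, hsi⟩ := floor_swap x y hy0 hyx w hcw
  have hsplit : ∑ m ∈ Finset.Icc 1 ⌊x / y⌋₊, ∫ u in y..(x / m), 1 / Real.log u =
      ∑ m ∈ Finset.Icc 1 ⌊x / y⌋₊, (∫ u in y..(x / m), w u) +
        (x * ((harmonic ⌊x / y⌋₊ : ℚ) : ℝ) - ⌊x / y⌋₊ * y) / Real.log x := by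
    have e1 : (x * ((harmonic ⌊x / y⌋₊ : ℚ) : ℝ) - ⌊x / y⌋₊ * y) / Real.log x =
        ∑ m ∈ Finset.Icc 1 ⌊x / y⌋₊, (x / m - y) / Real.log x := by
      rw [← Finset.sum_div, Finset.sum_sub_distrib, harmonic_eq_sum_Icc]
      push_cast
      rw [Finset.mul_sum]
      simp [div_eq_mul_inv]
    rw [e1, ← Finset.sum_add_distrib]
    refine Finset.sum_congr rfl fun m hm => ?_
    rw [Finset.mem_Icc] at hm
    have hm0 : (1:ℝ) ≤ m := by exact_mod_cast hm.1
    have hm2 := (Nat.le_floor_iff (by positivity)).1 hm.2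
    have h1 : y ≤ x / m := by
      rw [le_div_iff₀ hy0] at hm2
      rw [le_div_iff₀ (by linarith)]; linarith
    have h2 : x / m ≤ x := div_le_self hx0.le hm0
    have hii : IntervalIntegrable (fun u => 1 / Real.log u) volume y (x / m) := by
      refine ContinuousOn.intervalIntegrable ?_
      rw [Set.uIcc_of_le h1]
      exact hc1.mono (Set.Icc_subset_Icc_right h2)
    simp only [hw]
    rw [intervalIntegral.integral_sub hii intervalIntegrable_const, intervalIntegral.integral_const, smul_eq_mul]
    ring
  have hxu : ContinuousOn (fun u => x / u) (Set.Icc y x) :=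
    continuousOn_const.div continuousOn_id fun u hu => by linarith [hu.1]
  have ixu : IntervalIntegrable (fun u => x / u * w u) volume y x := by
    refine ContinuousOn.intervalIntegrable ?_
    rw [Set.uIcc_of_le hyx]
    exact hxu.mul hcw
  have hmain : ∫ u in y..x, x / u * w u = x * Real.log (Real.log x / Real.log y) - x * Real.log (x / y) / Real.log x := by
    have := intervalIntegral.integral_eq_sub_of_hasDerivAt (a := y) (b := x)
      (f := fun u => x * Real.log (Real.log u) - x / Real.log x * Real.log u) (f' := fun u => x / u * w u) (by
        intro u hu
        rw [Set.uIcc_of_le hyx] at hu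
        have hu0 : u ≠ 0 := by linarith [hu.1]
        have hl := (hlu u hu).ne'
        have d1 := Real.hasDerivAt_log hu0
        have d2 := ((d1.log hl).const_mul x).sub (d1.const_mul (x / Real.log x))
        refine HasDerivAt.congr_deriv d2 ?_
        simp only [hw]; field_simp) ixu
    rw [this, Real.log_div hlx.ne' hly.ne', Real.log_div hx0.ne' hy0.ne']
    ring
  have hdiff : |(∫ u in y..x, (⌊x / u⌋₊ : ℝ) * w u) - ∫ u in y..x, x / u * w u| ≤ x / (Real.log x * Real.log y) := by
    rw [← intervalIntegral.integral_sub hsi ixu]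
    have hF := intervalIntegral.integral_eq_sub_of_hasDerivAt (a := y) (b := x)
      (f := fun u => u * (Real.log x - Real.log u) + u) (f' := fun u => Real.log x - Real.log u) (by
        intro u hu
        rw [Set.uIcc_of_le hyx] at hu
        have hu0 : u ≠ 0 := by linarith [hu.1]
        have d1 := Real.hasDerivAt_log hu0
        have d2 := ((hasDerivAt_id u).mul (d1.const_sub (Real.log x))).add (hasDerivAt_id u)
        refine HasDerivAt.congr_deriv d2 ?_
        simp only [id]; field_simp; ring) (by
        refine ContinuousOn.intervalIntegrable ?_
        rw [Set.uIcc_of_le hyx]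
        refine continuousOn_const.sub (Real.continuousOn_log.mono ?_)
        intro u hu
        simp only [Set.mem_compl_iff, Set.mem_singleton_iff]
        linarith [hu.1])
    have ib : IntervalIntegrable (fun u => (Real.log x - Real.log u) / (Real.log x * Real.log y)) volume y x := by
      refine ContinuousOn.intervalIntegrable ?_
      rw [Set.uIcc_of_le hyx]
      refine (continuousOn_const.sub (Real.continuousOn_log.mono ?_)).div_const _
      intro u hu
      simp only [Set.mem_compl_iff, Set.mem_singleton_iff]
      linarith [hu.1]
    have hb := intervalIntegral.norm_integral_le_of_norm_le (f := fun u => (⌊x / u⌋₊ : ℝ) * w u - x / u * w u) hyx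
      (Eventually.of_forall (fun u hu => by
        have hu0 : 0 < u := by linarith [hu.1]
        have hl : 0 < Real.log u := hlu u ⟨hu.1.le, hu.2⟩
        have hlyu : Real.log y ≤ Real.log u := Real.log_le_log hy0 hu.1.le
        have hlux : Real.log u ≤ Real.log x := Real.log_le_log hu0 hu.2
        have hw0 : w u = (Real.log x - Real.log u) / (Real.log x * Real.log u) := by
          simp only [hw]; field_simp
        have hw1 : w u ≤ (Real.log x - Real.log u) / (Real.log x * Real.log y) := by
          rw [hw0]
          have : 0 ≤ Real.log x - Real.log u := by linarith
          gcongr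
        have hw2 : 0 ≤ w u := by
          rw [hw0]
          have : 0 ≤ Real.log x - Real.log u := by linarith
          positivity
        have f1 := Nat.floor_le (by positivity : 0 ≤ x / u)
        have f2 := Nat.lt_floor_add_one (x / u)
        rw [Real.norm_eq_abs, abs_le]
        constructor <;> nlinarith)) ib
    rw [Real.norm_eq_abs] at hb
    refine hb.trans ?_
    rw [intervalIntegral.integral_div, hF]
    have : 0 ≤ Real.log x - Real.log y := by linarith [Real.log_le_log hy0 hyx]
    gcongr
    nlinarith
  rw [hsplit, hs]
  rw [hmain] at hdiff
  convert hdiff using 2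
  have : (⌊x / y⌋₊ : ℝ) / (x / y) = ⌊x / y⌋₊ * y / x := by field_simp
  rw [this]
  field_simp
  ring

open Filter Real MeasureTheory
open scoped Classical

noncomputable def Phi (x y : ℝ) : ℕ :=
  ((Finset.Icc 1 ⌊x⌋₊).filter (fun n => y < (largestPrimeFactor n : ℝ))).card

theorem lpf_iff (n : ℕ) (hn : 1 ≤ n) (y : ℝ) (hy : 1 ≤ y) :
    y < (largestPrimeFactor n : ℝ) ↔ ∃ p, p.Prime ∧ p ∣ n ∧ y < (p:ℝ) := by
  unfold largestPrimeFactor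
  split_ifs with h
  · have : n = 1 := by omega
    subst this
    constructor
    · intro h; push_cast at h; linarith
    · rintro ⟨p, hp, hd, _⟩
      exact absurd (Nat.dvd_one.1 hd) hp.ne_one
  · constructor
    · intro hlt
      have hne : n.primeFactors.Nonempty := Nat.nonempty_primeFactors.2 (by omega)
      obtain ⟨p, hp, he⟩ := Finset.exists_mem_eq_sup n.primeFactors hne id
      rw [he] at hlt
      exact ⟨p, Nat.prime_of_mem_primeFactors hp, Nat.dvd_of_mem_primeFactors hp, hlt⟩
    · rintro ⟨p, hp, hd, hlt⟩
      have : p ≤ n.primeFactors.sup id := Finset.le_sup (f := id) (Nat.mem_primeFactors.2 ⟨hp, hd, by omega⟩)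
      exact hlt.trans_le (by exact_mod_cast this)

theorem card_primes_Ioc (a b : ℕ) (hab : a ≤ b) :
    (((Finset.Ioc a b).filter Nat.Prime).card : ℝ) = Nat.primeCounting b - Nat.primeCounting a := by
  induction b, hab using Nat.le_induction with
  | base => simp
  | succ k hk ih =>
    rw [← Finset.insert_Ioc_right_eq_Ioc_add_one (by omega), Finset.filter_insert]
    have : (Nat.primeCounting (k+1)) = Nat.primeCounting k + if Nat.Prime (k+1) then 1 else 0 := by
      unfold Nat.primeCounting Nat.primeCounting'
      rw [Nat.count_succ]
    rw [this]
    split_ifs with h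
    · rw [Finset.card_insert_of_notMem (by simp)]
      push_cast; linarith
    · push_cast; linarith

theorem Phi_eq (x y : ℝ) (hy : 1 ≤ y) (hyx : y ≤ x) (hx : x ≤ y ^ 2) :
    (Phi x y : ℝ) = ∑ m ∈ Finset.Icc 1 ⌊x / y⌋₊, ((Nat.primeCounting ⌊x / m⌋₊ : ℝ) - Nat.primeCounting ⌊y⌋₊) := by
  have hx0 : 0 < x := by linarith
  have hy0 : 0 < y := by linarith
  have e : ∀ m ∈ Finset.Icc 1 ⌊x / y⌋₊, ((Nat.primeCounting ⌊x / m⌋₊ : ℝ) - Nat.primeCounting ⌊y⌋₊) =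
      (((Finset.Ioc ⌊y⌋₊ ⌊x / m⌋₊).filter Nat.Prime).card : ℝ) := by
    intro m hm
    rw [Finset.mem_Icc] at hm
    have hm0 : (1:ℝ) ≤ m := by exact_mod_cast hm.1
    have hm2 := (Nat.le_floor_iff (by positivity)).1 hm.2
    have h1 : y ≤ x / m := by
      rw [le_div_iff₀ hy0] at hm2
      rw [le_div_iff₀ (by linarith)]; linarith
    rw [card_primes_Ioc _ _ (Nat.floor_mono h1)]
  rw [Finset.sum_congr rfl e, ← Nat.cast_sum, Nat.cast_inj, ← Finset.card_sigma, Phi]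
  symm
  refine Finset.card_bij (fun a _ => a.1 * a.2) ?_ ?_ ?_
  · rintro ⟨m, p⟩ ha
    simp only [Finset.mem_sigma, Finset.mem_Icc, Finset.mem_filter, Finset.mem_Ioc] at ha
    obtain ⟨⟨hm1, hm2⟩, ⟨hp1, hp2⟩, hp⟩ := ha
    have hm0 : (0:ℝ) < m := by exact_mod_cast hm1
    have hp3 := (Nat.le_floor_iff (by positivity)).1 hp2
    rw [le_div_iff₀ hm0] at hp3
    have hp4 := (Nat.floor_lt hy0.le).1 hp1
    have h1 : 1 ≤ m * p := Nat.mul_pos hm1 hp.pos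
    simp only [Finset.mem_filter, Finset.mem_Icc]
    refine ⟨⟨h1, Nat.le_floor ?_⟩, ?_⟩
    · push_cast; linarith
    · rw [lpf_iff _ h1 _ hy]
      exact ⟨p, hp, dvd_mul_left _ _, hp4⟩
  · rintro ⟨m, p⟩ ha ⟨m', p'⟩ ha' heq
    simp only [Finset.mem_sigma, Finset.mem_Icc, Finset.mem_filter, Finset.mem_Ioc] at ha ha'
    obtain ⟨⟨hm1, hm2⟩, ⟨hp1, hp2⟩, hp⟩ := ha
    obtain ⟨⟨hm1', hm2'⟩, ⟨hp1', hp2'⟩, hp'⟩ := ha'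
    simp only at heq
    have hm0 : (0:ℝ) < m := by exact_mod_cast hm1
    have hp3 := (Nat.le_floor_iff (by positivity)).1 hp2
    rw [le_div_iff₀ hm0] at hp3
    have hp4 := (Nat.floor_lt hy0.le).1 hp1
    have hp4' := (Nat.floor_lt hy0.le).1 hp1'
    by_cases hpp : p = p'
    · subst hpp
      have : m = m' := Nat.eq_of_mul_eq_mul_right hp.pos heq
      subst this; rfl
    · exfalso
      have hd : p * p' ∣ m * p := by
        refine Nat.Coprime.mul_dvd_of_dvd_of_dvd ((Nat.coprime_primes hp hp').2 hpp) (dvd_mul_left _ _) ?_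
        rw [heq]; exact dvd_mul_left _ _
      have hle := Nat.le_of_dvd (Nat.mul_pos hm1 hp.pos) hd
      have hle' : (p:ℝ) * p' ≤ m * p := by exact_mod_cast hle
      nlinarith
  · intro n hn
    simp only [Finset.mem_filter, Finset.mem_Icc] at hn
    obtain ⟨⟨hn1, hn2⟩, hn3⟩ := hn
    rw [lpf_iff _ hn1 _ hy] at hn3
    obtain ⟨p, hp, ⟨m, rfl⟩, hyp⟩ := hn3
    have hm1 : 1 ≤ m := Nat.pos_of_ne_zero (by rintro rfl; simp at hn1)
    have hm0 : (0:ℝ) < m := by exact_mod_cast hm1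
    have hnx := (Nat.le_floor_iff hx0.le).1 hn2
    push_cast at hnx
    refine ⟨⟨m, p⟩, ?_, mul_comm _ _⟩
    simp only [Finset.mem_sigma, Finset.mem_Icc, Finset.mem_filter, Finset.mem_Ioc]
    refine ⟨⟨hm1, Nat.le_floor ?_⟩, ⟨(Nat.floor_lt hy0.le).2 hyp, Nat.le_floor ?_⟩, hp⟩
    · rw [le_div_iff₀ hy0]; nlinarith
    · rw [le_div_iff₀ hm0]; linarith

theorem Phi_asymp : ∃ C > 0, ∀ x y : ℝ, 8 ≤ y → y ≤ x → x ≤ y ^ 2 → Real.log x ≤ x / y →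
    |(Phi x y : ℝ) - x * (Real.log (Real.log x / Real.log y) - (1 - Real.eulerMascheroniConstant) / Real.log x)|
      ≤ C * (x / Real.log x ^ 2) := by
  obtain ⟨C, hC, h⟩ := pi_diff
  refine ⟨16 * C + 4, by positivity, fun x y hy hyx hxy hlxy => ?_⟩
  have hx0 : 0 < x := by linarith
  have hy0 : 0 < y := by linarith
  have hly : 0 < Real.log y := Real.log_pos (by linarith)
  have hlx : 0 < Real.log x := Real.log_pos (by linarith)
  have hlx1 : 1 ≤ Real.log x := by
    rw [Real.le_log_iff_exp_le hx0]
    linarith [Real.exp_one_lt_d9]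
  have hlxy2 : Real.log x / 2 ≤ Real.log y := by
    have := Real.log_le_log hx0 hxy
    rw [Real.log_pow] at this
    push_cast at this; linarith
  have hz1 : 1 ≤ x / y := by rw [le_div_iff₀ hy0]; linarith
  have m1 := main_sum x y hy hyx
  have m2 := euler_est (x / y) hz1
  set M := ⌊x / y⌋₊ with hM
  set H := ((harmonic M : ℚ) : ℝ) with hH
  have hHle : H ≤ 1 + Real.log x := by
    have h1 := harmonic_le_one_add_log M
    have h2 : Real.log M ≤ Real.log x := by
      have hM1 : 1 ≤ M := Nat.le_floor (by simpa using hz1)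
      refine Real.log_le_log (by exact_mod_cast hM1) ((Nat.floor_le (by positivity)).trans (div_le_self hx0.le (by linarith)))
    linarith
  have m3 : |(Phi x y : ℝ) - ∑ m ∈ Finset.Icc 1 M, ∫ u in y..(x / m), 1 / Real.log u| ≤
      16 * C * (x / Real.log x ^ 2) := by
    rw [Phi_eq x y (by linarith) hyx hxy, ← Finset.sum_sub_distrib]
    calc _ ≤ ∑ m ∈ Finset.Icc 1 M, C * (x / m / Real.log y ^ 3) := by
          refine (Finset.abs_sum_le_sum_abs _ _).trans (Finset.sum_le_sum fun m hm => ?_)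
          rw [Finset.mem_Icc] at hm
          have hm0 : (1:ℝ) ≤ m := by exact_mod_cast hm.1
          have hm2 := (Nat.le_floor_iff (by positivity)).1 hm.2
          have h1 : y ≤ x / m := by
            rw [le_div_iff₀ hy0] at hm2
            rw [le_div_iff₀ (by linarith)]; linarith
          exact h y (x / m) hy h1
      _ = C * x / Real.log y ^ 3 * H := by
          rw [hH, harmonic_eq_sum_Icc]
          push_cast
          rw [Finset.mul_sum]
          refine Finset.sum_congr rfl fun m hm => ?_
          ring
      _ ≤ C * x / (Real.log x / 2) ^ 3 * (2 * Real.log x) := by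
          have hH0 : 0 ≤ H := by rw [hH]; exact_mod_cast Finset.sum_nonneg fun i _ => by positivity
          have hH2 : H ≤ 2 * Real.log x := by linarith
          gcongr
      _ = _ := by field_simp; ring
  have m4 : x / (Real.log x * Real.log y) ≤ 2 * (x / Real.log x ^ 2) := by
    calc x / (Real.log x * Real.log y) ≤ x / (Real.log x * (Real.log x / 2)) := by gcongr
      _ = _ := by field_simp
  set B := H - Real.log (x / y) - M / (x / y) with hB
  have m5 : |x * (B - (Real.eulerMascheroniConstant - 1)) / Real.log x| ≤ 2 * (x / Real.log x ^ 2) := by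
    rw [abs_div, abs_mul, abs_of_pos hx0, abs_of_pos hlx]
    calc x * |B - (Real.eulerMascheroniConstant - 1)| / Real.log x ≤ x * (2 / Real.log x) / Real.log x := by
          gcongr
          refine m2.trans ?_
          gcongr
      _ = _ := by field_simp
  have e : (Phi x y : ℝ) - x * (Real.log (Real.log x / Real.log y) - (1 - Real.eulerMascheroniConstant) / Real.log x) =
      ((Phi x y : ℝ) - ∑ m ∈ Finset.Icc 1 M, ∫ u in y..(x / m), 1 / Real.log u) +
      ((∑ m ∈ Finset.Icc 1 M, ∫ u in y..(x / m), 1 / Real.log u) -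
        x * (Real.log (Real.log x / Real.log y) + B / Real.log x)) +
      x * (B - (Real.eulerMascheroniConstant - 1)) / Real.log x := by
    ring
  rw [e]
  have t := abs_add_three ((Phi x y : ℝ) - ∑ m ∈ Finset.Icc 1 M, ∫ u in y..(x / m), 1 / Real.log u)
    ((∑ m ∈ Finset.Icc 1 M, ∫ u in y..(x / m), 1 / Real.log u) -
        x * (Real.log (Real.log x / Real.log y) + B / Real.log x))
    (x * (B - (Real.eulerMascheroniConstant - 1)) / Real.log x)
  linarith

open Filter Real MeasureTheory
open scoped Classical

theorem list_up (l : List ℕ) (hl : l.Pairwise (· ≤ ·)) (k : ℕ) (hk : k < l.length) (p : ℕ → Bool)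
    (hp : ∀ a b, a ≤ b → p a = true → p b = true) :
    (p l[k] = true → l.length - k ≤ l.countP p) ∧ (p l[k] = false → l.countP p ≤ l.length - k - 1) := by
  rw [List.pairwise_iff_getElem] at hl
  constructor
  · intro h
    have e : l.countP p = (l.take k).countP p + (l.drop k).countP p := by
      rw [← List.countP_append, List.take_append_drop]
    have : (l.drop k).countP p = (l.drop k).length := by
      rw [List.countP_eq_length]
      intro a ha
      rw [List.mem_drop_iff_getElem] at ha
      obtain ⟨i, hi, rfl⟩ := ha
      refine hp _ _ ?_ h
      rcases Nat.eq_zero_or_pos i with h0 | h0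
      · subst h0; simp
      · exact hl k (k + i) hk (by omega) (by omega)
    rw [e, this, List.length_drop]; omega
  · intro h
    have e : l.countP p = (l.take (k+1)).countP p + (l.drop (k+1)).countP p := by
      rw [← List.countP_append, List.take_append_drop]
    have : (l.take (k+1)).countP p = 0 := by
      rw [List.countP_eq_zero]
      intro a ha
      rw [List.mem_take_iff_getElem] at ha
      obtain ⟨i, hi, rfl⟩ := ha
      intro hh
      have hik : l[i] ≤ l[k] := by
        rcases Nat.lt_or_ge i k with h0 | h0
        · exact hl i k (by omega) hk h0
        · have : i = k := by omega
          subst this; exact le_rfl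
      have := hp _ _ hik hh
      rw [h] at this; exact absurd this (by simp)
    rw [e, this, zero_add]
    refine List.countP_le_length.trans ?_
    rw [List.length_drop]; omega

theorem median_iff (x y : ℝ) (hx : 1 ≤ x) : (medianLPF x : ℝ) ≤ y ↔ Phi x y ≤ ⌊x⌋₊ / 2 := by
  have hN : 1 ≤ ⌊x⌋₊ := Nat.le_floor (by simpa using hx)
  unfold medianLPF
  set N := ⌊x⌋₊ with hNdef
  set s := (Finset.Icc 1 N).val.map largestPrimeFactor with hs
  set l := s.sort (· ≤ ·) with hl
  have hlen : l.length = N := by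
    rw [hl, Multiset.length_sort, hs, Multiset.card_map, Finset.card_val]; simp
  have hsorted : l.Pairwise (· ≤ ·) := Multiset.pairwise_sort s (· ≤ ·)
  have hk : (N + 1) / 2 - 1 < l.length := by omega
  rw [List.getD_eq_getElem _ _ hk]
  have hcount : l.countP (fun n : ℕ => decide (y < (n:ℝ))) = Phi x y := by
    have h1 : Multiset.countP (fun n : ℕ => y < (n:ℝ)) s = l.countP (fun n : ℕ => decide (y < (n:ℝ))) := by
      rw [← Multiset.coe_countP, hl, Multiset.sort_eq]
    rw [← h1, hs, Multiset.countP_map, Phi]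
    rfl
  obtain ⟨h1, h2⟩ := list_up l hsorted _ hk (fun n => decide (y < (n:ℝ))) (by
    intro a b hab ha
    simp only [decide_eq_true_eq] at ha ⊢
    exact ha.trans_le (by exact_mod_cast hab))
  rw [hcount, hlen] at h1 h2
  simp only [decide_eq_true_eq, decide_eq_false_iff_not, not_lt] at h1 h2
  constructor
  · intro h
    have := h2 h
    omega
  · intro h
    by_contra hc
    have := h1 (not_le.1 hc)
    omega

open Filter Real MeasureTheory
open scoped Classical

theorem log_one_add_est (t : ℝ) (ht : |t| ≤ 1 / 2) : |Real.log (1 + t) - t| ≤ 2 * t ^ 2 := by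
  rw [abs_le] at ht
  have h0 : 0 < 1 + t := by linarith
  have h1 := Real.log_le_sub_one_of_pos h0
  have h2 := Real.one_sub_inv_le_log_of_pos h0
  have h3 : t - 2 * t ^ 2 ≤ 1 - (1 + t)⁻¹ := by
    have e : 1 - (1 + t)⁻¹ = t / (1 + t) := by field_simp; ring
    rw [e, le_div_iff₀ h0]
    nlinarith [mul_nonneg (sq_nonneg t) (by linarith : 0 ≤ 1 + 2 * t)]
  rw [abs_le]
  constructor <;> nlinarith [sq_nonneg t]

theorem sqrt_e_bounds : 8 / 5 ≤ Real.sqrt (Real.exp 1) ∧ Real.sqrt (Real.exp 1) ≤ 5 / 3 := by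
  have h1 := Real.exp_one_gt_d9
  have h2 := Real.exp_one_lt_d9
  constructor
  · apply Real.le_sqrt_of_sq_le; norm_num at *; linarith
  · rw [Real.sqrt_le_left (by norm_num)]; norm_num at *; linarith

set_option maxHeartbeats 1000000 in
theorem Phi_at : ∃ C > 0, ∀ x κ : ℝ, 12 ≤ Real.log x → 8 * |κ| ≤ Real.log x → 0 < x →
    |(Phi x (Real.exp ((Real.eulerMascheroniConstant - 1) / Real.sqrt (Real.exp 1)) *
            x ^ (1 / Real.sqrt (Real.exp 1)) * (1 + κ / Real.log x)) : ℝ) -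
      (x / 2 - x * (Real.sqrt (Real.exp 1) * Real.log (1 + κ / Real.log x) / Real.log x))| ≤ C * (x / Real.log x ^ 2) := by
  obtain ⟨C, hC, h⟩ := Phi_asymp
  refine ⟨C + 8, by positivity, fun x κ hL hκ hx => ?_⟩
  obtain ⟨hs1, hs2⟩ := sqrt_e_bounds
  have hlogs : Real.log (Real.sqrt (Real.exp 1)) = 1 / 2 := by
    rw [Real.log_sqrt (Real.exp_pos 1).le, Real.log_exp]
  set s := Real.sqrt (Real.exp 1) with hs
  set L := Real.log x with hLdef
  set g := Real.eulerMascheroniConstant with hg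
  have hg1 : 1 / 2 < g := Real.one_half_lt_eulerMascheroniConstant
  have hg2 : g < 2 / 3 := Real.eulerMascheroniConstant_lt_two_thirds
  have hL0 : 0 < L := by linarith
  have hxe : x = Real.exp L := (Real.exp_log hx).symm
  set t := κ / L with ht
  have ht8 : |t| ≤ 1 / 8 := by
    rw [ht, abs_div, abs_of_pos hL0, div_le_iff₀ hL0]; linarith
  have htl := log_one_add_est t (by linarith)
  have ht8' := abs_le.1 ht8
  set ℓ := Real.log (1 + t) with hℓ
  have hℓb : |ℓ| ≤ 1 / 4 := by
    rw [abs_le] at htl ⊢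
    constructor <;> nlinarith
  rw [abs_le] at hℓb
  set d := g - 1 + s * ℓ with hd
  have hd2 : |d| ≤ 2 := by
    rw [abs_le, hd]; constructor <;> nlinarith
  have hd2' := abs_le.1 hd2
  have hs0 : 0 < s := by linarith
  set y := Real.exp ((g - 1) / s) * x ^ (1 / s) * (1 + t) with hy
  have h1t : 0 < 1 + t := by linarith
  have hye : y = Real.exp ((L + d) / s) := by
    rw [hy, Real.rpow_def_of_pos hx, ← hLdef]
    nth_rewrite 1 [← Real.exp_log h1t]
    rw [← hℓ, ← Real.exp_add, ← Real.exp_add]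
    congr 1
    rw [hd]; field_simp; ring
  have hy0 : 0 < y := by rw [hye]; exact Real.exp_pos _
  have hly : Real.log y = (L + d) / s := by rw [hye, Real.log_exp]
  have hlow : 3 / 5 * (L - 2) ≤ (L + d) / s := by
    rw [le_div_iff₀ hs0]; nlinarith
  have hup : (L + d) / s ≤ 5 / 8 * (L + 2) := by
    rw [div_le_iff₀ hs0]; nlinarith
  have c1 : 8 ≤ y := by
    rw [hye]
    have e3 : Real.exp 3 = Real.exp 1 * Real.exp 1 * Real.exp 1 := by rw [← Real.exp_add, ← Real.exp_add]; norm_num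
    have e1 := Real.exp_one_gt_d9
    have e2 : 2 ≤ Real.exp 1 := by linarith
    calc (8:ℝ) = 2 * 2 * 2 := by norm_num
      _ ≤ Real.exp 1 * Real.exp 1 * Real.exp 1 := by gcongr
      _ = Real.exp 3 := e3.symm
      _ ≤ _ := Real.exp_le_exp.2 (by linarith)
  have c2 : y ≤ x := by
    rw [hye, hxe]; exact Real.exp_le_exp.2 (by linarith)
  have c3 : x ≤ y ^ 2 := by
    rw [hye, hxe, ← Real.exp_nat_mul]; exact Real.exp_le_exp.2 (by push_cast; linarith)
  have c4 : L ≤ x / y := by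
    rw [hye]
    nth_rewrite 1 [hxe]
    rw [← Real.exp_sub, ← Real.log_le_iff_le_exp hL0]
    have a1 := Real.log_le_sub_one_of_pos (by positivity : 0 < L / 8)
    rw [Real.log_div hL0.ne' (by norm_num)] at a1
    have a2 : Real.log 8 = 3 * Real.log 2 := by
      rw [show (8:ℝ) = 2 ^ 3 by norm_num, Real.log_pow]; norm_num
    have a3 := Real.log_two_lt_d9
    linarith
  have key := h x y c1 c2 c3 c4
  rw [← hLdef, hly] at key
  have hLd : 0 < 1 + d / L := by
    have : -(1/6) ≤ d / L := by rw [le_div_iff₀ hL0]; linarith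
    linarith
  have e1 : Real.log (L / ((L + d) / s)) = 1 / 2 - Real.log (1 + d / L) := by
    have : L / ((L + d) / s) = s / (1 + d / L) := by
      have : L + d ≠ 0 := by linarith
      field_simp
    rw [this, Real.log_div hs0.ne' hLd.ne', hlogs]
  rw [e1] at key
  have hdl := log_one_add_est (d / L) (by
    rw [abs_div, abs_of_pos hL0, div_le_iff₀ hL0]; linarith)
  have hdl2 : 2 * (d / L) ^ 2 ≤ 8 / L ^ 2 := by
    rw [div_pow, ← mul_div_assoc]
    gcongr
    have := sq_le_sq' hd2'.1 hd2'.2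
    linarith
  have hx8 : |x * (Real.log (1 + d / L) - d / L)| ≤ 8 * (x / L ^ 2) := by
    rw [abs_mul, abs_of_pos hx]
    calc x * |Real.log (1 + d / L) - d / L| ≤ x * (8 / L ^ 2) := by gcongr; exact hdl.trans hdl2
      _ = _ := by ring
  have e2 : (Phi x y : ℝ) - (x / 2 - x * (s * ℓ / L)) =
      ((Phi x y : ℝ) - x * (1 / 2 - Real.log (1 + d / L) - (1 - g) / L)) - x * (Real.log (1 + d / L) - d / L) := by
    rw [hd]; field_simp; ring
  rw [e2]
  rw [abs_le] at *
  constructor <;> linarith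

theorem median_largest_prime_factor_asymptotic :
    ∃ C > (0:ℝ), ∀ᶠ x : ℝ in atTop,
      |(medianLPF x : ℝ) /
          (Real.exp ((Real.eulerMascheroniConstant - 1) / Real.sqrt (Real.exp 1)) *
            x ^ (1 / Real.sqrt (Real.exp 1))) - 1| ≤ C / Real.log x := by
  obtain ⟨C, hC, h⟩ := Phi_at
  obtain ⟨hs1, hs2⟩ := sqrt_e_bounds
  set K := 2 * (C + 1) with hK
  refine ⟨K, by positivity, ?_⟩
  filter_upwards [Real.tendsto_log_atTop.eventually_ge_atTop (12 + 8 * K), eventually_ge_atTop 1] with x hL hx1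
  have hx : 0 < x := by linarith
  have hK0 : 0 < K := by positivity
  have hp := h x K (by linarith) (by rw [abs_of_pos hK0]; linarith) hx
  have hm := h x (-K) (by linarith) (by rw [abs_neg, abs_of_pos hK0]; linarith) hx
  set s := Real.sqrt (Real.exp 1) with hs
  set Y := Real.exp ((Real.eulerMascheroniConstant - 1) / s) * x ^ (1 / s) with hY
  have hY0 : 0 < Y := by positivity
  have hxL : Real.log x ^ 2 ≤ x := by
    have := Real.pow_div_factorial_le_exp (Real.log x) (by linarith) 3
    rw [Real.exp_log hx] at this
    refine le_trans ?_ this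
    rw [le_div_iff₀ (by positivity)]
    have : (Nat.factorial 3 : ℝ) = 6 := by norm_num [Nat.factorial]
    rw [this]
    have : 0 ≤ Real.log x ^ 2 * (Real.log x - 6) := mul_nonneg (by positivity) (by linarith)
    nlinarith
  set L := Real.log x with hLd
  have hL0 : 0 < L := by linarith
  set q := x / L ^ 2 with hq
  have hq1 : 1 ≤ q := by rw [hq, le_div_iff₀ (by positivity)]; linarith
  have hq0 : 0 < q := by linarith
  have hKL : K / L ≤ 1 / 8 := by rw [div_le_iff₀ hL0]; linarith
  have hKL0 : 0 < K / L := by positivity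
  rw [abs_le] at hp hm
  have hN1 := Nat.floor_le hx.le
  have hN2 := Nat.lt_floor_add_one x
  have up : (medianLPF x : ℝ) ≤ Y * (1 + K / L) := by
    rw [median_iff x _ hx1]
    have hl : K / L / 2 ≤ Real.log (1 + K / L) := by
      have := Real.one_sub_inv_le_log_of_pos (by linarith : 0 < 1 + K / L)
      refine le_trans ?_ this
      have e : 1 - (1 + K / L)⁻¹ = (K / L) / (1 + K / L) := by field_simp; ring
      rw [e]
      gcongr; linarith
    have h1 : (C + 1) * q ≤ x * (s * Real.log (1 + K / L) / L) := by
      calc (C + 1) * q = x * (1 * (K / L / 2) / L) := by rw [hq, hK]; field_simp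
        _ ≤ x * (s * Real.log (1 + K / L) / L) := by
          gcongr
          linarith
    have h2 : (Phi x (Y * (1 + K / L)) : ℝ) ≤ x / 2 - 1 := by nlinarith [hp.2]
    have h3 : ((2 * Phi x (Y * (1 + K / L)) : ℕ) : ℝ) < ((⌊x⌋₊ : ℕ) : ℝ) := by push_cast; linarith
    have h4 := Nat.cast_lt.1 h3
    omega
  have lo : Y * (1 + -K / L) < (medianLPF x : ℝ) := by
    rw [← not_le, median_iff x _ hx1, not_le]
    have hl : Real.log (1 + -K / L) ≤ -(K / L) := by
      have e : -K / L = -(K / L) := by ring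
      rw [e]
      have := Real.log_le_sub_one_of_pos (by linarith : 0 < 1 + -(K / L))
      linarith
    have h1 : x * (s * Real.log (1 + -K / L) / L) ≤ -((C + 1) * q) := by
      calc x * (s * Real.log (1 + -K / L) / L) ≤ x * (s * (-(K / L)) / L) := by gcongr
        _ = - (x * (s * (K / L) / L)) := by ring
        _ ≤ - (x * (1 * (K / L) / L)) := by
          apply neg_le_neg
          gcongr
          linarith
        _ = -(2 * (C + 1) * q) := by rw [hq, hK]; field_simp
        _ ≤ _ := by nlinarith
    have h2 : x / 2 < (Phi x (Y * (1 + -K / L)) : ℝ) := by nlinarith [hm.1]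
    have h3 : ((⌊x⌋₊ : ℕ) : ℝ) < ((2 * Phi x (Y * (1 + -K / L)) : ℕ) : ℝ) := by push_cast; linarith
    have h4 := Nat.cast_lt.1 h3
    omega
  rw [abs_le]
  constructor
  · rw [le_sub_iff_add_le, le_div_iff₀ hY0]
    have : (-(K / L) + 1) * Y = Y * (1 + -K / L) := by ring
    linarith
  · rw [sub_le_iff_le_add, div_le_iff₀ hY0]
    linarith
end

section
/- For all sufficiently large x, M(x) < x^{1/√e}. -/
open Filter Real MeasureTheory
open scoped Classical

namespace MLPF

open ArithmeticFunction Chebyshev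

noncomputable def ff (v : ℝ) : ℝ := if 0 < v then psi (Real.exp v) * Real.exp (-v) - 1 else 0

noncomputable def CC : ℝ := Real.log 4 + 4

lemma CC_pos : 1 ≤ CC := by
  have : 0 ≤ Real.log 4 := Real.log_nonneg (by norm_num)
  unfold CC; linarith

lemma ff_bound (v : ℝ) : |ff v| ≤ CC := by
  unfold ff
  have hC := CC_pos
  split_ifs with h
  · have h1 := psi_le_const_mul_self (Real.exp_pos v).le
    have h2 := psi_nonneg (Real.exp v)
    have h3 : psi (Real.exp v) * Real.exp (-v) ≤ CC := by
      rw [Real.exp_neg, ← div_eq_mul_inv, div_le_iff₀ (Real.exp_pos v)]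
      exact h1
    have h4 : 0 ≤ psi (Real.exp v) * Real.exp (-v) := by positivity
    rw [abs_le]; constructor <;> linarith
  · simp; linarith

lemma ff_meas : Measurable ff := by
  unfold ff
  refine Measurable.ite measurableSet_Ioi ?_ measurable_const
  have := psi_mono.measurable.comp Real.measurable_exp
  have h2 : Measurable fun v : ℝ => Real.exp (-v) := by fun_prop
  exact (this.mul h2).sub_const 1

noncomputable def GG (s : ℂ) : ℂ :=
  vonMangoldt.LFunctionResidueClassAux (1 : ZMod 1) (1 + s) / (1 + s) - 1 / (1 + s)

lemma GG_cont : ContinuousOn GG {s | 0 ≤ s.re} := by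
  have h := vonMangoldt.continuousOn_LFunctionResidueClassAux (1 : ZMod 1)
  have h1 : ContinuousOn (fun s : ℂ => vonMangoldt.LFunctionResidueClassAux (1 : ZMod 1) (1 + s))
      {s | 0 ≤ s.re} := by
    refine h.comp (by fun_prop) ?_
    intro s hs
    simp at hs ⊢
    exact hs
  have hne : ∀ s ∈ {s : ℂ | 0 ≤ s.re}, 1 + s ≠ 0 := by
    intro s hs h0
    have := congrArg Complex.re h0
    simp at this hs
    linarith
  unfold GG
  exact (h1.div (by fun_prop) hne).sub (ContinuousOn.div (by fun_prop) (by fun_prop) hne)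

lemma LS_eq {s : ℂ} (hs : 0 < s.re) :
    LSeries (fun n => ((vonMangoldt n : ℝ) : ℂ)) (1 + s) / (1 + s) - 1 / s = GG s := by
  have h := vonMangoldt.eqOn_LFunctionResidueClassAux (q := 1) (a := 1) isUnit_one
  have h1 : (1 + s) ∈ {s : ℂ | 1 < s.re} := by simp [hs]
  have h2 := h h1
  have h3 : (fun n => ((vonMangoldt.residueClass (1 : ZMod 1) n : ℝ) : ℂ)) =
      fun n => ((vonMangoldt n : ℝ) : ℂ) := by
    funext n
    simp [vonMangoldt.residueClass, Set.indicator_apply, Subsingleton.elim (n : ZMod 1) 1]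
  simp only [h3] at h2
  have hs0 : s ≠ 0 := by rintro rfl; simp at hs
  have hs1 : 1 + s ≠ 0 := by
    intro h0
    have := congrArg Complex.re h0
    simp at this
    linarith
  unfold GG
  rw [h2]
  simp
  field_simp
  ring

lemma int_cexp {s : ℂ} (hs : 0 < s.re) :
    IntegrableOn (fun v : ℝ => Complex.exp (-s * v)) (Set.Ioi 0) :=
  integrableOn_exp_mul_complex_Ioi (by simpa using hs) 0

lemma laplace {s : ℂ} (hs : 0 < s.re) :
    ∫ v in Set.Ioi (0:ℝ), (ff v : ℂ) * Complex.exp (-s * v) = GG s := by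
  rw [← LS_eq hs]
  have h1 := LSeries_eq_mul_integral_of_nonneg (fun n => (vonMangoldt n : ℝ)) (r := 1) zero_le_one
    (s := 1 + s) (by simpa using hs) ?_ (fun n => vonMangoldt_nonneg)
  · have hs1 : 1 + s ≠ 0 := by
      intro h0
      have := congrArg Complex.re h0
      simp at this
      linarith
    rw [h1, mul_div_cancel_left₀ _ hs1]
    have himg : Real.exp '' Set.Ioi 0 = Set.Ioi 1 := by
      ext t
      constructor
      · rintro ⟨v, hv, rfl⟩
        simpa using hv
      · intro ht
        have ht' : (1:ℝ) < t := ht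
        exact ⟨Real.log t, Real.log_pos ht, Real.exp_log (by linarith)⟩
    rw [← himg, integral_image_eq_integral_abs_deriv_smul measurableSet_Ioi
      (fun x _ => (Real.hasDerivAt_exp x).hasDerivWithinAt) Real.exp_injective.injOn]
    have h2 : (1:ℂ) / s = ∫ v in Set.Ioi (0:ℝ), Complex.exp (-s * v) := by
      rw [integral_exp_mul_complex_Ioi (by simpa using hs)]
      simp
    rw [h2]
    have key : ∀ v ∈ Set.Ioi (0:ℝ), |Real.exp v| • ((∑ k ∈ Finset.Icc 1 ⌊Real.exp v⌋₊, ((vonMangoldt k : ℝ) : ℂ)) *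
        ((Real.exp v : ℝ) : ℂ) ^ (-(1 + s + 1))) = (ff v : ℂ) * Complex.exp (-s * v) + Complex.exp (-s * v) := by
      intro v hv
      have hv' : (0:ℝ) < v := hv
      have e1 : (∑ k ∈ Finset.Icc 1 ⌊Real.exp v⌋₊, ((vonMangoldt k : ℝ) : ℂ)) = (psi (Real.exp v) : ℂ) := by
        unfold psi
        push_cast
        rfl
      have e2 : ((Real.exp v : ℝ) : ℂ) ^ (-(1 + s + 1)) = Complex.exp (-v) * Complex.exp (-v) * Complex.exp (-s * v) := by
        rw [Complex.cpow_def_of_ne_zero (by exact_mod_cast (Real.exp_pos v).ne'),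
          ← Complex.ofReal_log (Real.exp_pos v).le, Real.log_exp, ← Complex.exp_add, ← Complex.exp_add]
        congr 1; ring
      rw [e1, e2, abs_of_pos (Real.exp_pos v)]
      simp only [ff, if_pos hv', Complex.real_smul]
      push_cast
      have e3 : Complex.exp v * Complex.exp (-v) = 1 := by rw [← Complex.exp_add]; simp
      linear_combination (psi (Real.exp v) * Complex.exp (-v) * Complex.exp (-s * v)) * e3
    rw [setIntegral_congr_fun measurableSet_Ioi key, integral_add _ (int_cexp hs)]
    · ring
    · have := (int_cexp hs)
      refine Integrable.bdd_mul this (c := CC) ?_ ?_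
      · exact (Complex.measurable_ofReal.comp ff_meas).aestronglyMeasurable
      · filter_upwards with v
        simpa using ff_bound v
  · rw [Asymptotics.isBigO_iff]
    refine ⟨CC, ?_⟩
    filter_upwards with n
    have h := psi_le_const_mul_self (x := n) (by positivity)
    have h0 := psi_nonneg (n : ℝ)
    have e : psi (n:ℝ) = ∑ k ∈ Finset.Icc 1 n, vonMangoldt k := by
      unfold psi; simp; rfl
    rw [← e, Real.norm_of_nonneg h0]
    simpa [CC] using h

end MLPF

namespace MLPF

open ArithmeticFunction Chebyshev

noncomputable def tri (τ : ℝ) : ℝ := max 0 (1 - |τ|)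

noncomputable def KK (x : ℝ) : ℝ := if x = 0 then 1 else 2 * (1 - Real.cos x) / x ^ 2

lemma tri_cont : Continuous tri := by unfold tri; fun_prop

lemma tri_nonneg (τ : ℝ) : 0 ≤ tri τ := le_max_left _ _

lemma tri_zero {τ : ℝ} (h : τ ∉ Set.Ioc (-1:ℝ) 1) : tri τ = 0 := by
  unfold tri
  apply max_eq_left
  rw [Set.mem_Ioc, not_and_or] at h
  have : 1 ≤ |τ| := by
    rcases h with h | h
    · rw [le_abs]; right; linarith
    · rw [le_abs]; left; linarith
  linarith

lemma tri_supp : HasCompactSupport tri := by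
  apply HasCompactSupport.of_support_subset_isCompact (isCompact_Icc (a := (-1:ℝ)) (b := 1))
  intro x hx
  by_contra h
  exact hx (tri_zero (fun h' => h (Set.Ioc_subset_Icc_self h')))

lemma tri_int : Integrable tri := tri_cont.integrable_of_hasCompactSupport tri_supp

lemma KK_nonneg (x : ℝ) : 0 ≤ KK x := by
  unfold KK
  split_ifs
  · norm_num
  · have := Real.cos_le_one x
    apply div_nonneg <;> nlinarith [sq_nonneg x]

lemma KK_le (x : ℝ) : KK x ≤ 5 * (1 + x ^ 2)⁻¹ := by
  rw [← div_eq_mul_inv, le_div_iff₀ (by positivity)]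
  unfold KK
  split_ifs with h
  · subst h; norm_num
  · have h1 := Real.one_sub_sq_div_two_le_cos (x := x)
    have h2 := Real.neg_one_le_cos x
    have hx : 0 < x ^ 2 := by positivity
    rw [div_mul_eq_mul_div, div_le_iff₀ hx]
    nlinarith

lemma KK_meas : Measurable KK := by
  unfold KK
  refine Measurable.ite (measurableSet_singleton 0) measurable_const ?_
  fun_prop

lemma KK_int : Integrable KK := by
  refine Integrable.mono' (integrable_inv_one_add_sq.const_mul 5) KK_meas.aestronglyMeasurable ?_
  filter_upwards with x
  rw [Real.norm_of_nonneg (KK_nonneg x)]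
  exact KK_le x

lemma kern (x : ℝ) : ∫ τ : ℝ, (tri τ : ℂ) * Complex.exp (Complex.I * τ * x) = KK x := by
  have h0 : ∫ τ : ℝ, (tri τ : ℂ) * Complex.exp (Complex.I * τ * x) =
      ∫ τ in (-1:ℝ)..1, (tri τ : ℂ) * Complex.exp (Complex.I * τ * x) := by
    rw [intervalIntegral.integral_of_le (by norm_num), setIntegral_eq_integral_of_forall_compl_eq_zero]
    intro τ hτ
    simp [tri_zero hτ]
  have hc : Continuous fun τ : ℝ => (tri τ : ℂ) * Complex.exp (Complex.I * τ * x) := by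
    have := tri_cont
    fun_prop
  rw [h0, ← intervalIntegral.integral_add_adjacent_intervals (b := 0)
    (hc.intervalIntegrable _ _) (hc.intervalIntegrable _ _)]
  have e1 : ∫ τ in (-1:ℝ)..0, (tri τ : ℂ) * Complex.exp (Complex.I * τ * x) =
      ∫ τ in (-1:ℝ)..0, (1 + τ : ℂ) * Complex.exp (Complex.I * τ * x) := by
    apply intervalIntegral.integral_congr
    intro τ hτ
    rw [Set.uIcc_of_le (by norm_num), Set.mem_Icc] at hτ
    have : tri τ = 1 + τ := by
      unfold tri; rw [abs_of_nonpos hτ.2, max_eq_right] <;> linarith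
    simp [this]
  have e2 : ∫ τ in (0:ℝ)..1, (tri τ : ℂ) * Complex.exp (Complex.I * τ * x) =
      ∫ τ in (0:ℝ)..1, (1 - τ : ℂ) * Complex.exp (Complex.I * τ * x) := by
    apply intervalIntegral.integral_congr
    intro τ hτ
    rw [Set.uIcc_of_le (by norm_num), Set.mem_Icc] at hτ
    have : tri τ = 1 - τ := by
      unfold tri; rw [abs_of_nonneg hτ.1, max_eq_right]; linarith
    simp [this]
  rw [e1, e2]
  by_cases hx : x = 0
  · subst hx
    have a1 : ∫ τ in (-1:ℝ)..0, (1 + τ : ℂ) * Complex.exp (Complex.I * τ * (0:ℝ)) =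
        ((∫ τ in (-1:ℝ)..0, (1 + τ) : ℝ) : ℂ) := by
      rw [← intervalIntegral.integral_ofReal]; simp
    have a2 : ∫ τ in (0:ℝ)..1, (1 - τ : ℂ) * Complex.exp (Complex.I * τ * (0:ℝ)) =
        ((∫ τ in (0:ℝ)..1, (1 - τ) : ℝ) : ℂ) := by
      rw [← intervalIntegral.integral_ofReal]; simp
    rw [a1, a2, ← Complex.ofReal_add]
    congr 1
    rw [intervalIntegral.integral_add (by simp) (by simp), intervalIntegral.integral_sub (by simp) (by simp)]
    simp [KK]
    norm_num
  · have hxc : (x : ℂ) ≠ 0 := by exact_mod_cast hx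
    have hE : ∀ τ : ℝ, HasDerivAt (fun τ : ℝ => Complex.exp (Complex.I * τ * x))
        (Complex.exp (Complex.I * τ * x) * (Complex.I * x)) τ := by
      intro τ
      have h1 : HasDerivAt (fun τ : ℝ => Complex.I * (τ:ℂ) * x) (Complex.I * x) τ := by
        have := ((Complex.ofRealCLM.hasDerivAt (x := τ)).const_mul Complex.I).mul_const (x:ℂ)
        simpa using this
      exact h1.cexp
    have hI : Complex.I ≠ 0 := Complex.I_ne_zero
    have hI2 : Complex.I ^ 2 = -1 := Complex.I_sq
    have hof : ∀ τ : ℝ, HasDerivAt (fun τ : ℝ => (τ : ℂ)) 1 τ := fun τ => by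
      exact_mod_cast (hasDerivAt_id τ).ofReal_comp
    have b1 := intervalIntegral.integral_eq_sub_of_hasDerivAt (a := -1) (b := 0)
      (f := fun τ : ℝ => (1 + (τ:ℂ)) * Complex.exp (Complex.I * τ * x) * (-Complex.I / x) +
        Complex.exp (Complex.I * τ * x) / x ^ 2)
      (f' := fun τ : ℝ => (1 + τ : ℂ) * Complex.exp (Complex.I * τ * x)) (by
        intro τ _
        have := ((((hof τ).const_add 1).mul (hE τ)).mul_const (-Complex.I / x)).add
          ((hE τ).div_const ((x:ℂ)^2))
        refine this.congr_deriv ?_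
        field_simp
        linear_combination (-(1 + (τ:ℂ)) * x) * hI2)
      (by apply Continuous.intervalIntegrable; fun_prop)
    have b2 := intervalIntegral.integral_eq_sub_of_hasDerivAt (a := 0) (b := 1)
      (f := fun τ : ℝ => (1 - (τ:ℂ)) * Complex.exp (Complex.I * τ * x) * (-Complex.I / x) -
        Complex.exp (Complex.I * τ * x) / x ^ 2)
      (f' := fun τ : ℝ => (1 - τ : ℂ) * Complex.exp (Complex.I * τ * x)) (by
        intro τ _
        have := ((((hof τ).const_sub 1).mul (hE τ)).mul_const (-Complex.I / x)).sub
          ((hE τ).div_const ((x:ℂ)^2))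
        refine this.congr_deriv ?_
        field_simp
        linear_combination (-(1 - (τ:ℂ)) * x) * hI2)
      (by apply Continuous.intervalIntegrable; fun_prop)
    rw [b1, b2]
    simp only [KK, if_neg hx]
    push_cast
    rw [Complex.cos]
    simp
    field_simp
    ring_nf

end MLPF

namespace MLPF

open ArithmeticFunction Chebyshev

lemma ffc_meas : Measurable fun v => (ff v : ℂ) := Complex.measurable_ofReal.comp ff_meas

lemma stepA {l e w : ℝ} (he : 0 < e) :
    ∫ v in Set.Ioi (0:ℝ), (ff v : ℂ) * Complex.exp (-(e:ℂ) * v) * (KK (l * (v - w)) : ℂ) =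
    ∫ τ : ℝ, (tri τ : ℂ) * Complex.exp (-(Complex.I * τ * l * w)) * GG (e - Complex.I * τ * l) := by
  have h1 : ∀ v : ℝ, (ff v : ℂ) * Complex.exp (-(e:ℂ) * v) * (KK (l * (v - w)) : ℂ) =
      ∫ τ : ℝ, ((ff v : ℂ) * Complex.exp (-(e:ℂ) * v)) *
        ((tri τ : ℂ) * Complex.exp (Complex.I * τ * ((l * (v - w) : ℝ)))) := by
    intro v
    rw [← kern, ← integral_const_mul]
  simp_rw [h1]
  rw [integral_integral_swap]
  · congr 1
    funext τ
    rw [← laplace (s := e - Complex.I * τ * l) (by simpa using he), ← integral_const_mul]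
    congr 1
    funext v
    have : Complex.exp (-(e:ℂ) * v) * Complex.exp (Complex.I * τ * ((l * (v - w) : ℝ))) =
      Complex.exp (-(Complex.I * τ * l * w)) * Complex.exp (-(e - Complex.I * τ * l) * v) := by
      rw [← Complex.exp_add, ← Complex.exp_add]
      congr 1; push_cast; ring
    linear_combination ((ff v : ℂ) * (tri τ : ℂ)) * this
  · have i1 : Integrable (fun v : ℝ => (ff v : ℂ) * Complex.exp (-(e:ℂ) * v))
        (volume.restrict (Set.Ioi 0)) := by
      refine Integrable.bdd_mul (int_cexp (s := e) (by simpa using he)) (c := CC)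
        ffc_meas.aestronglyMeasurable ?_
      filter_upwards with v
      simpa using ff_bound v
    have i2 : Integrable (fun τ : ℝ => (tri τ : ℂ)) := tri_int.ofReal
    have i3 := i1.mul_prod i2
    have i4 := Integrable.bdd_mul (c := 1) i3
      (f := fun z : ℝ × ℝ => Complex.exp (Complex.I * z.2 * ((l * (z.1 - w) : ℝ)))) ?_ ?_
    · refine i4.congr ?_
      filter_upwards with z
      simp only [Function.uncurry]
      ring
    · apply Continuous.aestronglyMeasurable; fun_prop
    · filter_upwards with z
      rw [Complex.norm_exp]
      simp

lemma KKs_int {l : ℝ} (hl : 0 < l) (w : ℝ) : Integrable fun v => KK (l * (v - w)) :=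
  (KK_int.comp_mul_left' hl.ne').comp_sub_right w

lemma stepB {l w : ℝ} (hl : 0 < l) :
    ∫ v in Set.Ioi (0:ℝ), (ff v : ℂ) * (KK (l * (v - w)) : ℂ) =
    ∫ τ : ℝ, (tri τ : ℂ) * Complex.exp (-(Complex.I * τ * l * w)) * GG (- Complex.I * τ * l) := by
  have hlim : ∀ v : ℝ, Tendsto (fun e : ℝ => Complex.exp (-(e:ℂ) * v)) (nhdsWithin 0 (Set.Ioi 0))
      (nhds 1) := by
    intro v
    have : Continuous fun e : ℝ => Complex.exp (-(e:ℂ) * v) := by fun_prop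
    have h := this.tendsto 0
    simp at h
    simpa using h.mono_left nhdsWithin_le_nhds
  have hL : Tendsto (fun e : ℝ => ∫ v in Set.Ioi (0:ℝ), (ff v : ℂ) * Complex.exp (-(e:ℂ) * v) *
      (KK (l * (v - w)) : ℂ)) (nhdsWithin 0 (Set.Ioi 0))
      (nhds (∫ v in Set.Ioi (0:ℝ), (ff v : ℂ) * (KK (l * (v - w)) : ℂ))) := by
    apply tendsto_integral_filter_of_dominated_convergence (fun v => CC * KK (l * (v - w)))
    · filter_upwards with e
      have h1 : Measurable fun v : ℝ => Complex.exp (-(e:ℂ) * v) := by fun_prop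
      have h2 : Measurable fun v : ℝ => (KK (l * (v - w)) : ℂ) :=
        Complex.measurable_ofReal.comp (KK_meas.comp (by fun_prop))
      exact ((ffc_meas.mul h1).mul h2).aestronglyMeasurable
    · filter_upwards [self_mem_nhdsWithin] with e he
      have he' : (0:ℝ) < e := he
      filter_upwards [ae_restrict_mem measurableSet_Ioi] with v hv
      have hv' : (0:ℝ) < v := hv
      rw [norm_mul, norm_mul, Complex.norm_exp, Complex.norm_real, Complex.norm_real,
        Real.norm_of_nonneg (KK_nonneg _), Real.norm_eq_abs]
      have h3 : Real.exp (-(e:ℂ) * v).re ≤ 1 := by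
        rw [Real.exp_le_one_iff]; simp; positivity
      have h4 := ff_bound v
      have : |ff v| * Real.exp (-(e:ℂ) * v).re ≤ CC * 1 := by
        gcongr; linarith [CC_pos]
      rw [mul_one] at this
      exact mul_le_mul_of_nonneg_right this (KK_nonneg _)
    · exact ((KKs_int hl w).const_mul CC).integrableOn
    · filter_upwards with v
      have := ((hlim v).const_mul (ff v : ℂ)).mul_const (KK (l * (v - w)) : ℂ)
      simpa using this
  obtain ⟨B, hB⟩ : ∃ B : ℝ, ∀ z ∈ (fun p : ℝ × ℝ => (p.1 : ℂ) - Complex.I * p.2 * l) ''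
      (Set.Icc (0:ℝ) 1 ×ˢ Set.Icc (-1:ℝ) 1), ‖GG z‖ ≤ B := by
    have hc : IsCompact ((fun p : ℝ × ℝ => (p.1 : ℂ) - Complex.I * p.2 * l) ''
      (Set.Icc (0:ℝ) 1 ×ˢ Set.Icc (-1:ℝ) 1)) :=
      (isCompact_Icc.prod isCompact_Icc).image (by fun_prop)
    apply hc.exists_bound_of_continuousOn
    apply GG_cont.mono
    rintro z ⟨p, hp, rfl⟩
    simpa using hp.1.1
  have hRc : ∀ e : ℝ, 0 ≤ e → Continuous fun τ : ℝ => GG (e - Complex.I * τ * l) := by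
    intro e he
    refine GG_cont.comp_continuous (by fun_prop) ?_
    intro τ
    simpa using he
  have hR : Tendsto (fun e : ℝ => ∫ τ : ℝ, (tri τ : ℂ) * Complex.exp (-(Complex.I * τ * l * w)) *
      GG (e - Complex.I * τ * l)) (nhdsWithin 0 (Set.Ioi 0))
      (nhds (∫ τ : ℝ, (tri τ : ℂ) * Complex.exp (-(Complex.I * τ * l * w)) *
        GG (- Complex.I * τ * l))) := by
    apply tendsto_integral_filter_of_dominated_convergence (fun τ => tri τ * B)
    · filter_upwards [self_mem_nhdsWithin] with e he
      have he' : (0:ℝ) < e := he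
      have h1 := hRc e he'.le
      have h2 := tri_cont
      apply Continuous.aestronglyMeasurable
      fun_prop
    · have : Set.Ioo (0:ℝ) 1 ∈ nhdsWithin (0:ℝ) (Set.Ioi 0) := Ioo_mem_nhdsGT one_pos
      filter_upwards [this] with e he
      filter_upwards with τ
      by_cases hτ : τ ∈ Set.Ioc (-1:ℝ) 1
      · rw [norm_mul, norm_mul, Complex.norm_exp, Complex.norm_real,
          Real.norm_of_nonneg (tri_nonneg _)]
        have h3 : Real.exp (-(Complex.I * τ * l * w)).re = 1 := by simp
        rw [h3, mul_one]
        refine mul_le_mul_of_nonneg_left ?_ (tri_nonneg _)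
        apply hB
        exact ⟨(e, τ), ⟨⟨he.1.le, he.2.le⟩, Set.Ioc_subset_Icc_self hτ⟩, rfl⟩
      · simp [tri_zero hτ]
    · exact tri_int.mul_const B
    · filter_upwards with τ
      apply Tendsto.const_mul
      have h0 : ContinuousWithinAt GG {s | 0 ≤ s.re} (- Complex.I * τ * l) := GG_cont _ (by simp)
      refine h0.tendsto.comp ?_
      rw [tendsto_nhdsWithin_iff]
      constructor
      · have : Continuous fun e : ℝ => (e:ℂ) - Complex.I * τ * l := by fun_prop
        have h := this.tendsto 0
        simp only [Complex.ofReal_zero, zero_sub] at h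
        have e1 : - Complex.I * τ * l = -(Complex.I * τ * l) := by ring
        rw [e1]
        exact h.mono_left nhdsWithin_le_nhds
      · filter_upwards [self_mem_nhdsWithin] with e he
        have he' : (0:ℝ) < e := he
        simpa using he'.le
  refine tendsto_nhds_unique hL (hR.congr' ?_)
  filter_upwards [self_mem_nhdsWithin] with e he
  exact (stepA he).symm

lemma stepC {l : ℝ} (hl : 0 < l) :
    Tendsto (fun w : ℝ => ∫ v in Set.Ioi (0:ℝ), ff v * KK (l * (v - w))) atTop (nhds 0) := by
  have h := Real.tendsto_integral_exp_smul_cocompact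
    (fun τ : ℝ => (tri τ : ℂ) * GG (- Complex.I * τ * l))
  have h2 : Tendsto (fun w : ℝ => l * w / (2 * Real.pi)) atTop (cocompact ℝ) := by
    have : Tendsto (fun w : ℝ => l * w / (2 * Real.pi)) atTop atTop := by
      apply Tendsto.atTop_div_const (by positivity)
      exact tendsto_id.const_mul_atTop hl
    exact this.mono_right atTop_le_cocompact
  have h3 := h.comp h2
  have h4 : Tendsto (fun w : ℝ => ((∫ v in Set.Ioi (0:ℝ), ff v * KK (l * (v - w)) : ℝ) : ℂ))
      atTop (nhds 0) := by
    refine h3.congr ?_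
    intro w
    rw [← integral_complex_ofReal]
    have := stepB hl (w := w)
    push_cast
    rw [this]
    simp only [Function.comp]
    congr 1
    funext τ
    rw [Circle.smul_def, Real.fourierChar_apply, smul_eq_mul]
    have : Complex.exp (((2 * Real.pi * -(τ * (l * w / (2 * Real.pi))) : ℝ) : ℂ) * Complex.I) =
        Complex.exp (-(Complex.I * τ * l * w)) := by
      congr 1
      have : (2 * Real.pi * -(τ * (l * w / (2 * Real.pi)))) = -(τ * l * w) := by
        field_simp
      rw [this]; push_cast; ring
    rw [this]; ring
  have h5 := (Complex.continuous_re.tendsto 0).comp h4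
  simpa [Function.comp_def] using h5

end MLPF

namespace MLPF

open ArithmeticFunction Chebyshev

lemma KK_pos : 0 < ∫ u, KK u := by
  rw [integral_pos_iff_support_of_nonneg KK_nonneg KK_int]
  have : Set.Ioo (0:ℝ) 1 ⊆ Function.support KK := by
    intro x hx
    have hx0 : x ≠ 0 := hx.1.ne'
    have h1 : Real.cos x < 1 := by
      have := Real.cos_lt_cos_of_nonneg_of_le_pi (x := 0) (y := x) le_rfl
        (by linarith [hx.2, Real.pi_gt_three]) hx.1
      simpa using this
    simp only [Function.mem_support, KK, if_neg hx0]
    have : 0 < 2 * (1 - Real.cos x) / x ^ 2 := by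
      apply div_pos <;> [linarith; positivity]
    exact this.ne'
  refine lt_of_lt_of_le ?_ (measure_mono this)
  simp

lemma taub {c : ℝ} (hc : 0 < c) : ∃ U > 0, ∃ κ > 0, ∀ g : ℝ → ℝ, Measurable g →
    (∀ u, |g u| ≤ CC) → (∀ u, |u| ≤ U → c ≤ g u) → κ ≤ ∫ u, g u * KK u := by
  set M := ∫ u, KK u with hM
  have hMp : 0 < M := KK_pos
  have hC := CC_pos
  have h1 : Tendsto (fun n : ℝ => ∫ u in Set.Icc (-n) n, KK u) atTop (nhds M) :=
    (aecover_Icc tendsto_neg_atTop_atBot tendsto_id).integral_tendsto_of_countably_generated KK_int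
  have hlt : M - c * M / (2 * (c + CC)) < M := by
    have : 0 < c * M / (2 * (c + CC)) := by positivity
    linarith
  obtain ⟨U, hU1, hU⟩ := ((eventually_gt_atTop 0).and (h1.eventually (lt_mem_nhds hlt))).exists
  refine ⟨U, hU1, c * M / 2, by positivity, ?_⟩
  intro g hg hb hl
  have hi1 : Integrable ((Set.Icc (-U) U).indicator KK) := KK_int.indicator measurableSet_Icc
  have hi2 : Integrable fun u => g u * KK u :=
    KK_int.bdd_mul (c := CC) hg.aestronglyMeasurable (by filter_upwards with u using hb u)
  have hmono : ∫ u, ((c + CC) * (Set.Icc (-U) U).indicator KK u - CC * KK u) ≤ ∫ u, g u * KK u := by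
    apply integral_mono ((hi1.const_mul _).sub (KK_int.const_mul _)) hi2
    intro u
    have hk := KK_nonneg u
    have hb' := (abs_le.mp (hb u)).1
    show (c + CC) * (Set.Icc (-U) U).indicator KK u - CC * KK u ≤ g u * KK u
    by_cases hu : u ∈ Set.Icc (-U) U
    · have := hl u (abs_le.mpr hu)
      rw [Set.indicator_of_mem hu]
      nlinarith
    · rw [Set.indicator_of_notMem hu]
      nlinarith
  rw [integral_sub (hi1.const_mul _) (KK_int.const_mul _), integral_const_mul, integral_const_mul,
    integral_indicator measurableSet_Icc, ← hM] at hmono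
  have h2 : (c + CC) * (M - c * M / (2 * (c + CC))) = (c + CC) * M - c * M / 2 := by
    field_simp
  have h3 : (c + CC) * (M - c * M / (2 * (c + CC))) ≤ (c + CC) * ∫ u in Set.Icc (-U) U, KK u := by
    gcongr
  linarith

lemma resc {l : ℝ} (hl : 0 < l) (w : ℝ) :
    ∫ v in Set.Ioi (0:ℝ), ff v * KK (l * (v - w)) = l⁻¹ * ∫ u, ff (w + u / l) * KK u := by
  rw [setIntegral_eq_integral_of_forall_compl_eq_zero]
  · have h1 := integral_sub_right_eq_self (μ := volume) (fun x => ff (w + x) * KK (l * x)) w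
    have h2 := Measure.integral_comp_mul_left (fun y => ff (w + y / l) * KK y) l
    simp only [add_sub_cancel] at h1
    rw [h1]
    rw [abs_of_pos (by positivity), smul_eq_mul] at h2
    rw [← h2]
    congr 1
    funext x
    rw [mul_div_cancel_left₀ _ hl.ne']
  · intro v hv
    have : ¬ 0 < v := hv
    simp [ff, this]

lemma conv0 {l : ℝ} (hl : 0 < l) :
    Tendsto (fun w => ∫ u, ff (w + u / l) * KK u) atTop (nhds 0) := by
  have h := (stepC hl).const_mul l
  simp only [resc hl, mul_zero] at h
  refine h.congr fun w => ?_
  field_simp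

lemma ff_of_pos {v : ℝ} (h : 0 < v) : ff v = psi (Real.exp v) * Real.exp (-v) - 1 := if_pos h

lemma ff_mono {v w : ℝ} (hv : 0 < v) (hvw : v ≤ w) : (ff v + 1) * Real.exp (v - w) ≤ ff w + 1 := by
  rw [ff_of_pos hv, ff_of_pos (hv.trans_le hvw)]
  have h := psi_mono (Real.exp_le_exp.mpr hvw)
  have : Real.exp (-v) * Real.exp (v - w) = Real.exp (-w) := by rw [← Real.exp_add]; congr 1; ring
  simp only [sub_add_cancel, mul_assoc, this]
  gcongr

lemma ff_upper {ε : ℝ} (hε : 0 < ε) : ∀ᶠ w in atTop, ff w < ε := by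
  obtain ⟨U, hU, κ, hκ, H⟩ := taub (c := ε / 2) (by positivity)
  set h := Real.log ((1 + ε) / (1 + ε / 2)) with hh
  have hhp : 0 < h := Real.log_pos (by rw [lt_div_iff₀ (by positivity)]; linarith)
  have hexp : (1 + ε) * Real.exp (-h) = 1 + ε / 2 := by
    rw [hh, Real.exp_neg, Real.exp_log (by positivity)]; field_simp
  set l := 2 * U / h with hl
  have hlp : 0 < l := by positivity
  have h0 := (conv0 hlp).eventually (gt_mem_nhds hκ)
  have h1 : ∀ᶠ w : ℝ in atTop, ∫ u, ff (w + h / 2 + u / l) * KK u < κ :=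
    (tendsto_atTop_add_const_right _ (h / 2) tendsto_id).eventually h0
  filter_upwards [h1, eventually_gt_atTop 0] with w hw hw0
  by_contra hcon
  push Not at hcon
  refine absurd (H (fun u => ff (w + h / 2 + u / l)) (ff_meas.comp (by fun_prop))
    (fun u => ff_bound _) ?_) (not_le.mpr hw)
  intro u hu
  have hul : |u / l| ≤ h / 2 := by
    rw [abs_div, abs_of_pos hlp, div_le_iff₀ hlp, hl]
    field_simp; linarith
  obtain ⟨hu1, hu2⟩ := abs_le.mp hul
  have hm := ff_mono hw0 (w := w + h / 2 + u / l) (by linarith)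
  have : (1 + ε) * Real.exp (-h) ≤ (ff w + 1) * Real.exp (w - (w + h / 2 + u / l)) := by
    exact mul_le_mul (by linarith) (Real.exp_le_exp.mpr (by linarith)) (Real.exp_pos _).le
      (by linarith)
  linarith

lemma ff_lower {ε : ℝ} (hε : 0 < ε) (hε1 : ε < 1) : ∀ᶠ w in atTop, -ε < ff w := by
  obtain ⟨U, hU, κ, hκ, H⟩ := taub (c := ε / 2) (by positivity)
  set h := Real.log ((1 - ε / 2) / (1 - ε)) with hh
  have hhp : 0 < h := Real.log_pos (by rw [lt_div_iff₀ (by linarith)]; linarith)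
  have hexp : (1 - ε / 2) * Real.exp (-h) = 1 - ε := by
    have h2 : 0 < 1 - ε := by linarith
    have h3 : 0 < 1 - ε / 2 := by linarith
    rw [hh, Real.exp_neg, Real.exp_log (by positivity), inv_div, mul_div_cancel₀ _ h3.ne']
  set l := 2 * U / h with hl
  have hlp : 0 < l := by positivity
  have h0 := (conv0 hlp).eventually (lt_mem_nhds (neg_lt_zero.mpr hκ))
  have h1 : ∀ᶠ w : ℝ in atTop, -κ < ∫ u, ff (w + (- (h / 2)) + u / l) * KK u :=
    (tendsto_atTop_add_const_right _ (-(h / 2)) tendsto_id).eventually h0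
  filter_upwards [h1, eventually_gt_atTop h] with w hw hw0
  by_contra hcon
  push Not at hcon
  have hw' : ∫ u, - ff (w + (- (h / 2)) + u / l) * KK u < κ := by
    simp only [neg_mul, integral_neg]; linarith
  refine absurd (H (fun u => - ff (w + (- (h / 2)) + u / l)) (ff_meas.comp (by fun_prop)).neg
    (fun u => by rw [abs_neg]; exact ff_bound _) ?_) (not_le.mpr hw')
  intro u hu
  have hul : |u / l| ≤ h / 2 := by
    rw [abs_div, abs_of_pos hlp, div_le_iff₀ hlp, hl]
    field_simp; linarith
  obtain ⟨hu1, hu2⟩ := abs_le.mp hul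
  set v := w + (- (h / 2)) + u / l with hv
  have hm := ff_mono (v := v) (w := w) (by linarith) (by linarith)
  by_contra hc2
  push Not at hc2
  have : (1 - ε / 2) * Real.exp (-h) < (ff v + 1) * Real.exp (v - w) := by
    have e1 : Real.exp (-h) ≤ Real.exp (v - w) := Real.exp_le_exp.mpr (by linarith)
    have e2 : 0 < Real.exp (v - w) := Real.exp_pos _
    calc _ ≤ (1 - ε / 2) * Real.exp (v - w) := by gcongr; linarith
      _ < _ := by gcongr; linarith
  linarith

lemma ff_tendsto : Tendsto ff atTop (nhds 0) := by
  rw [Metric.tendsto_nhds]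
  intro ε hε
  filter_upwards [ff_upper hε, ff_lower (ε := min ε (1/2)) (by positivity)
    (lt_of_le_of_lt (min_le_right _ _) (by norm_num))] with w h1 h2
  rw [Real.dist_eq, sub_zero, abs_lt]
  exact ⟨by linarith [min_le_left ε (1/2)], h1⟩

/-- The prime number theorem. -/
lemma pnt : Tendsto (fun x : ℝ => psi x / x) atTop (nhds 1) := by
  have h := (ff_tendsto.comp Real.tendsto_log_atTop).add_const 1
  rw [zero_add] at h
  refine h.congr' ?_
  filter_upwards [eventually_gt_atTop 1] with x hx
  simp only [Function.comp]
  rw [ff_of_pos (Real.log_pos hx), Real.exp_neg, Real.exp_log (by linarith)]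
  field_simp; ring

end MLPF

namespace MLPF

open ArithmeticFunction Chebyshev

lemma sum_floor (n : ℕ) :
    ∑ i ∈ Finset.Icc 1 n, vonMangoldt i * ((n / i : ℕ) : ℝ) = Real.log (n.factorial : ℝ) := by
  induction n with
  | zero => simp
  | succ n ih =>
    rw [Nat.factorial_succ, Nat.cast_mul, Real.log_mul (by positivity) (by positivity), ← ih,
      ← vonMangoldt_sum]
    have h1 : ∀ i, vonMangoldt i * (((n + 1) / i : ℕ) : ℝ)
        = (if i ∣ n + 1 then vonMangoldt i else 0) + vonMangoldt i * ((n / i : ℕ) : ℝ) := by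
      intro i
      rw [Nat.succ_div]
      split_ifs <;> push_cast <;> ring
    simp only [h1]
    rw [Finset.sum_add_distrib]
    congr 1
    · rw [← Finset.sum_filter]
      apply Finset.sum_congr _ (fun _ _ => rfl)
      ext i
      simp only [Finset.mem_filter, Finset.mem_Icc, Nat.mem_divisors]
      constructor
      · rintro ⟨_, h⟩; exact ⟨h, by omega⟩
      · rintro ⟨h, _⟩; exact ⟨⟨Nat.pos_of_dvd_of_pos h (by omega), Nat.le_of_dvd (by omega) h⟩, h⟩
    · rw [Finset.sum_Icc_succ_top (by omega)]
      rw [Nat.div_eq_of_lt (Nat.lt_succ_self n)]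
      simp

noncomputable def mm (n : ℕ) : ℝ := ∑ i ∈ Finset.Icc 1 n, vonMangoldt i / i

noncomputable def dl (n : ℕ) : ℝ :=
  ∑ i ∈ Finset.Icc 1 n, vonMangoldt i * (((n % i : ℕ) : ℝ) / i)

lemma mm_eq (n : ℕ) : n * mm n = Real.log (n.factorial : ℝ) + dl n := by
  rw [← sum_floor, mm, dl, ← Finset.sum_add_distrib, Finset.mul_sum]
  apply Finset.sum_congr rfl
  intro i hi
  have h1 : 1 ≤ i := (Finset.mem_Icc.mp hi).1
  have hi0 : (i : ℝ) ≠ 0 := by positivity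
  have h2 : (n : ℝ) = i * ((n / i : ℕ) : ℝ) + ((n % i : ℕ) : ℝ) := by
    exact_mod_cast (Nat.div_add_mod n i).symm
  field_simp
  rw [← h2]; ring

lemma fact_lower {n : ℕ} (hn : 1 ≤ n) : n * Real.log n - n ≤ Real.log (n.factorial : ℝ) := by
  have h := Stirling.le_log_factorial_stirling (n := n) (by omega)
  have h1 : 0 ≤ Real.log n := Real.log_natCast_nonneg n
  have h2 : 0 ≤ Real.log (2 * Real.pi) := Real.log_nonneg (by linarith [Real.pi_gt_three])
  linarith

lemma fact_upper {n : ℕ} (hn : 1 ≤ n) :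
    Real.log (n.factorial : ℝ) ≤ n * Real.log n - n + Real.log n + 1 := by
  induction n, hn using Nat.le_induction with
  | base => simp
  | succ n hn ih =>
    rw [Nat.factorial_succ, Nat.cast_mul, Real.log_mul (by positivity) (by positivity)]
    have hn0 : (0:ℝ) < n := by exact_mod_cast hn
    have h := Real.one_sub_inv_le_log_of_pos (x := ((n:ℝ) + 1) / n) (by positivity)
    rw [Real.log_div (by positivity) (by positivity)] at h
    have h3 : ((n:ℝ) + 1) * (1 - (((n:ℝ) + 1) / n)⁻¹) = 1 := by field_simp; ring
    have h4 : ((n:ℝ) + 1) * (1 - (((n:ℝ) + 1) / n)⁻¹) ≤ (n + 1) * (Real.log (n+1) - Real.log n) := by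
      gcongr
    push_cast
    nlinarith

def blo (j : ℕ) : ℤ := if j = 6 then 0 else if j % 6 = 0 then -5 else 1
def bhi (j : ℕ) : ℤ := if j = 36 then 0 else if j = 6 then 1 else if j % 6 = 0 then -5 else 1

lemma sum_b_const (b : ℕ → ℤ) {J : ℕ} (hJ : 36 ≤ J) :
    ∑ j ∈ Finset.Icc 6 36, (if j ≤ J then b j else 0)
      = ∑ j ∈ Finset.Icc 6 36, (if j ≤ 36 then b j else 0) := by
  apply Finset.sum_congr rfl
  intro j hj
  have := (Finset.mem_Icc.mp hj).2
  rw [if_pos this, if_pos (by omega)]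

lemma lo_fin : ∀ J < 37, ∑ j ∈ Finset.Icc 6 36, (if j ≤ J then blo j else 0) ≤ ((J % 6 : ℕ) : ℤ) := by
  decide +kernel

lemma hi_fin : ∀ J < 37, 6 ≤ J →
    ((J % 6 : ℕ) : ℤ) + 1 ≤ ∑ j ∈ Finset.Icc 6 36, (if j ≤ J then bhi j else 0) := by
  decide +kernel

lemma hi_fin' : 6 ≤ ∑ j ∈ Finset.Icc 6 36, (if j ≤ 36 then bhi j else 0) := by
  decide +kernel

lemma lo_fin' : ∑ j ∈ Finset.Icc 6 36, (if j ≤ 36 then blo j else 0) ≤ 0 := by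
  decide +kernel

lemma lo_all (J : ℕ) : ∑ j ∈ Finset.Icc 6 36, (if j ≤ J then blo j else 0) ≤ ((J % 6 : ℕ) : ℤ) := by
  rcases lt_or_ge J 37 with h | h
  · exact lo_fin J h
  · rw [sum_b_const _ (by omega)]
    exact lo_fin'.trans (by positivity)

lemma hi_all {J : ℕ} (hJ : 6 ≤ J) :
    ((J % 6 : ℕ) : ℤ) + 1 ≤ ∑ j ∈ Finset.Icc 6 36, (if j ≤ J then bhi j else 0) := by
  rcases lt_or_ge J 37 with h | h
  · exact hi_fin J h hJ
  · rw [sum_b_const _ (by omega)]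
    refine le_trans ?_ hi_fin'
    omega

lemma psi_swap (b : ℕ → ℤ) (n : ℕ) :
    ∑ i ∈ Finset.Icc 1 n, vonMangoldt i *
      ((∑ j ∈ Finset.Icc 6 36, (if j ≤ 6 * n / i then b j else 0) : ℤ) : ℝ)
    = ∑ j ∈ Finset.Icc 6 36, (b j : ℝ) * psi ((6 / (j:ℝ)) * n) := by
  push_cast
  simp only [Finset.mul_sum]
  rw [Finset.sum_comm]
  apply Finset.sum_congr rfl
  intro j hj
  have hj6 := (Finset.mem_Icc.mp hj).1
  have hfl : ⌊(6 / (j:ℝ)) * n⌋₊ = 6 * n / j := by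
    rw [← Nat.floor_div_eq_div (K := ℝ)]
    congr 1
    push_cast; ring
  rw [psi, hfl, Finset.mul_sum]
  have : ∀ i ∈ Finset.Icc 1 n, vonMangoldt i * (if j ≤ 6 * n / i then (b j : ℝ) else 0)
      = if i ≤ 6 * n / j then (b j : ℝ) * vonMangoldt i else 0 := by
    intro i hi
    have hi1 := (Finset.mem_Icc.mp hi).1
    have : j ≤ 6 * n / i ↔ i ≤ 6 * n / j := by
      rw [Nat.le_div_iff_mul_le (by omega), Nat.le_div_iff_mul_le (by omega), mul_comm]
    simp only [this]
    split_ifs <;> ring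
  rw [Finset.sum_congr rfl this, ← Finset.sum_filter]
  apply Finset.sum_congr _ (fun _ _ => rfl)
  ext i
  simp only [Finset.mem_filter, Finset.mem_Icc, Finset.mem_Ioc]
  constructor
  · rintro ⟨⟨h1, h2⟩, h3⟩; exact ⟨h1, h3⟩
  · rintro ⟨h1, h2⟩
    refine ⟨⟨h1, h2.trans ?_⟩, h2⟩
    calc 6 * n / j ≤ 6 * n / 6 := Nat.div_le_div_left hj6 (by norm_num)
      _ = n := by omega

lemma mod_facts {n i : ℕ} (hi : 1 ≤ i) (hin : i ≤ n) : 6 ≤ 6 * n / i ∧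
    (((6 * n / i) % 6 : ℕ) : ℝ) ≤ 6 * (((n % i : ℕ) : ℝ) / i) ∧
    6 * (((n % i : ℕ) : ℝ) / i) ≤ (((6 * n / i) % 6 : ℕ) : ℝ) + 1 := by
  have hi0 : (0:ℝ) < i := by exact_mod_cast hi
  have hr := Nat.mod_lt n hi
  have h1 : 6 * n / i = 6 * (n % i) / i + 6 * (n / i) := by
    conv_lhs => rw [← Nat.mod_add_div n i]
    rw [show 6 * (n % i + i * (n / i)) = 6 * (n % i) + i * (6 * (n / i)) by ring,
      Nat.add_mul_div_left _ _ hi]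
  have h2 : 6 * (n % i) / i < 6 := by rw [Nat.div_lt_iff_lt_mul hi]; omega
  have h3 : (6 * n / i) % 6 = 6 * (n % i) / i := by
    rw [h1, Nat.add_mul_mod_self_left, Nat.mod_eq_of_lt h2]
  have h4 : 1 ≤ n / i := (Nat.one_le_div_iff hi).mpr hin
  refine ⟨by rw [h1]; omega, ?_, ?_⟩
  · rw [h3, ← mul_div_assoc, le_div_iff₀ hi0]
    exact_mod_cast Nat.div_mul_le_self _ _
  · rw [h3, ← mul_div_assoc, div_le_iff₀ hi0]
    have := (Nat.lt_div_mul_add (a := 6 * (n % i)) hi).le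
    rw [add_mul, one_mul]
    exact_mod_cast this

lemma dl_lower (n : ℕ) :
    ∑ j ∈ Finset.Icc 6 36, (blo j : ℝ) * psi ((6 / (j:ℝ)) * n) ≤ 6 * dl n := by
  rw [← psi_swap, dl, Finset.mul_sum]
  apply Finset.sum_le_sum
  intro i hi
  obtain ⟨h1, h2⟩ := Finset.mem_Icc.mp hi
  obtain ⟨h3, h4, h5⟩ := mod_facts h1 h2
  have h6 : ((∑ j ∈ Finset.Icc 6 36, (if j ≤ 6 * n / i then blo j else 0) : ℤ) : ℝ)
    ≤ (((6 * n / i) % 6 : ℕ) : ℝ) := by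
    have := (Int.cast_le (R := ℝ)).mpr (lo_all (6 * n / i))
    rwa [Int.cast_natCast] at this
  calc _ ≤ vonMangoldt i * (6 * (((n % i : ℕ) : ℝ) / i)) :=
        mul_le_mul_of_nonneg_left (h6.trans h4) vonMangoldt_nonneg
    _ = _ := by ring

lemma dl_upper (n : ℕ) :
    6 * dl n ≤ ∑ j ∈ Finset.Icc 6 36, (bhi j : ℝ) * psi ((6 / (j:ℝ)) * n) := by
  rw [← psi_swap, dl, Finset.mul_sum]
  apply Finset.sum_le_sum
  intro i hi
  obtain ⟨h1, h2⟩ := Finset.mem_Icc.mp hi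
  obtain ⟨h3, h4, h5⟩ := mod_facts h1 h2
  have h6 : (((6 * n / i) % 6 : ℕ) : ℝ) + 1
    ≤ ((∑ j ∈ Finset.Icc 6 36, (if j ≤ 6 * n / i then bhi j else 0) : ℤ) : ℝ) := by
    have := (Int.cast_le (R := ℝ)).mpr (hi_all h3)
    rwa [Int.cast_add, Int.cast_one, Int.cast_natCast] at this
  calc _ = vonMangoldt i * (6 * (((n % i : ℕ) : ℝ) / i)) := by ring
    _ ≤ _ := mul_le_mul_of_nonneg_left (h5.trans h6) vonMangoldt_nonneg

lemma psi_lin {c : ℝ} (hc : 0 < c) :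
    Tendsto (fun n : ℕ => psi (c * n) / n) atTop (nhds c) := by
  have h1 : Tendsto (fun n : ℕ => c * (n:ℝ)) atTop atTop :=
    tendsto_natCast_atTop_atTop.const_mul_atTop hc
  have h2 := (pnt.comp h1).const_mul c
  rw [mul_one] at h2
  refine h2.congr fun n => ?_
  simp only [Function.comp]
  field_simp

lemma psi_comb (b : ℕ → ℤ) :
    Tendsto (fun n : ℕ => (∑ j ∈ Finset.Icc 6 36, (b j : ℝ) * psi ((6 / (j:ℝ)) * n)) / n) atTop
      (nhds (∑ j ∈ Finset.Icc 6 36, (b j : ℝ) * (6 / (j:ℝ)))) := by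
  simp only [Finset.sum_div, mul_div_assoc]
  apply tendsto_finsetSum
  intro j hj
  have : 6 ≤ j := (Finset.mem_Icc.mp hj).1
  have hj : (0:ℝ) < j := by exact_mod_cast (by omega : 0 < j)
  exact (psi_lin (by positivity)).const_mul _

lemma lo_val : 6 * 0.274 < ∑ j ∈ Finset.Icc 6 36, (blo j : ℝ) * (6 / (j:ℝ)) := by
  rw [show Finset.Icc 6 36 = Finset.Ico 6 37 from rfl, Finset.sum_Ico_eq_sum_range]
  norm_num [Finset.sum_range_succ, blo]

lemma hi_val : ∑ j ∈ Finset.Icc 6 36, (bhi j : ℝ) * (6 / (j:ℝ)) < 6 * 0.5805 := by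
  rw [show Finset.Icc 6 36 = Finset.Ico 6 37 from rfl, Finset.sum_Ico_eq_sum_range]
  norm_num [Finset.sum_range_succ, bhi]

lemma dl_bounds : ∀ᶠ n : ℕ in atTop, 0.274 * n ≤ dl n ∧ dl n ≤ 0.5805 * n := by
  filter_upwards [(psi_comb blo).eventually (lt_mem_nhds lo_val),
    (psi_comb bhi).eventually (gt_mem_nhds hi_val), eventually_gt_atTop 0] with n h1 h2 hn
  have hn0 : (0:ℝ) < n := by exact_mod_cast hn
  rw [lt_div_iff₀ hn0] at h1
  rw [div_lt_iff₀ hn0] at h2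
  constructor
  · linarith [dl_lower n]
  · linarith [dl_upper n]

lemma mm_bounds : ∀ᶠ n : ℕ in atTop,
    Real.log n - 0.726 ≤ mm n ∧ mm n ≤ Real.log n - 0.419 := by
  have h0 : Tendsto (fun n : ℕ => (Real.log n + 1) / (n:ℝ)) atTop (nhds 0) := by
    have h1 : Tendsto (fun x : ℝ => (Real.log x + 1) / x) atTop (nhds 0) := by
      have := (Real.isLittleO_log_id_atTop.tendsto_div_nhds_zero).add tendsto_inv_atTop_zero
      rw [add_zero] at this
      refine this.congr fun x => ?_
      simp [add_div]
    exact h1.comp tendsto_natCast_atTop_atTop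
  filter_upwards [dl_bounds, h0.eventually (gt_mem_nhds (show (0:ℝ) < 0.0005 by norm_num)),
    eventually_gt_atTop 0] with n h1 h2 hn
  have hn0 : (0:ℝ) < n := by exact_mod_cast hn
  rw [div_lt_iff₀ hn0] at h2
  have h3 := mm_eq n
  have h4 := fact_lower (n := n) hn
  have h5 := fact_upper (n := n) hn
  constructor
  · apply le_of_mul_le_mul_left _ hn0
    nlinarith
  · apply le_of_mul_le_mul_left _ hn0
    nlinarith

end MLPF

namespace MLPF

open ArithmeticFunction Chebyshev

lemma mm_succ (n : ℕ) : mm (n + 1) = mm n + vonMangoldt (n + 1) / ((n + 1 : ℕ) : ℝ) := by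
  rw [mm, mm, Finset.sum_Icc_succ_top (by omega)]

lemma loglog_step {n : ℕ} (hn : 2 ≤ n) :
    Real.log n * (1 / Real.log n - 1 / Real.log ((n + 1 : ℕ) : ℝ)) ≤
      Real.log (Real.log ((n + 1 : ℕ) : ℝ)) - Real.log (Real.log n) := by
  have hn1 : (1:ℝ) < n := by exact_mod_cast hn
  have h1 : 0 < Real.log n := Real.log_pos hn1
  have h2 : 0 < Real.log ((n + 1 : ℕ) : ℝ) := Real.log_pos (by push_cast; linarith)
  have h := Real.one_sub_inv_le_log_of_pos (x := Real.log ((n + 1 : ℕ) : ℝ) / Real.log n)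
    (by positivity)
  rw [Real.log_div h2.ne' h1.ne'] at h
  convert h using 1
  field_simp

lemma abel {d c : ℝ} {k : ℕ} (hk : 2 ≤ k) (hm : ∀ n ≥ k, mm n ≤ Real.log n - d) {M : ℕ}
    (hM : k + 1 ≤ M) :
    ∑ n ∈ Finset.Ioc k M, vonMangoldt n / n * (1 / Real.log n - c) ≤
      mm M * (1 / Real.log M - c) - mm k * (1 / Real.log ((k + 1 : ℕ) : ℝ) - c)
      + Real.log (Real.log M) - Real.log (Real.log ((k + 1 : ℕ) : ℝ))
      - d * (1 / Real.log ((k + 1 : ℕ) : ℝ) - 1 / Real.log M) := by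
  induction M, hM using Nat.le_induction with
  | base =>
    rw [Finset.sum_Ioc_succ_top (le_refl k), Finset.Ioc_self, Finset.sum_empty, mm_succ]
    apply le_of_eq; ring
  | succ M hM ih =>
    rw [Finset.sum_Ioc_succ_top (by omega), mm_succ]
    have hs := loglog_step (n := M) (by omega)
    have hmM := hm M (by omega)
    have hM1 : (1:ℝ) < M := by exact_mod_cast (by omega : 1 < M)
    have h1 : 0 < Real.log M := Real.log_pos hM1
    have h3 : Real.log M ≤ Real.log ((M + 1 : ℕ) : ℝ) :=
      Real.log_le_log (by linarith) (by push_cast; linarith)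
    have h4 : 0 ≤ 1 / Real.log M - 1 / Real.log ((M + 1 : ℕ) : ℝ) :=
      sub_nonneg.mpr (one_div_le_one_div_of_le h1 h3)
    have h5 := mul_le_mul_of_nonneg_right hmM h4
    linarith

lemma core {N k : ℕ} (hk : 1000 ≤ k) (hkN : k + 1 ≤ N)
    (hm : ∀ n ≥ k, Real.log n - 0.726 ≤ mm n ∧ mm n ≤ Real.log n - 0.419)
    (hL : Real.log N ≤ Real.exp (1 / 2) * Real.log ((k + 1 : ℕ) : ℝ))
    (he1 : Real.log N + 1 ≤ 0.001 * N) (he2 : psi k ≤ 0.001 * N) :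
    ∑ n ∈ Finset.Ioc k N, vonMangoldt n / Real.log n * ((N / n : ℕ) : ℝ) ≤ N / 2 := by
  have hN0 : (0:ℝ) < N := by exact_mod_cast (by omega : 0 < N)
  have hk0 : (1000:ℝ) ≤ k := by exact_mod_cast hk
  set L := Real.log N with hLdef
  set l := Real.log ((k + 1 : ℕ) : ℝ) with hl
  have hlp : 0 < l := Real.log_pos (by push_cast; linarith)
  have hlL : l ≤ L := Real.log_le_log (by positivity) (by exact_mod_cast hkN)
  have hLp : 0 < L := hlp.trans_le hlL
  -- first part
  have hfl : ∑ n ∈ Finset.Ioc k N, vonMangoldt n * ((N / n : ℕ) : ℝ)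
      ≤ N * L - N + L + 1 - N * mm k + psi k := by
    have h1 := sum_floor N
    have h2 := fact_upper (n := N) (by omega)
    have h3 : ∑ i ∈ Finset.Icc 1 N, vonMangoldt i * ((N / i : ℕ) : ℝ)
        = ∑ i ∈ Finset.Icc 1 k, vonMangoldt i * ((N / i : ℕ) : ℝ)
          + ∑ i ∈ Finset.Ioc k N, vonMangoldt i * ((N / i : ℕ) : ℝ) := by
      have e : ∀ t, Finset.Icc 1 t = Finset.Ioc 0 t := fun t => by ext; simp; omega
      rw [e, e, Finset.sum_Ioc_consecutive _ (by omega) (by omega)]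
    have h4 : N * mm k - psi k ≤ ∑ i ∈ Finset.Icc 1 k, vonMangoldt i * ((N / i : ℕ) : ℝ) := by
      have e : psi k = ∑ i ∈ Finset.Icc 1 k, vonMangoldt i := by
        rw [psi, Nat.floor_natCast]
        rfl
      rw [e, mm, Finset.mul_sum, ← Finset.sum_sub_distrib]
      apply Finset.sum_le_sum
      intro i hi
      have hi1 := (Finset.mem_Icc.mp hi).1
      have hi0 : (0:ℝ) < i := by exact_mod_cast hi1
      have h5 : (N:ℝ) / i ≤ ((N / i : ℕ) : ℝ) + 1 := by
        rw [div_le_iff₀ hi0, add_mul, one_mul]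
        exact_mod_cast (Nat.lt_div_mul_add (a := N) hi1).le
      have h6 := mul_le_mul_of_nonneg_left h5 (vonMangoldt_nonneg (n := i))
      have h7 : (N:ℝ) * (vonMangoldt i / i) = vonMangoldt i * (N / i) := by ring
      linarith
    linarith
  have hab := abel (c := 1 / L) (by omega : 2 ≤ k) (fun n hn => (hm n hn).2) hkN
  rw [← hLdef, ← hl, sub_self, mul_zero, zero_sub] at hab
  have hll : Real.log L - Real.log l ≤ 1 / 2 := by
    rw [← Real.log_div hLp.ne' hlp.ne', Real.log_le_iff_le_exp (by positivity), div_le_iff₀ hlp]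
    exact hL
  have hsplit : ∑ n ∈ Finset.Ioc k N, vonMangoldt n / Real.log n * ((N / n : ℕ) : ℝ) ≤
      (1 / L) * ∑ n ∈ Finset.Ioc k N, vonMangoldt n * ((N / n : ℕ) : ℝ) +
      N * ∑ n ∈ Finset.Ioc k N, vonMangoldt n / n * (1 / Real.log n - 1 / L) := by
    rw [Finset.mul_sum, Finset.mul_sum, ← Finset.sum_add_distrib]
    apply Finset.sum_le_sum
    intro n hn
    obtain ⟨hn1, hn2⟩ := Finset.mem_Ioc.mp hn
    have hn0 : (1:ℝ) < n := by exact_mod_cast (by omega : 1 < n)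
    have hln : 0 < Real.log n := Real.log_pos hn0
    have hln2 : Real.log n ≤ L := Real.log_le_log (by linarith) (by exact_mod_cast hn2)
    have hphi : 0 ≤ 1 / Real.log n - 1 / L := sub_nonneg.mpr (one_div_le_one_div_of_le hln hln2)
    have hd : ((N / n : ℕ) : ℝ) ≤ (N:ℝ) / n := Nat.cast_div_le
    have := mul_le_mul_of_nonneg_left hd (mul_nonneg (vonMangoldt_nonneg (n := n)) hphi)
    calc _ = 1 / L * (vonMangoldt n * ((N / n : ℕ) : ℝ)) +
          vonMangoldt n * (1 / Real.log n - 1 / L) * ((N / n : ℕ) : ℝ) := by ring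
      _ ≤ 1 / L * (vonMangoldt n * ((N / n : ℕ) : ℝ)) +
          vonMangoldt n * (1 / Real.log n - 1 / L) * (N / n) := by linarith
      _ = _ := by ring
  have hmk : l - 0.727 ≤ mm k := by
    have h1 := (hm k le_rfl).1
    have h2 : l - Real.log k ≤ 0.001 := by
      have h3 := Real.log_le_sub_one_of_pos (x := ((k + 1 : ℕ) : ℝ) / k) (by positivity)
      rw [Real.log_div (by positivity) (by positivity)] at h3
      have h4 : ((k + 1 : ℕ) : ℝ) / k - 1 ≤ 0.001 := by
        have : ((k + 1 : ℕ) : ℝ) / k - 1 = 1 / k := by push_cast; field_simp; ring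
        rw [this, div_le_iff₀ (by linarith)]
        linarith
      linarith
    linarith
  have hr : Real.exp (1 / 2) < 1.65 := by
    have h1 : Real.exp (1 / 2) ^ 2 = Real.exp 1 := by
      rw [← Real.exp_nat_mul]; norm_num
    have h2 := Real.exp_one_lt_d9
    nlinarith [Real.exp_pos (1 / 2)]
  have hL2 : L ≤ 1.65 * l := hL.trans (by nlinarith)
  have e1 : (1 / L) * ∑ n ∈ Finset.Ioc k N, vonMangoldt n * ((N / n : ℕ) : ℝ)
      ≤ (1 / L) * (N * (L - 1 - mm k + 0.002)) := by
    apply mul_le_mul_of_nonneg_left _ (by positivity)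
    nlinarith
  have e2 : (N:ℝ) * ∑ n ∈ Finset.Ioc k N, vonMangoldt n / n * (1 / Real.log n - 1 / L)
      ≤ N * (1 / 2 - (mm k + 0.419) * (1 / l - 1 / L)) := by
    apply mul_le_mul_of_nonneg_left _ hN0.le
    linarith
  have e3 : (1 / L) * (N * (L - 1 - mm k + 0.002)) +
      N * (1 / 2 - (mm k + 0.419) * (1 / l - 1 / L))
      = N * (1 / 2 + (1 - (mm k + 0.419) / l - 0.579 / L)) := by
    field_simp; ring
  have e4 : 1 - (mm k + 0.419) / l - 0.579 / L ≤ 0 := by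
    have h1 : (l - 0.308) / l ≤ (mm k + 0.419) / l := by
      apply div_le_div_of_nonneg_right _ hlp.le; linarith
    have h2 : (l - 0.308) / l = 1 - 0.308 / l := by field_simp
    have h3 : 0.308 / l ≤ 0.579 / L := by
      rw [div_le_div_iff₀ hlp hLp]
      nlinarith
    linarith
  nlinarith

lemma lpf_dvd {n : ℕ} (hn : 2 ≤ n) :
    (largestPrimeFactor n).Prime ∧ largestPrimeFactor n ∣ n := by
  have hne : n.primeFactors.Nonempty := Nat.nonempty_primeFactors.mpr hn
  obtain ⟨p, hp, hp2⟩ := Finset.exists_mem_eq_sup _ hne id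
  have : largestPrimeFactor n = p := by
    rw [largestPrimeFactor, if_neg (by omega), hp2]; rfl
  rw [this]
  exact ⟨Nat.prime_of_mem_primeFactors hp, Nat.dvd_of_mem_primeFactors hp⟩

lemma count_le {N k : ℕ} (hk : 1 ≤ k) :
    (((Finset.Icc 1 N).filter (fun n => k < largestPrimeFactor n)).card : ℝ) ≤
      ∑ n ∈ Finset.Ioc k N, vonMangoldt n / Real.log n * ((N / n : ℕ) : ℝ) := by
  have h1 : (Finset.Icc 1 N).filter (fun n => k < largestPrimeFactor n) ⊆
      ((Finset.Ioc k N).filter Nat.Prime).biUnion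
        (fun p => (Finset.Ioc 0 N).filter (fun n => p ∣ n)) := by
    intro n hn
    simp only [Finset.mem_filter, Finset.mem_Icc] at hn
    obtain ⟨⟨h1, h2⟩, h3⟩ := hn
    have hn2 : 2 ≤ n := by
      by_contra hc
      have : largestPrimeFactor n = 1 := by rw [largestPrimeFactor, if_pos (by omega)]
      omega
    obtain ⟨hp, hd⟩ := lpf_dvd hn2
    simp only [Finset.mem_biUnion, Finset.mem_filter, Finset.mem_Ioc]
    exact ⟨largestPrimeFactor n, ⟨⟨h3, (Nat.le_of_dvd h1 hd).trans h2⟩, hp⟩, ⟨h1, h2⟩, hd⟩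
  have h2 := (Finset.card_le_card h1).trans Finset.card_biUnion_le
  have h3 : (((Finset.Icc 1 N).filter (fun n => k < largestPrimeFactor n)).card : ℝ) ≤
      ∑ p ∈ (Finset.Ioc k N).filter Nat.Prime, ((N / p : ℕ) : ℝ) := by
    have h4 : ∀ p, ((Finset.Ioc 0 N).filter (fun n => p ∣ n)).card = N / p :=
      fun p => by rw [← Nat.Ioc_filter_dvd_card_eq_div]
    simp only [h4] at h2
    exact_mod_cast h2
  refine h3.trans ?_
  rw [Finset.sum_filter]
  apply Finset.sum_le_sum
  intro p hp
  have hp1 := (Finset.mem_Ioc.mp hp).1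
  have hp0 : (1:ℝ) < p := by exact_mod_cast (by omega : 1 < p)
  have hlp := Real.log_pos hp0
  split_ifs with h
  · rw [vonMangoldt_apply_prime h, div_self hlp.ne', one_mul]
  · exact mul_nonneg (div_nonneg vonMangoldt_nonneg hlp.le) (by positivity)

lemma median_le {x : ℝ} {N k : ℕ} (hN : N = ⌊x⌋₊) (hN1 : 1 ≤ N)
    (hc : 2 * ((Finset.Icc 1 N).filter (fun n => k < largestPrimeFactor n)).card ≤ N) :
    medianLPF x ≤ k := by
  by_contra hcon
  push Not at hcon
  unfold medianLPF at hcon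
  rw [← hN] at hcon
  set s := (Finset.Icc 1 N).val.map largestPrimeFactor with hs
  set l := s.sort (· ≤ ·) with hl
  set i := (N + 1) / 2 - 1 with hi
  have hlen : l.length = N := by simp [hl, hs]
  have hiN : i < l.length := by omega
  rw [List.getD_eq_getElem _ _ hiN] at hcon
  have hsort : l.Pairwise (· ≤ ·) := Multiset.pairwise_sort _ _
  have hcount : l.countP (fun m => decide (k < m)) =
      ((Finset.Icc 1 N).filter (fun n => k < largestPrimeFactor n)).card := by
    have h1 : s.countP (fun m => k < m) = l.countP (fun m => decide (k < m)) := by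
      rw [← Multiset.coe_countP, hl, Multiset.sort_eq]
    rw [← h1, hs, Multiset.countP_map]
    rfl
  have hdrop : (l.drop i).countP (fun m => decide (k < m)) = (l.drop i).length := by
    rw [List.countP_eq_length]
    intro a ha
    obtain ⟨j, hj, rfl⟩ := List.getElem_of_mem ha
    rw [List.getElem_drop]
    have hjl : i + j < l.length := by rw [List.length_drop] at hj; omega
    have : l[i] ≤ l[i + j] := by
      rcases Nat.eq_zero_or_pos j with h | h
      · subst h; rfl
      · exact List.pairwise_iff_getElem.mp hsort i (i + j) hiN hjl (by omega)
    simpa using lt_of_lt_of_le hcon this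
  have hle := (List.drop_sublist i l).countP_le (p := fun m => decide (k < m))
  rw [hdrop, hcount, List.length_drop, hlen] at hle
  omega

lemma main_nat : ∃ N0 : ℕ, ∀ N ≥ N0, ∀ k : ℕ, (k : ℝ) < (N : ℝ) ^ (Real.exp (-(1 / 2))) →
    (N : ℝ) ^ (Real.exp (-(1 / 2))) ≤ ((k + 1 : ℕ) : ℝ) → 1 ≤ N ∧
    2 * ((Finset.Icc 1 N).filter (fun n => k < largestPrimeFactor n)).card ≤ N := by
  set α := Real.exp (-(1 / 2)) with hα
  have hα0 : 0 < α := Real.exp_pos _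
  have hα1 : α < 1 := by rw [hα, Real.exp_lt_one_iff]; norm_num
  obtain ⟨n0, hn0⟩ := eventually_atTop.mp mm_bounds
  have t1 : Tendsto (fun N : ℕ => (N:ℝ) ^ α) atTop atTop :=
    (tendsto_rpow_atTop hα0).comp tendsto_natCast_atTop_atTop
  have t2 : Tendsto (fun N : ℕ => (N:ℝ) ^ (-(1 - α))) atTop (nhds 0) :=
    (tendsto_rpow_neg_atTop (by linarith : 0 < 1 - α)).comp tendsto_natCast_atTop_atTop
  have t3 : Tendsto (fun N : ℕ => (Real.log N + 1) / (N:ℝ)) atTop (nhds 0) := by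
    have h1 : Tendsto (fun x : ℝ => (Real.log x + 1) / x) atTop (nhds 0) := by
      have := (Real.isLittleO_log_id_atTop.tendsto_div_nhds_zero).add tendsto_inv_atTop_zero
      rw [add_zero] at this
      refine this.congr fun x => ?_
      simp [add_div]
    exact h1.comp tendsto_natCast_atTop_atTop
  have hC := CC_pos
  have ev : ∀ᶠ N : ℕ in atTop, ∀ k : ℕ, (k : ℝ) < (N : ℝ) ^ α →
    (N : ℝ) ^ α ≤ ((k + 1 : ℕ) : ℝ) → 1 ≤ N ∧
    2 * ((Finset.Icc 1 N).filter (fun n => k < largestPrimeFactor n)).card ≤ N := by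
    filter_upwards [t1.eventually (eventually_ge_atTop ((n0 + 1001 : ℕ) : ℝ)),
      t2.eventually (gt_mem_nhds (show (0:ℝ) < 0.001 / CC by positivity)),
      t3.eventually (gt_mem_nhds (show (0:ℝ) < 0.001 by norm_num)),
      eventually_ge_atTop 2] with N h1 h2 h3 hN k hk1 hk2
    refine ⟨by omega, ?_⟩
    have hN0 : (1:ℝ) < N := by exact_mod_cast hN
    have hk : n0 + 1000 ≤ k := by
      have : n0 + 1001 ≤ k + 1 := by exact_mod_cast h1.trans hk2
      omega
    have hNa : (N:ℝ) ^ α < N := by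
      calc (N:ℝ) ^ α < (N:ℝ) ^ (1:ℝ) := Real.rpow_lt_rpow_of_exponent_lt hN0 hα1
        _ = N := Real.rpow_one _
    have hkN : k + 1 ≤ N := by
      have : k < N := by exact_mod_cast hk1.trans hNa
      omega
    rw [div_lt_iff₀ (by linarith)] at h3
    have hpsi : psi k ≤ 0.001 * N := by
      have e1 : psi k ≤ CC * k := psi_le_const_mul_self (by positivity)
      have e2 : (N:ℝ) ^ α = (N:ℝ) ^ (-(1 - α)) * N := by
        conv_rhs => rw [← Real.rpow_one (N:ℝ), ← Real.rpow_mul (by linarith), one_mul,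
          ← Real.rpow_add (by linarith)]
        congr 1; ring
      have e3 : CC * (N:ℝ) ^ α ≤ 0.001 * N := by
        rw [e2]
        rw [lt_div_iff₀ (by linarith)] at h2
        nlinarith
      nlinarith
    have hL : Real.log N ≤ Real.exp (1 / 2) * Real.log ((k + 1 : ℕ) : ℝ) := by
      have e1 : α * Real.log N ≤ Real.log ((k + 1 : ℕ) : ℝ) := by
        rw [← Real.log_rpow (by linarith)]
        exact Real.log_le_log (by positivity) hk2
      have e2 : Real.exp (1 / 2) * α = 1 := by rw [hα, ← Real.exp_add]; norm_num
      calc Real.log N = Real.exp (1 / 2) * (α * Real.log N) := by rw [← mul_assoc, e2, one_mul]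
        _ ≤ _ := mul_le_mul_of_nonneg_left e1 (Real.exp_pos _).le
    have hcore := core (N := N) (k := k) (by omega) hkN (fun n hn => hn0 n (by omega)) hL
      h3.le hpsi
    have := (count_le (N := N) (k := k) (by omega)).trans hcore
    have h4 : (2:ℝ) * (((Finset.Icc 1 N).filter (fun n => k < largestPrimeFactor n)).card : ℝ) ≤ N := by
      linarith
    exact_mod_cast h4
  exact eventually_atTop.mp ev

end MLPF

theorem median_largest_prime_factor_lt :
    ∀ᶠ x : ℝ in atTop, (medianLPF x : ℝ) < x ^ (1 / Real.sqrt (Real.exp 1)) := by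
  have hα : 1 / Real.sqrt (Real.exp 1) = Real.exp (-(1 / 2)) := by
    rw [Real.exp_neg, Real.exp_half, one_div]
  rw [hα]
  obtain ⟨N0, h⟩ := MLPF.main_nat
  filter_upwards [eventually_ge_atTop ((N0 + 1 : ℕ) : ℝ)] with x hx
  have hx0 : (0:ℝ) ≤ x := le_trans (by positivity) hx
  have hN : N0 + 1 ≤ ⌊x⌋₊ := Nat.le_floor hx
  have hNp : (0:ℝ) < (⌊x⌋₊ : ℝ) := by exact_mod_cast (by omega : 0 < ⌊x⌋₊)
  set y := (⌊x⌋₊ : ℝ) ^ Real.exp (-(1 / 2)) with hy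
  have hy0 : 0 < y := Real.rpow_pos_of_pos hNp _
  have hc : 1 ≤ ⌈y⌉₊ := Nat.one_le_ceil_iff.mpr hy0
  have hk2 : y ≤ ((⌈y⌉₊ - 1 + 1 : ℕ) : ℝ) := by
    rw [Nat.sub_add_cancel hc]; exact Nat.le_ceil y
  have hk1 : ((⌈y⌉₊ - 1 : ℕ) : ℝ) < y := by
    apply Nat.lt_ceil.mp; omega
  obtain ⟨h1, h2⟩ := h ⌊x⌋₊ (by omega) (⌈y⌉₊ - 1) hk1 hk2
  have hm := MLPF.median_le rfl h1 h2
  calc (medianLPF x : ℝ) ≤ ((⌈y⌉₊ - 1 : ℕ) : ℝ) := by exact_mod_cast hm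
    _ < y := hk1
    _ ≤ _ := Real.rpow_le_rpow hNp.le (Nat.floor_le hx0) (Real.exp_pos _).le
end
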